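/- arXiv:1708.04122 — 2 statements merged into one kernel-verified Lean document; each statement's English description precedes it below -/
import Mathlib

section
/- Let N(x) denote the number of zeros ρ = β + iγ of the Riemann zeta-function with 0 < β < 1 and 0 < γ ≤ x, counted with multiplicity. Then for all x ≥ e, |N(x) − (x/2π)·log(x/(2πe)) − 7/8| ≤ 0.15·log x + 3. -/
open MeasureTheory Filter
open scoped FourierTransform Real

/-- The class 𝒜 sharp constant 𝒞(A). -/
noncomputable def Ccal (A : ℝ) : ℝ :=
  sSup { r : ℝ | ∃ F : ℝ → ℂ, Continuous F ∧ Integrable F ∧ F ≠ 0 ∧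
    r = (‖F 0‖ - A * ∫ t in {t : ℝ | 1 ≤ |t|}, ‖𝓕 F t‖) / ∫ x : ℝ, ‖F x‖ }

/-- 𝒞(∞), over the bandlimited class ℰ. -/
noncomputable def CcalInf : ℝ :=
  sSup { r : ℝ | ∃ F : ℝ → ℂ, Continuous F ∧ Integrable F ∧ F ≠ 0 ∧
    Function.support (𝓕 F) ⊆ Set.Icc (-1 : ℝ) 1 ∧
    r = ‖F 0‖ / ∫ x : ℝ, ‖F x‖ }

/-- Fourier transform of a real-valued function, as a real number (its real part). -/
noncomputable def FTr (F : ℝ → ℝ) (t : ℝ) : ℝ := (𝓕 (fun x => (F x : ℂ)) t).re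

/-- The class 𝒜⁺ sharp constant 𝒞⁺(A). -/
noncomputable def CcalPlus (A : ℝ) : ℝ :=
  sSup { r : ℝ | ∃ F : ℝ → ℝ, Continuous F ∧ Integrable F ∧ F ≠ 0 ∧ (∀ x, F (-x) = F x) ∧
    r = (F 0 - A * ∫ t in {t : ℝ | 1 ≤ |t|}, max (FTr F t) 0) / ∫ x : ℝ, |F x| }

/-- 𝒞⁺(∞), over the class ℰ⁺. -/
noncomputable def CcalPlusInf : ℝ :=
  sSup { r : ℝ | ∃ F : ℝ → ℝ, Continuous F ∧ Integrable F ∧ F ≠ 0 ∧ (∀ x, F (-x) = F x) ∧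
    (∀ t : ℝ, 1 ≤ |t| → FTr F t ≤ 0) ∧
    r = F 0 / ∫ x : ℝ, |F x| }

/-- The prime counting function at a real argument. -/
noncomputable def primePi (x : ℝ) : ℕ := Nat.primeCounting ⌊x⌋₊

/-- The Brun–Titchmarsh constant 𝐁. -/
noncomputable def BrunTitchmarsh : ℝ :=
  limsup (fun x : ℝ =>
    ((primePi (x + Real.sqrt x) : ℝ) - (primePi x : ℝ)) / (Real.sqrt x / Real.log x)) atTop

namespace ZetaZeroCount

open Complex Set Topology

/-! ### Stirling's formula for the complex Gamma function -/

/-- The general term of Gudermann's series for the remainder in Stirling's formula. -/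
noncomputable def gudermannTerm (z : ℂ) : ℂ :=
  (z + 1 / 2) * (log (z + 1) - log z) - 1

/-- The remainder in Stirling's formula, as Gudermann's series. -/
noncomputable def stirlingRemainder (z : ℂ) : ℂ := ∑' n : ℕ, gudermannTerm (z + n)

/-- The branch of `log Γ` on the right half plane given by Stirling's formula. -/
noncomputable def logGamma (z : ℂ) : ℂ :=
  (z - 1 / 2) * log z - z + (Real.log (2 * π) / 2 : ℝ) + stirlingRemainder z

lemma gudermannTerm_eq_integral {z : ℂ} (hz : 0 < z.re) :
    gudermannTerm z = ∫ u in (0 : ℝ)..1, (u : ℂ) * (1 - u) / 2 / (z + u) ^ 2 := by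
  have hre : ∀ u ∈ uIcc (0 : ℝ) 1, 0 < (z + u).re := by
    intro u hu
    rw [uIcc_of_le zero_le_one] at hu
    simp only [add_re, ofReal_re]
    linarith [hu.1]
  have hne : ∀ u ∈ uIcc (0 : ℝ) 1, z + u ≠ 0 := fun u hu h => by
    have := hre u hu
    simp [h] at this
  have key : ∀ u ∈ uIcc (0 : ℝ) 1, HasDerivAt
      (fun u : ℝ => -(u : ℂ) / 2 + (z + 1 / 2) * log (z + u) + z * (1 + z) / 2 * (z + u)⁻¹)
      ((u : ℂ) * (1 - u) / 2 / (z + u) ^ 2) u := by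
    intro u hu
    have h0 : HasDerivAt (fun u : ℝ => (u : ℂ)) 1 u := hasDerivAt_id u |>.ofReal_comp
    have h1 : HasDerivAt (fun u : ℝ => z + (u : ℂ)) 1 u := h0.const_add z
    have h2 := h1.clog_real (Or.inl (hre u hu))
    have h3 := h1.inv (hne u hu)
    convert! ((h0.neg.div_const 2).add (h2.const_mul (z + 1 / 2))).add
      (h3.const_mul (z * (1 + z) / 2)) using 1
    have := hne u hu
    field_simp
    ring
  rw [intervalIntegral.integral_eq_sub_of_hasDerivAt key]
  · have h0 := hne 0 (by simp)
    have h1 := hne 1 (by simp)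
    simp only [ofReal_zero, add_zero, ofReal_one] at h0 h1
    simp only [gudermannTerm, ofReal_zero, ofReal_one, add_zero]
    field_simp
    ring
  · apply ContinuousOn.intervalIntegrable
    refine ContinuousOn.div (by fun_prop) (by fun_prop) fun u hu => pow_ne_zero _ (hne u hu)

lemma norm_gudermannTerm_le_integral {z : ℂ} (hz : 0 < z.re) :
    ‖gudermannTerm z‖ ≤ ∫ u in (0 : ℝ)..1, 1 / 8 * ((z.re + u) ^ 2 + z.im ^ 2)⁻¹ := by
  rw [gudermannTerm_eq_integral hz]
  have hpos : ∀ u ∈ Icc (0 : ℝ) 1, 0 < (z.re + u) ^ 2 + z.im ^ 2 := fun u hu => by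
    have : 0 < z.re + u := by linarith [hu.1]
    positivity
  refine intervalIntegral.norm_integral_le_of_norm_le zero_le_one ?_ ?_
  · refine Eventually.of_forall fun u hu => ?_
    have hu' : u ∈ Icc (0 : ℝ) 1 := ⟨hu.1.le, hu.2⟩
    have h1 : ‖(z + u) ^ 2‖ = (z.re + u) ^ 2 + z.im ^ 2 := by
      rw [norm_pow, ← normSq_eq_norm_sq, normSq_apply]
      simp
      ring
    have h2 : ‖(u : ℂ) * (1 - u) / 2‖ = u * (1 - u) / 2 := by
      rw [show (u : ℂ) * (1 - u) / 2 = ((u * (1 - u) / 2 : ℝ) : ℂ) by push_cast; ring, norm_real,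
        Real.norm_of_nonneg]
      nlinarith [hu'.1, hu'.2]
    rw [norm_div, h1, h2, div_eq_mul_inv]
    exact mul_le_mul_of_nonneg_right (by nlinarith [sq_nonneg (u - 1 / 2)])
      (inv_nonneg.2 (hpos u hu').le)
  · apply ContinuousOn.intervalIntegrable
    rw [uIcc_of_le zero_le_one]
    exact continuousOn_const.mul (ContinuousOn.inv₀ (by fun_prop) fun u hu => (hpos u hu).ne')

lemma norm_gudermannTerm_le {z : ℂ} (hz : 0 < z.re) :
    ‖gudermannTerm z‖ ≤ 1 / 8 * ((z.re)⁻¹ - (z.re + 1)⁻¹) := by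
  refine (norm_gudermannTerm_le_integral hz).trans ?_
  have hpos : ∀ u ∈ Icc (0 : ℝ) 1, 0 < z.re + u := fun u hu => by linarith [hu.1]
  have key : ∀ u ∈ uIcc (0 : ℝ) 1, HasDerivAt (fun u : ℝ => -(1 / 8 * (z.re + u)⁻¹))
      (1 / 8 * ((z.re + u) ^ 2)⁻¹) u := by
    intro u hu
    rw [uIcc_of_le zero_le_one] at hu
    have h1 : HasDerivAt (fun u : ℝ => z.re + u) 1 u := (hasDerivAt_id u).const_add _
    convert! ((h1.inv (hpos u hu).ne').const_mul (1 / 8)).neg using 1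
    ring
  have hci : ContinuousOn (fun u : ℝ => 1 / 8 * ((z.re + u) ^ 2)⁻¹) (Icc 0 1) :=
    continuousOn_const.mul
      (ContinuousOn.inv₀ (by fun_prop) fun u hu => (pow_pos (hpos u hu) 2).ne')
  have hci' : ContinuousOn (fun u : ℝ => 1 / 8 * ((z.re + u) ^ 2 + z.im ^ 2)⁻¹) (Icc 0 1) :=
    continuousOn_const.mul (ContinuousOn.inv₀ (by fun_prop) fun u hu =>
      (add_pos_of_pos_of_nonneg (pow_pos (hpos u hu) 2) (sq_nonneg _)).ne')
  calc ∫ u in (0 : ℝ)..1, 1 / 8 * ((z.re + u) ^ 2 + z.im ^ 2)⁻¹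
      ≤ ∫ u in (0 : ℝ)..1, 1 / 8 * ((z.re + u) ^ 2)⁻¹ := by
        refine intervalIntegral.integral_mono_on zero_le_one ?_ ?_ fun u hu => ?_
        · exact ContinuousOn.intervalIntegrable (by rwa [uIcc_of_le zero_le_one])
        · exact ContinuousOn.intervalIntegrable (by rwa [uIcc_of_le zero_le_one])
        · have := pow_pos (hpos u hu) 2
          gcongr
          nlinarith [sq_nonneg z.im]
    _ = _ := by
        rw [intervalIntegral.integral_eq_sub_of_hasDerivAt key]
        · simp; ring
        · exact ContinuousOn.intervalIntegrable (by rwa [uIcc_of_le zero_le_one])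

lemma norm_gudermannTerm_le_arctan {z : ℂ} (hz : 0 < z.re) (hy : 0 < z.im) :
    ‖gudermannTerm z‖ ≤
      1 / (8 * z.im) * (Real.arctan ((z.re + 1) / z.im) - Real.arctan (z.re / z.im)) := by
  refine (norm_gudermannTerm_le_integral hz).trans (le_of_eq ?_)
  have key : ∀ u ∈ uIcc (0 : ℝ) 1,
      HasDerivAt (fun u : ℝ => 1 / (8 * z.im) * Real.arctan ((z.re + u) / z.im))
      (1 / 8 * ((z.re + u) ^ 2 + z.im ^ 2)⁻¹) u := by
    intro u hu
    have h1 : HasDerivAt (fun u : ℝ => (z.re + u) / z.im) (1 / z.im) u :=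
      ((hasDerivAt_id u).const_add _).div_const _
    convert! (h1.arctan).const_mul (1 / (8 * z.im)) using 1
    have : (z.re + u) ^ 2 + z.im ^ 2 ≠ 0 := by positivity
    have : 1 + ((z.re + u) / z.im) ^ 2 ≠ 0 := by positivity
    field_simp
    ring
  rw [intervalIntegral.integral_eq_sub_of_hasDerivAt key]
  · simp; ring
  · apply ContinuousOn.intervalIntegrable
    exact continuousOn_const.mul (ContinuousOn.inv₀ (by fun_prop) fun u hu => by positivity)

lemma hasSum_sub_succ_of_tendsto {a : ℕ → ℝ} {l : ℝ} (ha : Monotone a)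
    (hl : Tendsto a atTop (𝓝 l)) : HasSum (fun n => a (n + 1) - a n) (l - a 0) := by
  rw [hasSum_iff_tendsto_nat_of_nonneg fun n => sub_nonneg.2 (ha n.le_succ)]
  simp_rw [Finset.sum_range_sub]
  exact hl.sub_const _

lemma hasSum_inv_sub_inv {x : ℝ} (hx : 0 < x) :
    HasSum (fun n : ℕ => 1 / 8 * ((x + n)⁻¹ - (x + n + 1)⁻¹)) (1 / (8 * x)) := by
  have h : Tendsto (fun n : ℕ => -(x + n)⁻¹) atTop (𝓝 (-0)) :=
    (tendsto_inv_atTop_zero.comp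
      (tendsto_atTop_add_const_left _ x tendsto_natCast_atTop_atTop)).neg
  have hm : Monotone fun n : ℕ => -(x + n)⁻¹ := by
    intro a b hab
    have : (a : ℝ) ≤ b := by exact_mod_cast hab
    simp only [neg_le_neg_iff]
    gcongr
  have key := (hasSum_sub_succ_of_tendsto hm h).mul_left (1 / 8)
  have e : 1 / 8 * (-0 - -(x + (0 : ℕ))⁻¹) = 1 / (8 * x) := by
    simp
    ring
  rw [e] at key
  refine key.congr_fun fun n => ?_
  push_cast
  ring

lemma summable_gudermannTerm {z : ℂ} (hz : 0 < z.re) :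
    Summable fun n : ℕ => gudermannTerm (z + n) := by
  refine Summable.of_norm_bounded (hasSum_inv_sub_inv hz).summable fun n => ?_
  have := norm_gudermannTerm_le (z := z + n) (by simp; positivity)
  simpa using this

lemma norm_stirlingRemainder_le {z : ℂ} (hz : 0 < z.re) :
    ‖stirlingRemainder z‖ ≤ 1 / (8 * z.re) := by
  refine tsum_of_norm_bounded (hasSum_inv_sub_inv hz) fun n => ?_
  have := norm_gudermannTerm_le (z := z + n) (by simp; positivity)
  simpa using this

lemma norm_stirlingRemainder_le_of_im_pos {z : ℂ} (hz : 0 < z.re) (hy : 0 < z.im) :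
    ‖stirlingRemainder z‖ ≤ π / (16 * z.im) := by
  have h : Tendsto (fun n : ℕ => Real.arctan ((z.re + n) / z.im)) atTop (𝓝 (π / 2)) := by
    refine (tendsto_nhds_of_tendsto_nhdsWithin Real.tendsto_arctan_atTop).comp ?_
    exact (tendsto_atTop_add_const_left _ _ tendsto_natCast_atTop_atTop).atTop_div_const hy
  have hm : Monotone fun n : ℕ => Real.arctan ((z.re + n) / z.im) := by
    intro a b hab
    have : (a : ℝ) ≤ b := by exact_mod_cast hab
    exact Real.arctan_mono (by gcongr)
  have hs := (hasSum_sub_succ_of_tendsto hm h).mul_left (1 / (8 * z.im))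
  refine (tsum_of_norm_bounded hs fun n => ?_).trans ?_
  · have := norm_gudermannTerm_le_arctan (z := z + n) (by simp; positivity) (by simpa)
    simpa [add_assoc] using this
  · have h0 : 0 ≤ Real.arctan (z.re / z.im) := Real.arctan_nonneg.2 (by positivity)
    have : 1 / (8 * z.im) * (π / 2 - Real.arctan ((z.re + (0 : ℕ)) / z.im)) ≤
        1 / (8 * z.im) * (π / 2) := by
      gcongr
      simpa using h0
    refine this.trans (le_of_eq ?_)
    field_simp
    norm_num

lemma differentiableAt_gudermannTerm {z : ℂ} (hz : 0 < z.re) :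
    DifferentiableAt ℂ gudermannTerm z := by
  have h1 : z ∈ slitPlane := Or.inl hz
  have h2 : z + 1 ∈ slitPlane := Or.inl (by simp; linarith)
  unfold gudermannTerm
  fun_prop (disch := assumption)

lemma differentiableAt_stirlingRemainder {z : ℂ} (hz : 0 < z.re) :
    DifferentiableAt ℂ stirlingRemainder z := by
  set d := z.re / 2
  have hd : 0 < d := half_pos hz
  have hU : IsOpen {w : ℂ | d < w.re} := isOpen_lt continuous_const continuous_re
  refine (differentiableOn_tsum_of_summable_norm (hasSum_inv_sub_inv hd).summable
    (fun n w hw => ?_) hU fun n w hw => ?_).differentiableAt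
    (hU.mem_nhds (show d < z.re from half_lt_self hz))
  · have hw' : 0 < (w + n).re := by
      simp only [add_re, natCast_re]
      have : 0 < w.re := hd.trans hw
      positivity
    exact ((differentiableAt_gudermannTerm hw').comp w
      (differentiableAt_id.add_const _)).differentiableWithinAt
  · have hw0 : d < w.re := hw
    have hw1 : 0 < w.re := hd.trans hw0
    have := norm_gudermannTerm_le (z := w + n) (by simp; positivity)
    simp only [add_re, natCast_re] at this
    refine this.trans ?_
    have e : ∀ x : ℝ, 0 < x → x⁻¹ - (x + 1)⁻¹ = (x * (x + 1))⁻¹ := fun x hx => by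
      field_simp
      ring
    rw [e _ (by positivity), e _ (by positivity)]
    gcongr

lemma differentiableAt_logGamma {z : ℂ} (hz : 0 < z.re) : DifferentiableAt ℂ logGamma z := by
  have h1 : z ∈ slitPlane := Or.inl hz
  have h2 := differentiableAt_stirlingRemainder hz
  unfold logGamma
  fun_prop (disch := assumption)

lemma exp_logGamma_add_one {z : ℂ} (hz : 0 < z.re) :
    exp (logGamma (z + 1)) = z * exp (logGamma z) := by
  have hz0 : z ≠ 0 := fun h => by simp [h] at hz
  have hs : stirlingRemainder z = gudermannTerm z + stirlingRemainder (z + 1) := by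
    unfold stirlingRemainder
    rw [(summable_gudermannTerm hz).tsum_eq_zero_add]
    simp only [Nat.cast_zero, add_zero, Nat.cast_add, Nat.cast_one]
    congr 2
    ext n
    congr 1
    ring
  have : logGamma (z + 1) = log z + logGamma z := by
    unfold logGamma
    rw [hs]
    unfold gudermannTerm
    ring
  rw [this, Complex.exp_add, exp_log hz0]

lemma exp_logGamma_add_natCast {z : ℂ} (hz : 0 < z.re) (n : ℕ) :
    exp (logGamma (z + n)) = (∏ j ∈ Finset.range n, (z + j)) * exp (logGamma z) := by
  induction n with
  | zero => simp
  | succ n ih =>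
    rw [Finset.prod_range_succ, Nat.cast_succ, ← add_assoc, exp_logGamma_add_one, ih]
    · ring
    · simp; positivity

lemma tendsto_logGamma_sub {z : ℂ} (hz : 0 < z.re) :
    Tendsto (fun n : ℕ => logGamma (z + (n + 1 : ℕ)) - z * log n -
      ((1 / 2 * Real.log (2 * n) + n * Real.log (n / Real.exp 1) + Real.log π / 2 : ℝ) : ℂ))
      atTop (𝓝 0) := by
  have hJ : Tendsto (fun n : ℕ => stirlingRemainder (z + (n + 1 : ℕ))) atTop (𝓝 0) := by
    refine squeeze_zero_norm
      (a := fun n : ℕ => 1 / (8 * (z.re + (n + 1 : ℕ)))) (fun n => ?_) ?_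
    · have := norm_stirlingRemainder_le (z := z + (n + 1 : ℕ)) (by simp; positivity)
      simpa using this
    · refine tendsto_const_nhds.div_atTop ?_
      refine Tendsto.const_mul_atTop (by norm_num) (tendsto_atTop_add_const_left _ _ ?_)
      exact tendsto_natCast_atTop_atTop.comp (tendsto_add_atTop_nat 1)
  have hg : Tendsto (fun n : ℕ => (n : ℂ) * ((z + 1) / n)) atTop (𝓝 (z + 1)) := by
    refine tendsto_const_nhds.congr' ?_
    filter_upwards [eventually_ne_atTop 0] with n hn
    field_simp
  have hlog := Complex.tendsto_nat_mul_log_one_add_of_tendsto hg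
  have hinv : Tendsto (fun n : ℕ => (1 + (z + 1 / 2) / n : ℂ)) atTop (𝓝 (1 + 0)) :=
    (tendsto_const_div_atTop_nhds_zero_nat _).const_add _
  have hmain := ((hinv.mul hlog).sub_const (z + 1)).add hJ
  simp only [add_zero, one_mul, sub_self] at hmain
  refine hmain.congr' ?_
  filter_upwards [eventually_gt_atTop 0] with n hn
  have hn' : (0 : ℝ) < n := by exact_mod_cast hn
  have hnc : (n : ℂ) ≠ 0 := by exact_mod_cast hn.ne'
  have h1 : log (z + (n + 1 : ℕ)) = Real.log n + log (1 + (z + 1) / n) := by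
    have : z + (n + 1 : ℕ) = (n : ℝ) * (1 + (z + 1) / n) := by
      push_cast
      field_simp
      ring
    rw [this, log_ofReal_mul hn']
    intro h
    have := congrArg re h
    rw [add_re, div_natCast_re] at this
    simp only [one_re, add_re, zero_re] at this
    have : 0 < (z.re + 1) / n := by positivity
    linarith
  have h2 : log (n : ℂ) = Real.log n := by rw [← ofReal_natCast, ofReal_log hn'.le]
  have h3 : Real.log (n / Real.exp 1) = Real.log n - 1 := by
    rw [Real.log_div hn'.ne' (Real.exp_pos _).ne', Real.log_exp]
  have h4 : Real.log (2 * n) = Real.log 2 + Real.log n :=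
    Real.log_mul (by norm_num) hn'.ne'
  have h5 : Real.log (2 * π) = Real.log 2 + Real.log π :=
    Real.log_mul (by norm_num) Real.pi_pos.ne'
  unfold logGamma
  rw [h1, h2, h3, h4, h5]
  push_cast
  field_simp
  ring

theorem exp_logGamma {z : ℂ} (hz : 0 < z.re) : exp (logGamma z) = Gamma z := by
  have h1 := (continuous_exp.tendsto 0).comp (tendsto_logGamma_sub hz)
  rw [Complex.exp_zero] at h1
  have h2 : Tendsto (fun n : ℕ => ((Stirling.stirlingSeq n / √π : ℝ) : ℂ)) atTop (𝓝 1) := by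
    have := Stirling.tendsto_stirlingSeq_sqrt_pi.div_const (√π)
    rw [div_self (by positivity)] at this
    exact (continuous_ofReal.tendsto 1).comp this
  have h3 := (GammaSeq_tendsto_Gamma z).mul (h1.div h2 one_ne_zero)
  simp only [div_one, mul_one] at h3
  refine tendsto_nhds_unique (tendsto_const_nhds.congr' ?_) h3
  filter_upwards [eventually_gt_atTop 0] with n hn
  have hn' : (0 : ℝ) < n := by exact_mod_cast hn
  have hnc : (n : ℂ) ≠ 0 := by exact_mod_cast hn.ne'
  have hprod : ∏ j ∈ Finset.range (n + 1), (z + j) ≠ 0 := by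
    refine Finset.prod_ne_zero_iff.2 fun j _ h => ?_
    have := congrArg re h
    simp only [add_re, natCast_re, zero_re] at this
    have : 0 < z.re + j := by positivity
    linarith
  have hS : 0 < Stirling.stirlingSeq n := by
    obtain ⟨k, rfl⟩ := Nat.exists_eq_succ_of_ne_zero hn.ne'
    exact Stirling.stirlingSeq'_pos k
  have hfac : Real.exp (1 / 2 * Real.log (2 * n) + n * Real.log (n / Real.exp 1) + Real.log π / 2)
      * (Stirling.stirlingSeq n / √π) = n.factorial := by
    have : Stirling.stirlingSeq n / √π =
        Real.exp (Real.log (Stirling.stirlingSeq n) - Real.log π / 2) := by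
      rw [Real.exp_sub, Real.exp_log hS, Real.sqrt_eq_rpow, Real.rpow_def_of_pos Real.pi_pos]
      ring_nf
    rw [this, ← Real.exp_add, Stirling.log_stirlingSeq_formula]
    ring_nf
    exact Real.exp_log (by positivity)
  have hsc : ((Stirling.stirlingSeq n / √π : ℝ) : ℂ) ≠ 0 := by
    have : 0 < Stirling.stirlingSeq n / √π := by positivity
    exact_mod_cast this.ne'
  simp only [Function.comp_apply, Pi.div_apply]
  rw [Complex.exp_sub, Complex.exp_sub, exp_logGamma_add_natCast hz, GammaSeq, ← ofReal_exp,
    ← ofReal_natCast (n.factorial), ← hfac, cpow_def_of_ne_zero hnc, mul_comm (log _) z]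
  push_cast at hsc ⊢
  field_simp
  rw [div_self (by exact_mod_cast hS.ne')]

end ZetaZeroCount

namespace ZetaZeroCount

open Complex Set Topology

/-! ### The logarithm of the zeta function to the right of the critical strip -/

/-- The branch of `log ζ` on the half plane `1 < re s` given by the Euler product. -/
noncomputable def logZeta (s : ℂ) : ℂ := ∑' p : Nat.Primes, -log (1 - (p : ℂ) ^ (-s))

/-- The real logarithm of `ζ σ` for real `σ > 1`. -/
noncomputable def logZetaReal (σ : ℝ) : ℝ := ∑' p : Nat.Primes, -Real.log (1 - (p : ℝ) ^ (-σ))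

lemma exp_logZeta {s : ℂ} (hs : 1 < s.re) : exp (logZeta s) = riemannZeta s :=
  riemannZeta_eulerProduct_exp_log hs

lemma hasSum_neg_log_one_sub {x : ℝ} (h0 : 0 ≤ x) (h1 : x < 1) :
    HasSum (fun n : ℕ => x ^ (n + 1) / (n + 1)) (-Real.log (1 - x)) :=
  Real.hasSum_pow_div_log_of_abs_lt_one (by rwa [abs_of_nonneg h0])

lemma norm_log_one_sub_le {w : ℂ} (hw : ‖w‖ < 1) : ‖-log (1 - w)‖ ≤ -Real.log (1 - ‖w‖) := by
  have h := (hasSum_nat_add_iff' 1).2 (hasSum_taylorSeries_neg_log hw)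
  simp only [Finset.range_one, Finset.sum_singleton, pow_zero, Nat.cast_zero, div_zero,
    sub_zero] at h
  rw [← h.tsum_eq]
  refine tsum_of_norm_bounded (hasSum_neg_log_one_sub (norm_nonneg w) hw) fun n => ?_
  rw [norm_div, norm_pow, norm_natCast]
  push_cast
  rfl

lemma norm_prime_cpow (p : Nat.Primes) (s : ℂ) : ‖(p : ℂ) ^ (-s)‖ = (p : ℝ) ^ (-s.re) := by
  rw [← neg_re, norm_natCast_cpow_of_pos p.prop.pos]

lemma prime_rpow_neg_lt_one (p : Nat.Primes) {σ : ℝ} (hσ : 0 < σ) : (p : ℝ) ^ (-σ) < 1 :=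
  Real.rpow_lt_one_of_one_lt_of_neg (by exact_mod_cast p.prop.one_lt) (by linarith)

lemma summable_neg_log_prime {σ : ℝ} (hσ : 1 < σ) :
    Summable fun p : Nat.Primes => -Real.log (1 - (p : ℝ) ^ (-σ)) := by
  refine Summable.of_nonneg_of_le (f := fun p : Nat.Primes => 2 * (p : ℝ) ^ (-σ)) (fun p => ?_)
    (fun p => ?_) ((Nat.Primes.summable_rpow.2 (by linarith)).mul_left 2)
  · have h1 := prime_rpow_neg_lt_one p (zero_lt_one.trans hσ)
    have h0 : 0 ≤ (p : ℝ) ^ (-σ) := by positivity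
    exact neg_nonneg.2 (Real.log_nonpos (by linarith) (by linarith))
  · have h0 : 0 ≤ (p : ℝ) ^ (-σ) := by positivity
    have h1 : (p : ℝ) ^ (-σ) ≤ 1 / 2 := by
      have := norm_prime_cpow_le_one_half p (s := (σ : ℂ)) (by simpa)
      rwa [norm_prime_cpow, ofReal_re] at this
    set y := (p : ℝ) ^ (-σ)
    have h2 : 0 < 1 - y := by linarith
    rw [← Real.log_inv]
    refine (Real.log_le_sub_one_of_pos (inv_pos.2 h2)).trans ?_
    rw [sub_le_iff_le_add, inv_le_iff_one_le_mul₀ h2]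
    nlinarith

lemma norm_logZeta_le {s : ℂ} (hs : 1 < s.re) : ‖logZeta s‖ ≤ logZetaReal s.re := by
  refine tsum_of_norm_bounded (summable_neg_log_prime hs).hasSum fun p => ?_
  have := norm_log_one_sub_le (w := (p : ℂ) ^ (-s))
    (by rw [norm_prime_cpow]; exact prime_rpow_neg_lt_one p (zero_lt_one.trans hs))
  rwa [norm_prime_cpow] at this

lemma logZetaReal_anti {σ τ : ℝ} (hσ : 1 < σ) (h : σ ≤ τ) : logZetaReal τ ≤ logZetaReal σ := by
  refine Summable.tsum_le_tsum (fun p => ?_) (summable_neg_log_prime (hσ.trans_le h))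
    (summable_neg_log_prime hσ)
  have h1 := prime_rpow_neg_lt_one p (zero_lt_one.trans hσ)
  have h2 : (p : ℝ) ^ (-τ) ≤ (p : ℝ) ^ (-σ) :=
    Real.rpow_le_rpow_of_exponent_le (by exact_mod_cast p.prop.one_lt.le) (by linarith)
  exact neg_le_neg (Real.log_le_log (by linarith) (by linarith))

lemma differentiableAt_logZeta {s : ℂ} (hs : 1 < s.re) : DifferentiableAt ℂ logZeta s := by
  obtain ⟨d, hd1, hd2⟩ := exists_between hs
  have hU : IsOpen {w : ℂ | d < w.re} := isOpen_lt continuous_const continuous_re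
  refine (differentiableOn_tsum_of_summable_norm (summable_neg_log_prime hd1)
    (fun p w hw => ?_) hU fun p w hw => ?_).differentiableAt (hU.mem_nhds hd2)
  · have hw' : d < w.re := hw
    have h1 := prime_rpow_neg_lt_one p (σ := w.re) (by linarith)
    rw [← norm_prime_cpow] at h1
    have hslit : 1 - (p : ℂ) ^ (-w) ∈ slitPlane := by
      left
      have := (abs_le.1 (abs_re_le_norm ((p : ℂ) ^ (-w)))).2
      simp only [sub_re, one_re]
      linarith
    have hp : (p : ℂ) ≠ 0 := by exact_mod_cast p.prop.ne_zero
    refine DifferentiableAt.differentiableWithinAt ?_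
    exact (((differentiableAt_id.neg.const_cpow (Or.inl hp)).const_sub 1).clog hslit).neg
  · have hw' : d < w.re := hw
    have h1 := prime_rpow_neg_lt_one p (σ := w.re) (by linarith)
    have h2 := prime_rpow_neg_lt_one p (σ := d) (by linarith)
    have h3 : (p : ℝ) ^ (-w.re) ≤ (p : ℝ) ^ (-d) :=
      Real.rpow_le_rpow_of_exponent_le (by exact_mod_cast p.prop.one_lt.le) (by linarith)
    have h4 := norm_log_one_sub_le (w := (p : ℂ) ^ (-w)) (by rwa [norm_prime_cpow])
    rw [norm_prime_cpow] at h4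
    exact h4.trans (neg_le_neg (Real.log_le_log (by linarith) (by linarith)))

/-- `log ζ` is convex on `(1, ∞)`. -/
lemma logZetaReal_convex {a b x : ℝ} (ha : 1 < a) (hb : 1 < b) (hx0 : 0 ≤ x) (hx1 : x ≤ 1) :
    logZetaReal ((1 - x) * a + x * b) ≤ (1 - x) * logZetaReal a + x * logZetaReal b := by
  have hm : 1 < (1 - x) * a + x * b := by
    rcases hx0.eq_or_lt with rfl | hx0
    · simpa
    · nlinarith [mul_lt_mul_of_pos_left hb hx0, mul_le_mul_of_nonneg_left ha.le (sub_nonneg.2 hx1)]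
  have hsum := ((summable_neg_log_prime ha).mul_left (1 - x)).add
    ((summable_neg_log_prime hb).mul_left x)
  unfold logZetaReal
  rw [← (summable_neg_log_prime ha).tsum_mul_left, ← (summable_neg_log_prime hb).tsum_mul_left,
    ← ((summable_neg_log_prime ha).mul_left (1 - x)).tsum_add
      ((summable_neg_log_prime hb).mul_left x)]
  refine Summable.tsum_le_tsum (fun p => ?_) (summable_neg_log_prime hm) hsum
  have hp : (0 : ℝ) < p := by exact_mod_cast p.prop.pos
  have series : ∀ σ : ℝ, 1 < σ → HasSum (fun n : ℕ => ((p : ℝ) ^ (-σ)) ^ (n + 1) / (n + 1))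
      (-Real.log (1 - (p : ℝ) ^ (-σ))) := fun σ hσ =>
    hasSum_neg_log_one_sub (by positivity) (prime_rpow_neg_lt_one p (by linarith))
  refine hasSum_le (fun n => ?_) (series _ hm)
    (((series a ha).mul_left (1 - x)).add ((series b hb).mul_left x))
  have := Real.geom_mean_le_arith_mean2_weighted (sub_nonneg.2 hx1) hx0
    (p₁ := ((p : ℝ) ^ (-a)) ^ (n + 1)) (p₂ := ((p : ℝ) ^ (-b)) ^ (n + 1)) (by positivity)
    (by positivity) (by ring)
  have e : ((p : ℝ) ^ (-((1 - x) * a + x * b))) ^ (n + 1) =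
      (((p : ℝ) ^ (-a)) ^ (n + 1)) ^ (1 - x) * (((p : ℝ) ^ (-b)) ^ (n + 1)) ^ x := by
    simp only [← Real.rpow_natCast, ← Real.rpow_mul hp.le, ← Real.rpow_add hp]
    congr 1
    ring
  rw [e]
  calc _ ≤ ((1 - x) * ((p : ℝ) ^ (-a)) ^ (n + 1) + x * ((p : ℝ) ^ (-b)) ^ (n + 1)) / (n + 1) := by
        gcongr
    _ = _ := by ring

lemma exp_logZetaReal {σ : ℝ} (hσ : 1 < σ) :
    Real.exp (logZetaReal σ) = ∑' n : ℕ, 1 / ((n : ℝ) + 1) ^ σ := by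
  have h1 : logZeta σ = (logZetaReal σ : ℂ) := by
    unfold logZeta logZetaReal
    rw [ofReal_tsum]
    refine tsum_congr fun p => ?_
    have := prime_rpow_neg_lt_one p (zero_lt_one.trans hσ)
    rw [ofReal_neg, ofReal_log (by linarith), ofReal_sub, ofReal_cpow (by positivity)]
    simp
  have h2 := exp_logZeta (s := (σ : ℂ)) (by simpa)
  rw [h1, zeta_eq_tsum_one_div_nat_add_one_cpow (by simpa), ← ofReal_exp] at h2
  have h3 : ∀ n : ℕ, (1 : ℂ) / ((n : ℂ) + 1) ^ (σ : ℂ) = ((1 / ((n : ℝ) + 1) ^ σ : ℝ) : ℂ) := by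
    intro n
    rw [ofReal_div, ofReal_cpow (by positivity)]
    simp
  simp_rw [h3] at h2
  rw [← ofReal_tsum] at h2
  exact_mod_cast h2

lemma two_mul_rpow_le_add {p x u : ℝ} (hp : p ≤ 0) (h0 : 0 < x - u) (h1 : 0 < x + u) :
    2 * x ^ p ≤ (x - u) ^ p + (x + u) ^ p := by
  have hx : 0 < x := by linarith
  have e : ∀ y : ℝ, 0 < y → y ^ p = (y ^ (p / 2)) ^ 2 := fun y hy => by
    rw [← Real.rpow_natCast, ← Real.rpow_mul hy.le]
    norm_num
  have h2 : (x * x) ^ (p / 2) ≤ ((x - u) * (x + u)) ^ (p / 2) :=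
    Real.rpow_le_rpow_of_nonpos (mul_pos h0 h1) (by nlinarith [sq_nonneg u]) (by linarith)
  rw [Real.mul_rpow hx.le hx.le, Real.mul_rpow h0.le h1.le] at h2
  rw [e x hx, e _ h0, e _ h1]
  nlinarith [sq_nonneg ((x - u) ^ (p / 2) - (x + u) ^ (p / 2))]

lemma rpow_neg_le_sub {η x : ℝ} (hη : 0 < η) (hx : 1 / 2 < x) :
    x ^ (-(1 + η)) ≤ ((x - 1 / 2) ^ (-η) - (x + 1 / 2) ^ (-η)) / η := by
  have hder : ∀ u ∈ Icc (0 : ℝ) (1 / 2), HasDerivAt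
      (fun u : ℝ => ((x - u) ^ (-η) - (x + u) ^ (-η)) / η - 2 * u * x ^ (-(1 + η)))
      ((x - u) ^ (-(1 + η)) + (x + u) ^ (-(1 + η)) - 2 * x ^ (-(1 + η))) u := by
    intro u hu
    have h1 : HasDerivAt (fun u : ℝ => x - u) (-1) u := (hasDerivAt_id u).const_sub x
    have h2 : HasDerivAt (fun u : ℝ => x + u) 1 u := (hasDerivAt_id u).const_add x
    have h3 := h1.rpow_const (p := -η) (Or.inl (by linarith [hu.2] : 0 < x - u).ne')
    have h4 := h2.rpow_const (p := -η) (Or.inl (by linarith [hu.1] : 0 < x + u).ne')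
    convert! ((h3.sub h4).div_const η).sub
      (((hasDerivAt_id u).const_mul 2).mul_const (x ^ (-(1 + η)))) using 1
    rw [show -η - 1 = -(1 + η) by ring]
    field_simp
    ring
  have hmono := monotoneOn_of_deriv_nonneg (convex_Icc (0 : ℝ) (1 / 2))
    (fun u hu => (hder u hu).continuousAt.continuousWithinAt)
    (fun u hu => (hder u (interior_subset hu)).differentiableAt.differentiableWithinAt)
    (fun u hu => by
      have hu' := interior_subset hu
      rw [(hder u hu').deriv]
      have := two_mul_rpow_le_add (p := -(1 + η)) (x := x) (u := u) (by linarith)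
        (by linarith [hu'.2]) (by linarith [hu'.1])
      linarith)
  have := hmono (left_mem_Icc.2 (by norm_num)) (right_mem_Icc.2 (by norm_num)) (by norm_num)
  simp only [sub_zero, add_zero, sub_self, zero_div, mul_zero, zero_mul] at this
  linarith

lemma exp_logZetaReal_one_add_le {η : ℝ} (hη : 0 < η) :
    Real.exp (logZetaReal (1 + η)) ≤ 1 + (3 / 2) ^ (-η) / η := by
  rw [exp_logZetaReal (by linarith)]
  have hs : Summable fun n : ℕ => 1 / ((n : ℝ) + 1) ^ (1 + η) := by
    have := (summable_nat_add_iff 1).2 (Real.summable_one_div_nat_rpow.2 (by linarith : 1 < 1 + η))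
    simpa using this
  have hl : Tendsto (fun n : ℕ => -((3 / 2 + n : ℝ) ^ (-η) / η)) atTop (𝓝 (-(0 / η))) :=
    (((tendsto_rpow_neg_atTop hη).comp
      (tendsto_atTop_add_const_left _ _ tendsto_natCast_atTop_atTop)).div_const η).neg
  have hm : Monotone fun n : ℕ => -((3 / 2 + n : ℝ) ^ (-η) / η) := by
    intro a b hab
    have : (a : ℝ) ≤ b := by exact_mod_cast hab
    have h := Real.rpow_le_rpow_of_nonpos (x := 3 / 2 + (a : ℝ)) (y := 3 / 2 + b) (z := -η)
      (by positivity) (by linarith) (by linarith)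
    simp only [neg_le_neg_iff]
    gcongr
  rw [hs.tsum_eq_zero_add]
  have h0 : 1 / (((0 : ℕ) : ℝ) + 1) ^ (1 + η) = 1 := by simp
  rw [h0]
  have htel := hasSum_sub_succ_of_tendsto hm hl
  have h1 := hasSum_le (fun n => ?_) ((summable_nat_add_iff 1).2 hs).hasSum htel
  · simp only [Nat.cast_zero, add_zero, zero_div, neg_zero, zero_sub, neg_neg] at h1
    linarith
  · have := rpow_neg_le_sub hη (x := n + 2) (by linarith [(n.cast_nonneg : (0 : ℝ) ≤ n)])
    rw [Real.rpow_neg (by positivity)] at this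
    push_cast
    rw [show (n : ℝ) + 1 + 1 = n + 2 by ring, one_div]
    refine this.trans (le_of_eq ?_)
    rw [show (n : ℝ) + 2 - 1 / 2 = 3 / 2 + n by ring,
      show (n : ℝ) + 2 + 1 / 2 = 3 / 2 + (n + 1) by ring]
    ring

lemma logZetaReal_le_two : logZetaReal (23 / 20) ≤ 2 := by
  have h := exp_logZetaReal_one_add_le (η := 3 / 20) (by norm_num)
  norm_num at h
  have h1 : ((3 / 2 : ℝ) ^ (-(3 / 20) : ℝ)) ≤ 0.942 := by
    have : ((3 / 2 : ℝ) ^ (-(3 / 20) : ℝ)) ^ 20 ≤ (0.942 : ℝ) ^ 20 := by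
      rw [← Real.rpow_natCast, ← Real.rpow_mul (by norm_num)]
      norm_num
    exact le_of_pow_le_pow_left₀ (by norm_num) (by norm_num) this
  have h2 : (7.28 : ℝ) ≤ Real.exp 2 := by
    have := Real.exp_one_gt_d9
    rw [show (2 : ℝ) = 1 + 1 by norm_num, Real.exp_add]
    nlinarith
  rw [← Real.exp_le_exp]
  norm_num at h1 h2
  linarith

lemma logZetaReal_two_le : logZetaReal 2 ≤ 1 / 2 := by
  have h1 := exp_logZetaReal (σ := 2) (by norm_num)
  have h2 : ∑' n : ℕ, 1 / ((n : ℝ) + 1) ^ (2 : ℝ) = π ^ 2 / 6 := by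
    rw [← hasSum_zeta_two.tsum_eq, hasSum_zeta_two.summable.tsum_eq_zero_add]
    simp
  rw [h2] at h1
  have h3 : π ^ 2 / 6 ≤ 1.645 := by nlinarith [Real.pi_lt_d4, Real.pi_pos]
  rw [← Real.exp_le_exp, h1]
  refine h3.trans (le_of_pow_le_pow_left₀ two_ne_zero (Real.exp_pos _).le ?_)
  rw [← Real.exp_nat_mul]
  norm_num
  linarith [Real.exp_one_gt_d9]

lemma logZetaReal_le {x : ℝ} (h0 : 0 ≤ x) (h1 : x ≤ 1) :
    logZetaReal (23 / 20 + 13 / 10 * x) ≤ 2 - 3 / 2 * x := by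
  have h := logZetaReal_convex (a := 23 / 20) (b := 49 / 20) (by norm_num) (by norm_num) h0 h1
  have h2 := logZetaReal_anti (σ := 2) (τ := 49 / 20) (by norm_num) (by norm_num)
  rw [show (1 - x) * (23 / 20) + x * (49 / 20) = 23 / 20 + 13 / 10 * x by ring] at h
  nlinarith [logZetaReal_le_two, logZetaReal_two_le]

end ZetaZeroCount

namespace ZetaZeroCount

open Complex Set Topology

/-! ### The Riemann xi function -/

/-- The entire function `s (s - 1) Λ(s)`, where `Λ` is the completed zeta function. -/
noncomputable def xi (s : ℂ) : ℂ := 1 + s * (s - 1) * completedRiemannZeta₀ s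

lemma differentiable_xi : Differentiable ℂ xi := by
  have := differentiable_completedZeta₀
  unfold xi
  fun_prop

lemma xi_one_sub (s : ℂ) : xi (1 - s) = xi s := by
  unfold xi
  rw [completedRiemannZeta₀_one_sub]
  ring

lemma xi_eq_mul_completedRiemannZeta {s : ℂ} (h0 : s ≠ 0) (h1 : s ≠ 1) :
    xi s = s * (s - 1) * completedRiemannZeta s := by
  have h2 : 1 - s ≠ 0 := sub_ne_zero.2 h1.symm
  rw [xi, completedRiemannZeta_eq]
  field_simp
  ring

lemma xi_eq_mul_riemannZeta {s : ℂ} (h0 : 0 < s.re) (h1 : s ≠ 1) :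
    xi s = s * (s - 1) * Gammaℝ s * riemannZeta s := by
  have hs : s ≠ 0 := fun h => by simp [h] at h0
  rw [xi_eq_mul_completedRiemannZeta hs h1, riemannZeta_def_of_ne_zero hs]
  have := Gammaℝ_ne_zero_of_re_pos h0
  field_simp

lemma xi_ne_zero_of_one_le_re {s : ℂ} (hs : 1 ≤ s.re) : xi s ≠ 0 := by
  rcases eq_or_ne s 1 with rfl | h1
  · simp [xi]
  have h0 : 0 < s.re := by linarith
  have hs0 : s ≠ 0 := fun h => by simp [h] at h0
  rw [xi_eq_mul_riemannZeta h0 h1]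
  exact mul_ne_zero (mul_ne_zero (mul_ne_zero hs0 (sub_ne_zero.2 h1))
    (Gammaℝ_ne_zero_of_re_pos h0)) (riemannZeta_ne_zero_of_one_le_re hs)

lemma re_mem_Ioo_of_xi_eq_zero {s : ℂ} (hs : xi s = 0) : 0 < s.re ∧ s.re < 1 := by
  refine ⟨not_le.1 fun h => ?_, not_le.1 fun h => xi_ne_zero_of_one_le_re h hs⟩
  rw [← xi_one_sub] at hs
  exact xi_ne_zero_of_one_le_re (by simp; linarith) hs

lemma xi_eq_zero_iff {s : ℂ} : xi s = 0 ↔ riemannZeta s = 0 ∧ 0 < s.re ∧ s.re < 1 := by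
  refine ⟨fun h => ?_, fun ⟨h, h0, h1⟩ => ?_⟩
  · obtain ⟨h0, h1⟩ := re_mem_Ioo_of_xi_eq_zero h
    have hs0 : s ≠ 0 := fun h => by simp [h] at h0
    have hs1 : s ≠ 1 := fun h => by simp [h] at h1
    rw [xi_eq_mul_riemannZeta h0 hs1] at h
    simpa [hs0, sub_ne_zero.2 hs1, Gammaℝ_ne_zero_of_re_pos h0, h0, h1] using h
  · have hs1 : s ≠ 1 := fun h => by simp [h] at h1
    rw [xi_eq_mul_riemannZeta h0 hs1, h, mul_zero]

open ComplexConjugate in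
lemma xi_conj (s : ℂ) : xi (conj s) = conj (xi s) := by
  have key : ∀ s : ℂ, 0 < s.re → xi (conj s) = conj (xi s) := by
    intro s hs
    rcases eq_or_ne s 1 with rfl | h1
    · simp [xi]
    have h1' : conj s ≠ 1 := fun h => h1 (by simpa using congrArg conj h)
    rw [xi_eq_mul_riemannZeta hs h1, xi_eq_mul_riemannZeta (by simpa) h1', riemannZeta_conj,
      Gammaℝ_def, Gammaℝ_def]
    have hpi : (π : ℂ) ^ (-conj s / 2) = conj ((π : ℂ) ^ (-s / 2)) := by
      have harg : arg (π : ℂ) ≠ π := by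
        rw [arg_ofReal_of_nonneg Real.pi_pos.le]
        exact Real.pi_pos.ne
      have h := cpow_conj (π : ℂ) (-s / 2) harg
      rw [conj_ofReal] at h
      rw [← h, map_div₀, map_neg, map_ofNat]
    have hG : Gamma (conj s / 2) = conj (Gamma (s / 2)) := by
      rw [← Gamma_conj, map_div₀, map_ofNat]
    rw [hpi, hG]
    simp
  rcases lt_or_ge 0 s.re with h | h
  · exact key s h
  · rw [← xi_one_sub, ← xi_one_sub s, ← key _ (by simp; linarith)]
    simp

/-- Nonnegative Mellin density for the entire completed zeta function. -/
lemma exists_completedRiemannZeta₀_density : ∃ h : ℝ → ℝ, (∀ x, 0 ≤ h x) ∧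
    ∀ s : ℂ, IntegrableOn (fun x : ℝ => (x : ℂ) ^ (s / 2 - 1) * h x) (Ioi 0) ∧
      completedRiemannZeta₀ s = (∫ x in Ioi (0 : ℝ), (x : ℂ) ^ (s / 2 - 1) * h x) / 2 := by
  set P := HurwitzZeta.hurwitzEvenFEPair 0
  have hcos : ∀ x : ℝ, 0 < x → 1 ≤ HurwitzZeta.cosKernel 0 x := by
    intro x hx
    have h := HurwitzZeta.hasSum_int_evenKernel 0 hx
    rw [← HurwitzZeta.evenKernel_eq_cosKernel_of_zero]
    have := le_hasSum h 0 fun n _ => (Real.exp_pos _).le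
    simpa using this
  have hval : ∀ x, ∃ r : ℝ, 0 ≤ r ∧ P.f_modif x = r := by
    intro x
    have hf : P.f x = (HurwitzZeta.evenKernel 0 x : ℂ) := rfl
    have hf0 : P.f₀ = 1 := if_pos rfl
    have hg0 : P.g₀ = 1 := rfl
    have hk : P.k = 1 / 2 := rfl
    have hε : P.ε = 1 := rfl
    unfold WeakFEPair.f_modif
    rw [Pi.add_apply]
    by_cases h1 : 1 < x
    · rw [indicator_of_mem (mem_Ioi.2 h1), indicator_of_notMem (notMem_Ioo_of_ge h1.le), hf, hf0]
      refine ⟨HurwitzZeta.evenKernel 0 x - 1, ?_, by simp⟩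
      rw [HurwitzZeta.evenKernel_eq_cosKernel_of_zero]
      linarith [hcos x (by linarith)]
    · rw [indicator_of_notMem (by simpa using h1)]
      by_cases h2 : x ∈ Ioo (0 : ℝ) 1
      · rw [indicator_of_mem h2, hf, hg0, hk, hε]
        refine ⟨HurwitzZeta.evenKernel 0 x - x ^ (-(1 / 2) : ℝ), ?_, by simp⟩
        have := hcos (1 / x) (by have := h2.1; positivity)
        rw [HurwitzZeta.evenKernel_functional_equation, Real.rpow_neg h2.1.le, one_div]
        have h3 : 0 ≤ (x ^ (1 / 2 : ℝ))⁻¹ := inv_nonneg.2 (Real.rpow_nonneg h2.1.le _)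
        nlinarith
      · exact ⟨0, le_rfl, by simp [indicator_of_notMem h2]⟩
  choose h h0 hP using hval
  refine ⟨h, h0, fun s => ?_⟩
  have hm := P.isStrongFEPair_toStrongFEPair.hasMellin (s / 2)
  have hconv : MellinConvergent P.f_modif (s / 2) := hm.1
  refine ⟨by simpa only [MellinConvergent, hP, smul_eq_mul] using hconv, ?_⟩
  change mellin P.f_modif (s / 2) / 2 = _
  simp only [mellin, hP, smul_eq_mul]

lemma norm_completedRiemannZeta₀_le {a b : ℝ} {s : ℂ} (ha : a ≤ s.re) (hb : s.re ≤ b) :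
    ‖completedRiemannZeta₀ s‖ ≤ ‖completedRiemannZeta₀ a‖ + ‖completedRiemannZeta₀ b‖ := by
  obtain ⟨h, h0, hh⟩ := exists_completedRiemannZeta₀_density
  have hnorm : ∀ s : ℂ, ∀ x ∈ Ioi (0 : ℝ),
      ‖(x : ℂ) ^ (s / 2 - 1) * h x‖ = x ^ (s.re / 2 - 1) * h x := by
    intro s x hx
    rw [norm_mul, norm_cpow_eq_rpow_re_of_pos hx, norm_real, Real.norm_of_nonneg (h0 x)]
    simp
  have hintegrable : ∀ s : ℂ, IntegrableOn (fun x : ℝ => x ^ (s.re / 2 - 1) * h x) (Ioi 0) := fun s =>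
    IntegrableOn.congr_fun (hh s).1.norm (hnorm s) measurableSet_Ioi
  have hreal : ∀ r : ℝ, ‖completedRiemannZeta₀ r‖ =
      (∫ x in Ioi (0 : ℝ), x ^ (r / 2 - 1) * h x) / 2 := by
    intro r
    rw [(hh r).2, norm_div]
    congr 1
    · have : ∫ x in Ioi (0 : ℝ), (x : ℂ) ^ ((r : ℂ) / 2 - 1) * h x =
          ((∫ x in Ioi (0 : ℝ), x ^ (r / 2 - 1) * h x : ℝ) : ℂ) := by
        rw [← integral_complex_ofReal]
        refine setIntegral_congr_fun measurableSet_Ioi fun x hx => ?_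
        have hx' : (0 : ℝ) ≤ x := le_of_lt hx
        rw [ofReal_mul, ofReal_cpow hx']
        simp
      rw [this, norm_real, Real.norm_of_nonneg]
      exact setIntegral_nonneg measurableSet_Ioi fun x hx =>
        mul_nonneg (Real.rpow_nonneg (le_of_lt hx) _) (h0 x)
    · simp
  have h2 : ‖completedRiemannZeta₀ s‖ ≤ (∫ x in Ioi (0 : ℝ), x ^ (s.re / 2 - 1) * h x) / 2 := by
    rw [(hh s).2, norm_div]
    have := norm_integral_le_integral_norm (μ := volume.restrict (Ioi 0))
      (fun x : ℝ => (x : ℂ) ^ (s / 2 - 1) * h x)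
    rw [setIntegral_congr_fun measurableSet_Ioi (hnorm s)] at this
    simp only [RCLike.norm_ofNat]
    gcongr
  have ha' := hintegrable a
  have hb' := hintegrable b
  simp only [ofReal_re] at ha' hb'
  rw [hreal a, hreal b]
  refine h2.trans ?_
  rw [← add_div, ← integral_add ha' hb']
  have : ∫ x in Ioi (0 : ℝ), x ^ (s.re / 2 - 1) * h x ≤
      ∫ x in Ioi (0 : ℝ), (x ^ (a / 2 - 1) * h x + x ^ (b / 2 - 1) * h x) := by
    refine setIntegral_mono_on (hintegrable s) (ha'.add hb') measurableSet_Ioi fun x hx => ?_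
    have hx' : (0 : ℝ) < x := hx
    rw [← add_mul]
    refine mul_le_mul_of_nonneg_right ?_ (h0 x)
    have p1 := Real.rpow_nonneg hx'.le (a / 2 - 1)
    have p2 := Real.rpow_nonneg hx'.le (b / 2 - 1)
    rcases le_total 1 x with h1 | h1
    · have := Real.rpow_le_rpow_of_exponent_le h1 (by linarith : s.re / 2 - 1 ≤ b / 2 - 1)
      linarith
    · have := Real.rpow_le_rpow_of_exponent_ge hx' h1 (by linarith : a / 2 - 1 ≤ s.re / 2 - 1)
      linarith
  linarith

lemma xi_ofReal_ne_zero (x : ℝ) : xi x ≠ 0 := by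
  intro hx
  obtain ⟨h0, h1⟩ := re_mem_Ioo_of_xi_eq_zero hx
  rw [ofReal_re] at h0 h1
  have h2 := norm_completedRiemannZeta₀_le (a := 0) (b := 1) (s := x) h0.le h1.le
  rw [ofReal_zero, ofReal_one, ← completedRiemannZeta₀_one_sub 0, sub_zero] at h2
  have h3 : ‖completedRiemannZeta₀ 1‖ ≤ 4 / 3 := by
    rw [completedRiemannZeta₀_one,
      show ((4 : ℂ) * (π : ℂ)) = ((4 * π : ℝ) : ℂ) by push_cast; ring,
      ← ofReal_log (by positivity), show
        ((Real.eulerMascheroniConstant : ℂ) - (Real.log (4 * π) : ℝ)) / 2 + 1 =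
        (((Real.eulerMascheroniConstant - Real.log (4 * π)) / 2 + 1 : ℝ) : ℂ) by push_cast; ring,
      norm_real, Real.norm_eq_abs, abs_le]
    have := Real.eulerMascheroniConstant_lt_two_thirds
    have := Real.one_half_lt_eulerMascheroniConstant
    have : 0 ≤ Real.log (4 * π) := Real.log_nonneg (by linarith [Real.pi_gt_three])
    have : Real.log (4 * π) ≤ Real.log (2 ^ 4) :=
      Real.log_le_log (by positivity) (by linarith [Real.pi_lt_four])
    rw [Real.log_pow] at this
    have := Real.log_two_lt_d9
    push_cast at *
    constructor <;> linarith
  have h4 : ‖(x : ℂ) * (x - 1) * completedRiemannZeta₀ x‖ = 1 := by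
    have : (x : ℂ) * (x - 1) * completedRiemannZeta₀ x = -1 := by
      unfold xi at hx
      linear_combination hx
    rw [this]
    simp
  have h5 : ‖(x : ℂ) * (x - 1)‖ ≤ 1 / 4 := by
    rw [show (x : ℂ) * (x - 1) = ((x * (x - 1) : ℝ) : ℂ) by push_cast; ring, norm_real,
      Real.norm_eq_abs, abs_le]
    constructor <;> nlinarith [sq_nonneg (x - 1 / 2)]
  rw [norm_mul] at h4
  nlinarith [norm_nonneg ((x : ℂ) * (x - 1)), norm_nonneg (completedRiemannZeta₀ x)]

end ZetaZeroCount

namespace ZetaZeroCount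

open Complex Set Topology

/-! ### The rotated completed zeta function -/

/-- The completed zeta function multiplied by `exp (-π i (s - 1/2) / 4)`, which removes its
exponential decay in the upper half plane. -/
noncomputable def rotatedZeta (s : ℂ) : ℂ :=
  xi s / (s * (s - 1)) * exp (-(π / 4 * (s - 1 / 2) * I))

/-- The branch of the logarithm of `rotatedZeta` on the half plane `1 < re s`. -/
noncomputable def logRotatedZeta (s : ℂ) : ℂ :=
  -(s / 2 * (Real.log π : ℝ)) + logGamma (s / 2) + logZeta s - π / 4 * (s - 1 / 2) * I

lemma exp_logRotatedZeta {s : ℂ} (hs : 1 < s.re) : exp (logRotatedZeta s) = rotatedZeta s := by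
  have h0 : 0 < s.re := by linarith
  have hs0 : s ≠ 0 := fun h => by simp [h] at h0
  have hs1 : s ≠ 1 := fun h => by simp [h] at hs
  have hs2 : s - 1 ≠ 0 := sub_ne_zero.2 hs1
  have hpi : exp (-(s / 2 * (Real.log π : ℝ))) = (π : ℂ) ^ (-s / 2) := by
    rw [cpow_def_of_ne_zero (by exact_mod_cast Real.pi_ne_zero), ofReal_log Real.pi_pos.le]
    ring_nf
  rw [logRotatedZeta, rotatedZeta, xi_eq_mul_riemannZeta h0 hs1, sub_eq_add_neg, Complex.exp_add,
    Complex.exp_add, Complex.exp_add, hpi, exp_logGamma (by simpa using h0), exp_logZeta hs,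
    Gammaℝ_def]
  field_simp

lemma differentiableAt_logRotatedZeta {s : ℂ} (hs : 1 < s.re) :
    DifferentiableAt ℂ logRotatedZeta s := by
  have h1 : DifferentiableAt ℂ (fun s : ℂ => logGamma (s / 2)) s :=
    DifferentiableAt.comp (g := logGamma) (f := fun s : ℂ => s / 2) s
      (differentiableAt_logGamma (by simp; linarith)) (by fun_prop)
  have h2 := differentiableAt_logZeta hs
  unfold logRotatedZeta
  fun_prop

lemma log_half_re (s : ℂ) : (log (s / 2)).re = Real.log (‖s‖ / 2) := by
  rw [log_re, norm_div, RCLike.norm_ofNat]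

lemma log_half_im {s : ℂ} (hs : 0 < s.re) : (log (s / 2)).im = Real.arctan (s.im / s.re) := by
  have h2 : (0 : ℝ) < 2⁻¹ := by norm_num
  rw [log_im, show s / 2 = ((2⁻¹ : ℝ) : ℂ) * s by push_cast; ring, arg_real_mul _ h2,
    ← Real.arctan_tan (x := s.arg), tan_arg]
  · exact (abs_lt.1 (abs_arg_lt_pi_div_two_iff.2 (Or.inl hs))).1
  · exact (abs_lt.1 (abs_arg_lt_pi_div_two_iff.2 (Or.inl hs))).2

lemma re_logRotatedZeta {s : ℂ} (hs : 1 < s.re) :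
    (logRotatedZeta s).re = (s.re - 1) / 2 * Real.log (‖s‖ / (2 * π)) + Real.log 2 / 2 +
      (s.im / 2 * (π / 2 - Real.arctan (s.im / s.re)) - s.re / 2) +
      (stirlingRemainder (s / 2)).re + (logZeta s).re := by
  have h0 : 0 < s.re := by linarith
  have hs0 : 0 < ‖s‖ := norm_pos_iff.2 fun h => by simp [h] at h0
  have hre := log_half_re s
  have him := log_half_im h0
  have e1 : Real.log (‖s‖ / (2 * π)) = Real.log (‖s‖ / 2) - Real.log π := by
    rw [← div_div, Real.log_div (by positivity) Real.pi_ne_zero]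
  have e2 : Real.log (2 * π) = Real.log 2 + Real.log π :=
    Real.log_mul two_ne_zero Real.pi_ne_zero
  unfold logRotatedZeta logGamma
  simp only [add_re, sub_re, neg_re, mul_re, ofReal_re, ofReal_im, I_re, I_im, sub_im, mul_im,
    div_ofNat_re, div_ofNat_im, one_re, one_im, hre, him, e1, e2]
  ring

lemma im_logRotatedZeta {s : ℂ} (hs : 1 < s.re) :
    (logRotatedZeta s).im = s.im / 2 * (Real.log (‖s‖ / (2 * π)) - 1) +
      (s.re - 1) / 2 * Real.arctan (s.im / s.re) - π / 4 * (s.re - 1 / 2) +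
      (stirlingRemainder (s / 2)).im + (logZeta s).im := by
  have h0 : 0 < s.re := by linarith
  have hs0 : 0 < ‖s‖ := norm_pos_iff.2 fun h => by simp [h] at h0
  have hre := log_half_re s
  have him := log_half_im h0
  have e1 : Real.log (‖s‖ / (2 * π)) = Real.log (‖s‖ / 2) - Real.log π := by
    rw [← div_div, Real.log_div (by positivity) Real.pi_ne_zero]
  unfold logRotatedZeta logGamma
  simp only [add_im, sub_re, neg_im, mul_re, ofReal_re, ofReal_im, I_re, I_im, sub_im, mul_im,
    div_ofNat_re, div_ofNat_im, one_re, one_im, hre, him, e1]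
  ring

lemma mul_arctan_complement_le {σ t : ℝ} (hσ : 0 < σ) (ht : 0 ≤ t) :
    t * (π / 2 - Real.arctan (t / σ)) ≤ σ := by
  rcases ht.eq_or_lt with rfl | ht
  · simpa using hσ.le
  have h1 : π / 2 - Real.arctan (t / σ) = Real.arctan (σ / t) := by
    rw [← Real.arctan_inv_of_pos (div_pos ht hσ), inv_div]
  have h2 : Real.arctan (σ / t) ≤ σ / t := by
    have := Real.le_tan (x := Real.arctan (σ / t)) (Real.arctan_nonneg.2 (by positivity))
      (Real.arctan_lt_pi_div_two _)
    rwa [Real.tan_arctan] at this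
  rw [h1]
  calc t * Real.arctan (σ / t) ≤ t * (σ / t) := by gcongr
    _ = σ := by field_simp

lemma div_one_add_sq_le_arctan {y : ℝ} (hy : 0 ≤ y) : y / (1 + y ^ 2) ≤ Real.arctan y := by
  have h := Real.sin_le (x := 2 * Real.arctan y)
    (mul_nonneg zero_le_two (Real.arctan_nonneg.2 hy))
  rw [Real.sin_two_mul, Real.sin_arctan, Real.cos_arctan] at h
  have h2 : √(1 + y ^ 2) * √(1 + y ^ 2) = 1 + y ^ 2 := Real.mul_self_sqrt (by positivity)
  have h3 : 2 * (y / √(1 + y ^ 2)) * (1 / √(1 + y ^ 2)) = 2 * (y / (1 + y ^ 2)) := by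
    rw [mul_assoc, div_mul_div_comm, h2, mul_one]
  linarith

lemma le_mul_arctan_complement {σ t : ℝ} (hσ : 0 < σ) (ht : 0 < t) :
    σ - σ ^ 3 / t ^ 2 ≤ t * (π / 2 - Real.arctan (t / σ)) := by
  have h1 : π / 2 - Real.arctan (t / σ) = Real.arctan (σ / t) := by
    rw [← Real.arctan_inv_of_pos (div_pos ht hσ), inv_div]
  have h2 := div_one_add_sq_le_arctan (div_pos hσ ht).le
  rw [h1]
  refine le_trans ?_ (mul_le_mul_of_nonneg_left h2 ht.le)
  have : t * (σ / t / (1 + (σ / t) ^ 2)) = σ * t ^ 2 / (t ^ 2 + σ ^ 2) := by field_simp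
  rw [this, le_div_iff₀ (by positivity), ← sub_nonneg]
  have : σ * t ^ 2 - (σ - σ ^ 3 / t ^ 2) * (t ^ 2 + σ ^ 2) = σ ^ 5 / t ^ 2 := by
    field_simp
    ring
  rw [this]
  positivity

lemma norm_rotatedZeta_le {s : ℂ} (hs : 1 < s.re) (ht : 0 ≤ s.im) :
    ‖rotatedZeta s‖ ≤ Real.exp ((s.re - 1) / 2 * Real.log (‖s‖ / (2 * π)) + Real.log 2 / 2 +
      1 / (4 * s.re) + logZetaReal s.re) := by
  rw [← exp_logRotatedZeta hs, norm_exp, Real.exp_le_exp, re_logRotatedZeta hs]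
  have h1 := mul_arctan_complement_le (by linarith : 0 < s.re) ht
  have h2 := (re_le_norm _).trans (norm_logZeta_le hs)
  have h3 := (re_le_norm _).trans
    (norm_stirlingRemainder_le (z := s / 2) (by simp; linarith))
  rw [div_ofNat_re, show 8 * (s.re / 2) = 4 * s.re by ring] at h3
  linarith

lemma neg_re_logRotatedZeta_le {s : ℂ} (hs : 1 < s.re) (ht : 0 < s.im) :
    -(logRotatedZeta s).re ≤ -((s.re - 1) / 2 * Real.log (s.im / (2 * π))) - Real.log 2 / 2 +
      s.re ^ 3 / (2 * s.im ^ 2) + π / (8 * s.im) - (logZeta s).re := by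
  rw [re_logRotatedZeta hs]
  have h1 := le_mul_arctan_complement (by linarith : 0 < s.re) ht
  have h3 := (neg_le_abs _).trans ((abs_re_le_norm _).trans
    (norm_stirlingRemainder_le_of_im_pos (z := s / 2) (by simp; linarith) (by simpa)))
  rw [div_ofNat_im, show 16 * (s.im / 2) = 8 * s.im by ring] at h3
  have h4 : Real.log (s.im / (2 * π)) ≤ Real.log (‖s‖ / (2 * π)) := by
    refine Real.log_le_log (by positivity) ?_
    gcongr
    exact im_le_norm s
  have h5 := mul_le_mul_of_nonneg_left h4 (by linarith : 0 ≤ (s.re - 1) / 2)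
  have h6 : s.re ^ 3 / (2 * s.im ^ 2) = s.re ^ 3 / s.im ^ 2 / 2 := by ring
  rw [h6]
  linarith

lemma abs_im_logRotatedZeta_sub_le {s : ℂ} (hs : 1 < s.re) (ht : 0 < s.im) :
    |(logRotatedZeta s).im - s.im / 2 * (Real.log (s.im / (2 * π)) - 1) + π / 8 -
      (logZeta s).im| ≤ (s.re ^ 2 / 4 + s.re * (s.re - 1) / 2 + π / 8) / s.im := by
  have hσ : 0 < s.re := by linarith
  have hs0 : 0 < ‖s‖ := norm_pos_iff.2 fun h => by simp [h] at ht
  have h3 := (abs_im_le_norm _).trans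
    (norm_stirlingRemainder_le_of_im_pos (z := s / 2) (by simp; linarith) (by simpa))
  rw [div_ofNat_im, show 16 * (s.im / 2) = 8 * s.im by ring] at h3
  have h1 : |(s.re - 1) / 2 * (π / 2 - Real.arctan (s.im / s.re))| ≤
      s.re * (s.re - 1) / 2 / s.im := by
    have h := mul_arctan_complement_le hσ ht.le
    have h' : 0 ≤ π / 2 - Real.arctan (s.im / s.re) := by
      linarith [Real.arctan_lt_pi_div_two (s.im / s.re)]
    rw [abs_of_nonneg (mul_nonneg (by linarith) h'), le_div_iff₀ ht]
    nlinarith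
  have h2 : |s.im / 2 * (Real.log (‖s‖ / (2 * π)) - Real.log (s.im / (2 * π)))| ≤
      s.re ^ 2 / 4 / s.im := by
    have e : Real.log (‖s‖ / (2 * π)) - Real.log (s.im / (2 * π)) = Real.log (‖s‖ / s.im) := by
      rw [← Real.log_div (by positivity) (by positivity)]
      congr 1
      field_simp
    have e2 : Real.log (‖s‖ / s.im) = Real.log (1 + s.re ^ 2 / s.im ^ 2) / 2 := by
      have : 1 + s.re ^ 2 / s.im ^ 2 = (‖s‖ / s.im) ^ 2 := by
        rw [div_pow, ← normSq_eq_norm_sq, normSq_apply]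
        field_simp
        ring
      rw [this, Real.log_pow]
      push_cast
      ring
    have e3 : 0 ≤ Real.log (1 + s.re ^ 2 / s.im ^ 2) := by
      apply Real.log_nonneg
      have : 0 ≤ s.re ^ 2 / s.im ^ 2 := by positivity
      linarith
    have e4 : Real.log (1 + s.re ^ 2 / s.im ^ 2) ≤ s.re ^ 2 / s.im ^ 2 := by
      have := Real.log_le_sub_one_of_pos (x := 1 + s.re ^ 2 / s.im ^ 2) (by positivity)
      linarith
    rw [e, e2, abs_of_nonneg (by positivity)]
    calc s.im / 2 * (Real.log (1 + s.re ^ 2 / s.im ^ 2) / 2)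
        ≤ s.im / 2 * (s.re ^ 2 / s.im ^ 2 / 2) := by gcongr
      _ = _ := by field_simp; ring
  have h4 : π / (8 * s.im) = π / 8 / s.im := by rw [div_div]
  rw [im_logRotatedZeta hs, add_div, add_div, ← h4]
  rw [abs_le] at h1 h2 h3 ⊢
  constructor <;> linarith

end ZetaZeroCount

namespace ZetaZeroCount

open Complex Set Topology

/-! ### Bounds for the rotated zeta function in the critical strip -/

open ComplexConjugate in
lemma rotatedZeta_one_sub_conj (s : ℂ) : rotatedZeta (1 - conj s) = conj (rotatedZeta s) := by
  unfold rotatedZeta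
  rw [xi_one_sub, xi_conj, map_mul, map_div₀, ← exp_conj]
  congr 1
  · congr 1
    simp
    ring
  · congr 1
    simp only [map_neg, map_mul, map_div₀, map_sub, map_one, conj_ofReal, conj_I, map_ofNat]
    ring

lemma differentiableAt_rotatedZeta {s : ℂ} (h0 : s ≠ 0) (h1 : s ≠ 1) :
    DifferentiableAt ℂ rotatedZeta s := by
  have hx := differentiable_xi s
  have h2 : s * (s - 1) ≠ 0 := mul_ne_zero h0 (sub_ne_zero.2 h1)
  unfold rotatedZeta
  fun_prop (disch := assumption)

/-- The function to which the Phragmén–Lindelöf principle is applied. -/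
noncomputable def boundedXi (s : ℂ) : ℂ :=
  xi s * exp (-(π / 4 * (s - 1 / 2) * I)) * exp (-((83 / 80 : ℝ) * log ((s + 1) * (2 - s))))

lemma norm_boundedXi (s : ℂ) : ‖boundedXi s‖ = ‖xi s‖ * Real.exp (π / 4 * s.im) *
    Real.exp (-(83 / 80 * Real.log ‖(s + 1) * (2 - s)‖)) := by
  rw [boundedXi, norm_mul, norm_mul, norm_exp, norm_exp]
  congr 2
  · congr 1
    simp [div_ofNat_re, div_ofNat_im]
  · rw [neg_re, re_ofReal_mul, log_re]

lemma re_quadratic_pos {s : ℂ} (h0 : -1 < s.re) (h1 : s.re < 2) :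
    0 < ((s + 1) * (2 - s)).re := by
  simp
  nlinarith [mul_pos (by linarith : 0 < s.re + 1) (by linarith : 0 < 2 - s.re), sq_nonneg s.im]

lemma differentiableAt_boundedXi {s : ℂ} (h0 : -1 < s.re) (h1 : s.re < 2) :
    DifferentiableAt ℂ boundedXi s := by
  have hx := differentiable_xi s
  have hq : (s + 1) * (2 - s) ∈ slitPlane := Or.inl (re_quadratic_pos h0 h1)
  unfold boundedXi
  fun_prop (disch := assumption)

lemma norm_boundedXi_le_of_re_eq {s : ℂ} (hs : s.re = 23 / 20) (ht : 0 ≤ s.im) :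
    ‖boundedXi s‖ ≤
      Real.exp (2 + Real.log 2 / 2 + 5 / 23 - 3 / 40 * Real.log (2 * π)) := by
  have h1 := norm_rotatedZeta_le (s := s) (by rw [hs]; norm_num) ht
  have h2 := logZetaReal_le_two
  rw [hs] at h1
  have hs0 : s ≠ 0 := fun h => by simp [h] at hs; norm_num at hs
  have hs1 : s - 1 ≠ 0 := fun h => by
    rw [sub_eq_zero.1 h] at hs; norm_num at hs
  have hnpos : 0 < ‖s‖ := norm_pos_iff.2 hs0
  have hn1 : 0 < ‖s - 1‖ := norm_pos_iff.2 hs1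
  set q := (s + 1) * (2 - s) with hq
  have hqpos : 0 < ‖q‖ := norm_pos_iff.2 fun h => by
    have := re_quadratic_pos (s := s) (by rw [hs]; norm_num) (by rw [hs]; norm_num)
    rw [← hq, h] at this
    simp at this
  have hxi : ‖xi s‖ * Real.exp (π / 4 * s.im) = ‖s‖ * ‖s - 1‖ * ‖rotatedZeta s‖ := by
    rw [rotatedZeta, norm_mul, norm_div, norm_mul, norm_exp]
    have : (-(π / 4 * (s - 1 / 2) * I)).re = π / 4 * s.im := by
      simp [div_ofNat_re, div_ofNat_im]
    rw [this]
    field_simp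
  have hsq : ‖s‖ ^ 2 = (23 / 20) ^ 2 + s.im ^ 2 := by
    rw [← normSq_eq_norm_sq, normSq_apply, hs]; ring
  have hsq1 : ‖s - 1‖ ^ 2 = (3 / 20) ^ 2 + s.im ^ 2 := by
    rw [← normSq_eq_norm_sq, normSq_apply]; simp [hs]; ring
  have hsqa : ‖s + 1‖ ^ 2 = (43 / 20) ^ 2 + s.im ^ 2 := by
    rw [← normSq_eq_norm_sq, normSq_apply]; simp [hs]; ring
  have hsqb : ‖2 - s‖ ^ 2 = (17 / 20) ^ 2 + s.im ^ 2 := by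
    rw [← normSq_eq_norm_sq, normSq_apply]; simp [hs]; ring
  have hqsq : ‖q‖ ^ 2 = ((43 / 20) ^ 2 + s.im ^ 2) * ((17 / 20) ^ 2 + s.im ^ 2) := by
    rw [hq, norm_mul, mul_pow, hsqa, hsqb]
  have k1 : ‖s‖ * ‖s - 1‖ ≤ ‖q‖ := by
    refine le_of_sq_le_sq ?_ hqpos.le
    rw [hqsq, mul_pow, hsq, hsq1]
    nlinarith [sq_nonneg s.im]
  have k2 : ‖s‖ ^ 2 ≤ ‖q‖ := by
    refine le_of_sq_le_sq ?_ hqpos.le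
    rw [hqsq, hsq]
    nlinarith [sq_nonneg s.im]
  have l2 : 2 * Real.log ‖s‖ ≤ Real.log ‖q‖ := by
    have := Real.log_le_log (by positivity) k2
    rwa [Real.log_pow] at this
  have e1 : Real.log (‖s‖ / (2 * π)) = Real.log ‖s‖ - Real.log (2 * π) :=
    Real.log_div hnpos.ne' (by positivity)
  rw [norm_boundedXi, hxi]
  calc ‖s‖ * ‖s - 1‖ * ‖rotatedZeta s‖ * Real.exp (-(83 / 80 * Real.log ‖q‖))
      ≤ Real.exp (Real.log ‖q‖) * Real.exp ((23 / 20 - 1) / 2 * Real.log (‖s‖ / (2 * π)) +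
        Real.log 2 / 2 + 1 / (4 * (23 / 20)) + logZetaReal (23 / 20)) *
        Real.exp (-(83 / 80 * Real.log ‖q‖)) := by
        rw [Real.exp_log hqpos]
        gcongr
    _ ≤ _ := by
        rw [← Real.exp_add, ← Real.exp_add, Real.exp_le_exp, e1]
        linarith

open ComplexConjugate in
lemma norm_boundedXi_conj_le {s : ℂ} (ht : s.im ≤ 0) : ‖boundedXi s‖ ≤ ‖boundedXi (conj s)‖ := by
  rw [norm_boundedXi, norm_boundedXi, xi_conj, norm_conj,
    show (conj s + 1) * (2 - conj s) = conj ((s + 1) * (2 - s)) by simp [map_ofNat], norm_conj]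
  gcongr
  simp
  linarith

open ComplexConjugate in
lemma norm_boundedXi_one_sub_conj (s : ℂ) : ‖boundedXi (1 - conj s)‖ = ‖boundedXi s‖ := by
  rw [norm_boundedXi, norm_boundedXi, xi_one_sub, xi_conj, norm_conj,
    show (1 - conj s + 1) * (2 - (1 - conj s)) = conj ((s + 1) * (2 - s)) by
      simp [map_ofNat]; ring, norm_conj]
  simp

lemma boundedXi_isBigO : boundedXi =O[comap (_root_.abs ∘ im) atTop ⊓
    𝓟 (re ⁻¹' Ioo (-(3 / 20)) (23 / 20))] fun z => Real.exp (3 * Real.exp (1 * |z.im|)) := by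
  set M := ‖completedRiemannZeta₀ ((-(3 / 20) : ℝ) : ℂ)‖ +
    ‖completedRiemannZeta₀ ((23 / 20 : ℝ) : ℂ)‖
  have hM : 0 ≤ M := by positivity
  refine Asymptotics.IsBigO.of_bound (1 + 4 * M) ?_
  rw [eventually_inf_principal, eventually_comap]
  filter_upwards [eventually_ge_atTop 1] with r hr s hsr hs
  simp only [Function.comp_apply] at hsr
  obtain ⟨ha, hb⟩ := hs
  have hΛ := norm_completedRiemannZeta₀_le ha.le hb.le
  have hn : ‖s‖ ≤ 2 + r := by
    refine (norm_le_abs_re_add_abs_im s).trans ?_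
    rw [hsr]
    have : |s.re| ≤ 2 := abs_le.2 ⟨by linarith, by linarith⟩
    linarith
  have hn1 : ‖s - 1‖ ≤ 2 + r := by
    refine (norm_le_abs_re_add_abs_im _).trans ?_
    have : |(s - 1).re| ≤ 2 := by
      simp only [sub_re, one_re]
      exact abs_le.2 ⟨by linarith, by linarith⟩
    simp only [sub_im, one_im, sub_zero, hsr]
    linarith
  have hxi : ‖xi s‖ ≤ 1 + (2 + r) * (2 + r) * M := by
    unfold xi
    refine (norm_add_le _ _).trans ?_
    rw [norm_one, norm_mul, norm_mul]
    gcongr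
  have hq : 1 ≤ ‖(s + 1) * (2 - s)‖ := by
    refine le_trans ?_ (re_le_norm _)
    have : 1 ≤ s.im ^ 2 := by
      rw [← sq_abs, hsr]
      nlinarith
    simp
    nlinarith [mul_pos (by linarith : 0 < s.re + 1) (by linarith : 0 < 2 - s.re)]
  have hE : (2 + r) ≤ 2 * Real.exp r := by linarith [Real.add_one_le_exp r]
  have h1 : 1 ≤ Real.exp r := Real.one_le_exp (by linarith)
  have hxi' : ‖xi s‖ ≤ (1 + 4 * M) * Real.exp r ^ 2 := by
    have : (2 + r) * (2 + r) ≤ (2 * Real.exp r) * (2 * Real.exp r) := by gcongr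
    nlinarith [mul_le_mul_of_nonneg_right this hM]
  rw [norm_boundedXi, Real.norm_of_nonneg (Real.exp_pos _).le, hsr, one_mul]
  calc ‖xi s‖ * Real.exp (π / 4 * s.im) * Real.exp (-(83 / 80 * Real.log ‖(s + 1) * (2 - s)‖))
      ≤ (1 + 4 * M) * Real.exp r ^ 2 * Real.exp r * 1 := by
        gcongr
        · have : s.im ≤ r := hsr ▸ le_abs_self _
          nlinarith [Real.pi_lt_four, Real.pi_pos]
        · rw [Real.exp_le_one_iff]
          have := Real.log_nonneg hq
          linarith
    _ = (1 + 4 * M) * Real.exp (3 * r) := by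
        rw [show 3 * r = r + r + r by ring, Real.exp_add, Real.exp_add]
        ring
    _ ≤ _ := by
        gcongr
        linarith [Real.add_one_le_exp r]

open ComplexConjugate in
lemma norm_boundedXi_le {s : ℂ} (h0 : -(3 / 20) ≤ s.re) (h1 : s.re ≤ 23 / 20) :
    ‖boundedXi s‖ ≤
      Real.exp (2 + Real.log 2 / 2 + 5 / 23 - 3 / 40 * Real.log (2 * π)) := by
  have right : ∀ z : ℂ, z.re = 23 / 20 → ‖boundedXi z‖ ≤
      Real.exp (2 + Real.log 2 / 2 + 5 / 23 - 3 / 40 * Real.log (2 * π)) := by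
    intro z hz
    rcases le_total 0 z.im with h | h
    · exact norm_boundedXi_le_of_re_eq hz h
    · exact (norm_boundedXi_conj_le h).trans
        (norm_boundedXi_le_of_re_eq (by simpa using hz) (by simpa using h))
  refine PhragmenLindelof.vertical_strip (a := -(3 / 20)) (b := 23 / 20) ?_
    ⟨1, ?_, 3, boundedXi_isBigO⟩ (fun z hz => ?_) right h0 h1
  · refine DifferentiableOn.diffContOnCl fun z hz => ?_
    have hz' : z ∈ re ⁻¹' Icc (-(3 / 20)) (23 / 20) := by
      rw [closure_preimage_re, closure_Ioo (by norm_num)] at hz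
      exact hz
    exact (differentiableAt_boundedXi (by linarith [hz'.1])
      (by linarith [hz'.2])).differentiableWithinAt
  · rw [lt_div_iff₀ (by norm_num)]
    linarith [Real.pi_gt_three]
  · rw [← norm_boundedXi_one_sub_conj]
    refine right _ ?_
    simp [hz]
    norm_num

end ZetaZeroCount

namespace ZetaZeroCount

open Complex Set Topology

lemma norm_rotatedZeta_le_of_re_le {s : ℂ} {r : ℝ} (h0 : -(3 / 20) ≤ s.re) (h1 : s.re ≤ 23 / 20)
    (ht : 21 / 2 ≤ s.im) (hr : ‖s‖ ≤ r) :
    ‖rotatedZeta s‖ ≤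
      Real.exp (9 / 4 + Real.log 2 / 2 + 3 / 40 * Real.log (r / (2 * π))) := by
  have him := im_le_norm s
  have hr0 : 21 / 2 ≤ r := by linarith
  have him1 : s.im ≤ ‖s - 1‖ := by simpa using im_le_norm (s - 1)
  set p := s * (s - 1) with hp
  set q := (s + 1) * (2 - s) with hq
  have hpt : (21 / 2) * (21 / 2) ≤ ‖p‖ := by
    rw [hp, norm_mul]
    exact mul_le_mul (by linarith) (by linarith) (by norm_num) (norm_nonneg _)
  have hp0 : 0 < ‖p‖ := by linarith
  have hqp : ‖q‖ ≤ ‖p‖ + 2 := by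
    rw [show q = -p + 2 by rw [hq, hp]; ring]
    refine (norm_add_le _ _).trans ?_
    simp
  have hqr : ‖q‖ ≤ (r + 1) * (r + 2) := by
    rw [hq, norm_mul]
    gcongr
    · refine (norm_add_le _ _).trans ?_
      simpa
    · refine (norm_sub_le _ _).trans ?_
      simp
      linarith
  have hq0 : 0 < ‖q‖ := norm_pos_iff.2 fun h => by
    have := re_quadratic_pos (s := s) (by linarith) (by linarith)
    rw [← hq, h] at this
    simp at this
  have e : ‖rotatedZeta s‖ =
      ‖boundedXi s‖ * Real.exp (83 / 80 * Real.log ‖q‖) * Real.exp (-Real.log ‖p‖) := by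
    have : (-(π / 4 * (s - 1 / 2) * I)).re = π / 4 * s.im := by
      simp [div_ofNat_re, div_ofNat_im]
    rw [norm_boundedXi, rotatedZeta, ← hp, ← hq, norm_mul, norm_div, norm_exp, this, Real.exp_neg,
      Real.exp_neg, Real.exp_log hp0]
    field_simp
  have l1 : Real.log ‖q‖ - Real.log ‖p‖ ≤ 8 / 441 := by
    rw [← Real.log_div hq0.ne' hp0.ne']
    have := Real.log_le_sub_one_of_pos (div_pos hq0 hp0)
    have : ‖q‖ / ‖p‖ ≤ 1 + 8 / 441 := by
      rw [div_le_iff₀ hp0]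
      linarith
    linarith
  have l2 : Real.log ‖q‖ ≤ 2 * Real.log r + 2 / 7 := by
    have hr' : 0 < r := by linarith
    have a1 := Real.log_le_sub_one_of_pos (x := (r + 1) / r) (by positivity)
    have a2 := Real.log_le_sub_one_of_pos (x := (r + 2) / r) (by positivity)
    rw [Real.log_div (by positivity) (by positivity)] at a1 a2
    have a3 := Real.log_le_log hq0 hqr
    rw [Real.log_mul (by positivity) (by positivity)] at a3
    have a4 : (r + 1) / r - 1 + ((r + 2) / r - 1) ≤ 2 / 7 := by
      rw [show (r + 1) / r - 1 + ((r + 2) / r - 1) = 3 / r by field_simp; ring,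
        div_le_iff₀ hr']
      linarith
    linarith
  have e1 : Real.log (r / (2 * π)) = Real.log r - Real.log (2 * π) :=
    Real.log_div (by linarith) (by positivity)
  rw [e]
  calc _ ≤ Real.exp (2 + Real.log 2 / 2 + 5 / 23 - 3 / 40 * Real.log (2 * π)) *
        Real.exp (83 / 80 * Real.log ‖q‖) * Real.exp (-Real.log ‖p‖) := by
        gcongr
        exact norm_boundedXi_le h0 h1
    _ ≤ _ := by
        rw [← Real.exp_add, ← Real.exp_add, Real.exp_le_exp, e1]
        linarith

lemma norm_rotatedZeta_le_exp {s : ℂ} {r : ℝ} (h0 : -(3 / 20) ≤ s.re) (h1 : s.re ≤ 49 / 20)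
    (ht : 21 / 2 ≤ s.im) (hr : ‖s‖ ≤ r) :
    ‖rotatedZeta s‖ ≤ Real.exp (9 / 4 + Real.log 2 / 2 + 3 / 40 * Real.log (r / (2 * π)) +
      max 0 ((s.re - 23 / 20) / (13 / 10)) * (13 / 20 * Real.log (r / (2 * π)) - 3 / 2)) := by
  rcases le_total s.re (23 / 20) with h | h
  · rw [max_eq_left (by linarith [h]), zero_mul, add_zero]
    exact norm_rotatedZeta_le_of_re_le h0 h ht hr
  rw [max_eq_right (by linarith)]
  refine (norm_rotatedZeta_le (by linarith) (by linarith)).trans (Real.exp_le_exp.2 ?_)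
  set x := (s.re - 23 / 20) / (13 / 10) with hx
  have hs : s.re = 23 / 20 + 13 / 10 * x := by rw [hx]; ring
  have hz := logZetaReal_le (x := x) (by linarith) (by linarith)
  rw [← hs] at hz
  have hl : Real.log (‖s‖ / (2 * π)) ≤ Real.log (r / (2 * π)) := by
    have : 0 < ‖s‖ := by linarith [im_le_norm s]
    exact Real.log_le_log (by positivity) (by gcongr)
  have hl' := mul_le_mul_of_nonneg_left hl (by linarith : 0 ≤ (s.re - 1) / 2)
  have hd : 1 / (4 * s.re) ≤ 1 / 4 := by
    rw [div_le_div_iff₀ (by linarith) (by norm_num)]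
    linarith
  have : (s.re - 1) / 2 = 3 / 40 + 13 / 20 * x := by rw [hs]; ring
  rw [this] at hl' ⊢
  nlinarith

end ZetaZeroCount

namespace ZetaZeroCount

open Complex Set Topology

/-! ### Backlund's bound for the variation of the argument -/

lemma sum_log_le_circleAverage {F : ℂ → ℂ} {c : ℂ} {R : ℝ} (hR : 0 < R) {B : ℂ → ℝ}
    (hF : AnalyticOnNhd ℂ F (Metric.closedBall c R)) (hc : F c ≠ 0)
    (hB : CircleIntegrable B c R) (hB0 : ∀ z ∈ Metric.sphere c R, 0 ≤ B z)
    (hFB : ∀ z ∈ Metric.sphere c R, ‖F z‖ ≤ Real.exp (B z)) (S : Finset ℂ)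
    (hS : ∀ u ∈ S, u ∈ Metric.closedBall c R ∧ F u = 0) :
    ∑ u ∈ S, Real.log (R / ‖c - u‖) + Real.log ‖F c‖ ≤ Real.circleAverage B c R := by
  have hR' : |R| = R := abs_of_pos hR
  rw [← hR'] at hF
  have jensen := hF.circleAverage_log_norm hR.ne' hc
  have hmono : Real.circleAverage (fun z => Real.log ‖F z‖) c R ≤ Real.circleAverage B c R := by
    refine Real.circleAverage_mono
      (hF.mono Metric.sphere_subset_closedBall).meromorphicOn.circleIntegrable_log_norm hB ?_
    rw [hR']
    intro z hz
    rcases eq_or_ne (F z) 0 with h | h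
    · simpa [h] using hB0 z hz
    · rw [Real.log_le_iff_le_exp (norm_pos_iff.2 h)]
      exact hFB z hz
  set D := MeromorphicOn.divisor F (Metric.closedBall c |R|) with hD
  have hnn : ∀ u, 0 ≤ (D u : ℝ) * Real.log (R * ‖c - u‖⁻¹) := by
    intro u
    by_cases hu : u ∈ Metric.closedBall c |R|
    · refine mul_nonneg (by exact_mod_cast MeromorphicOn.AnalyticOnNhd.divisor_nonneg hF u) ?_
      rcases eq_or_ne u c with rfl | huc
      · simp
      rw [hR', Metric.mem_closedBall, dist_comm, dist_eq_norm] at hu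
      have : 0 < ‖c - u‖ := norm_pos_iff.2 (sub_ne_zero.2 huc.symm)
      rw [← div_eq_mul_inv]
      exact Real.log_nonneg (by rwa [le_div_iff₀ this, one_mul])
    · rw [hD, Function.locallyFinsuppWithin.apply_eq_zero_of_notMem _ hu]
      simp
  have hfin : (Function.support fun u => (D u : ℝ) * Real.log (R * ‖c - u‖⁻¹)).Finite :=
    (D.finiteSupport (isCompact_closedBall c |R|)).subset fun _ _ => by simp_all
  have hsum : ∑ u ∈ S, Real.log (R / ‖c - u‖) ≤
      ∑ᶠ u, (D u : ℝ) * Real.log (R * ‖c - u‖⁻¹) := by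
    classical
    rw [finsum_eq_sum_of_support_subset (s := S ∪ hfin.toFinset) _ (by simp)]
    refine le_trans (Finset.sum_le_sum fun u hu => ?_)
      (Finset.sum_le_sum_of_subset_of_nonneg Finset.subset_union_left fun u _ _ => hnn u)
    obtain ⟨hu1, hu2⟩ := hS u hu
    rw [← hR'] at hu1
    have huc : u ≠ c := fun h => hc (h ▸ hu2)
    have hpos : 0 < ‖c - u‖ := norm_pos_iff.2 (sub_ne_zero.2 huc.symm)
    have hlog : 0 ≤ Real.log (R * ‖c - u‖⁻¹) := by
      rw [hR', Metric.mem_closedBall, dist_comm, dist_eq_norm] at hu1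
      rw [← div_eq_mul_inv]
      exact Real.log_nonneg (by rwa [le_div_iff₀ hpos, one_mul])
    rw [div_eq_mul_inv]
    refine le_mul_of_one_le_left hlog ?_
    have hne : analyticOrderAt F u ≠ ⊤ := by
      intro htop
      have hEq := hF.eqOn_zero_of_preconnected_of_eventuallyEq_zero
        (convex_closedBall c |R|).isPreconnected hu1 (analyticOrderAt_eq_top.1 htop)
      exact hc (hEq (by simp))
    have h1 : analyticOrderAt F u ≠ 0 := (hF u hu1).analyticOrderAt_ne_zero.2 hu2
    rw [hD, MeromorphicOn.AnalyticOnNhd.divisor_apply hF hu1]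
    obtain ⟨n, hn⟩ := ENat.ne_top_iff_exists.1 hne
    rw [← hn] at h1 ⊢
    have : n ≠ 0 := by exact_mod_cast h1
    have : 1 ≤ n := by omega
    simpa using! this
  rw [jensen] at hmono
  linarith

lemma integral_max_zero_cos : ∫ θ in (0 : ℝ)..2 * π, max 0 (Real.cos θ) = 2 := by
  have hi : ∀ a b : ℝ, IntervalIntegrable (fun θ => max 0 (Real.cos θ)) volume a b :=
    fun a b => (by fun_prop : Continuous fun θ => max 0 (Real.cos θ)).intervalIntegrable a b
  have hp := Real.pi_pos
  rw [← intervalIntegral.integral_add_adjacent_intervals (hi 0 (π / 2)) (hi _ _),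
    ← intervalIntegral.integral_add_adjacent_intervals (hi (π / 2) (π + π / 2)) (hi _ _)]
  have h1 : ∫ θ in (0 : ℝ)..π / 2, max 0 (Real.cos θ) = ∫ θ in (0 : ℝ)..π / 2, Real.cos θ := by
    refine intervalIntegral.integral_congr fun θ hθ => ?_
    rw [uIcc_of_le (by linarith)] at hθ
    exact max_eq_right (Real.cos_nonneg_of_neg_pi_div_two_le_of_le (by linarith [hθ.1]) hθ.2)
  have h2 : ∫ θ in (π / 2 : ℝ)..π + π / 2, max 0 (Real.cos θ) =
      ∫ θ in (π / 2 : ℝ)..π + π / 2, 0 := by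
    refine intervalIntegral.integral_congr fun θ hθ => ?_
    rw [uIcc_of_le (by linarith)] at hθ
    exact max_eq_left (Real.cos_nonpos_of_pi_div_two_le_of_le hθ.1 hθ.2)
  have h3 : ∫ θ in (π + π / 2 : ℝ)..2 * π, max 0 (Real.cos θ) =
      ∫ θ in (π + π / 2 : ℝ)..2 * π, Real.cos θ := by
    refine intervalIntegral.integral_congr fun θ hθ => ?_
    rw [uIcc_of_le (by linarith)] at hθ
    have := Real.cos_nonneg_of_neg_pi_div_two_le_of_le (x := θ - 2 * π) (by linarith [hθ.1])
      (by linarith [hθ.2])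
    rw [Real.cos_sub_two_pi] at this
    exact max_eq_right this
  rw [h1, h2, h3, integral_cos, integral_cos, add_comm π (π / 2), Real.sin_add_pi]
  norm_num

lemma circleAverage_add_mul_max_re (a b c : ℝ) {R : ℝ} (hR : 0 < R) :
    Real.circleAverage (fun z => a + max 0 ((z.re - c) / R) * b) c R = a + b / π := by
  have h : ∀ θ, (fun z : ℂ => a + max 0 ((z.re - c) / R) * b) (circleMap c R θ) =
      a + max 0 (Real.cos θ) * b := by
    intro θ
    have : (circleMap (c : ℂ) R θ).re = c + R * Real.cos θ := by
      simp [circleMap, exp_ofReal_mul_I_re]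
    simp only [this]
    congr 3
    field_simp
    ring
  rw [Real.circleAverage_def]
  simp_rw [h]
  rw [intervalIntegral.integral_add (by simp) (Continuous.intervalIntegrable (by fun_prop) _ _),
    intervalIntegral.integral_mul_const, integral_max_zero_cos]
  simp
  field_simp

lemma exists_finset_sin_eq_zero {A : ℝ → ℝ} {u v : ℝ} (huv : u ≤ v)
    (hA : ContinuousOn A (Icc u v)) :
    ∃ S : Finset ℝ, |A v - A u| / π - 1 ≤ S.card ∧ ∀ x ∈ S, x ∈ Ioo u v ∧ Real.sin (A x) = 0 := by
  wlog h : A u ≤ A v generalizing A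
  · obtain ⟨S, hS, hS'⟩ := this (A := fun x => -A x) hA.neg (by linarith)
    refine ⟨S, ?_, fun x hx => ⟨(hS' x hx).1, by simpa using (hS' x hx).2⟩⟩
    rwa [show -A v - -A u = -(A v - A u) by ring, abs_neg] at hS
  have hp := Real.pi_pos
  have key : ∀ k ∈ Finset.Ioo ⌊A u / π⌋ ⌈A v / π⌉, ∃ x ∈ Ioo u v, A x = k * π := by
    intro k hk
    rw [Finset.mem_Ioo, Int.floor_lt, Int.lt_ceil, div_lt_iff₀ hp, lt_div_iff₀ hp] at hk
    exact intermediate_value_Ioo huv hA hk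
  choose! x hx hx' using key
  refine ⟨(Finset.Ioo ⌊A u / π⌋ ⌈A v / π⌉).image x, ?_, fun y hy => ?_⟩
  · rw [Finset.card_image_of_injOn, Int.card_Ioo, abs_of_nonneg (by linarith), sub_div]
    · have h1 := Int.floor_le (A u / π)
      have h2 := Int.le_ceil (A v / π)
      have h3 := Int.self_le_toNat (⌈A v / π⌉ - ⌊A u / π⌋ - 1)
      have h4 : ((⌈A v / π⌉ - ⌊A u / π⌋ - 1 : ℤ) : ℝ) ≤
          ((⌈A v / π⌉ - ⌊A u / π⌋ - 1).toNat : ℝ) := by exact_mod_cast h3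
      push_cast at h4
      linarith
    · intro k hk l hl hkl
      have e1 := hx' k hk
      have e2 := hx' l hl
      rw [hkl, e2] at e1
      exact_mod_cast (mul_right_cancel₀ hp.ne' e1).symm
  · obtain ⟨k, hk, rfl⟩ := Finset.mem_image.1 hy
    exact ⟨hx k hk, by rw [hx' k hk, Real.sin_int_mul_pi]⟩

end ZetaZeroCount

namespace ZetaZeroCount

open Complex Set Topology

open ComplexConjugate in
lemma half_add_conj_mul_exp (φ : ℝ) (w : ℂ) :
    (exp (φ * I) * exp w + conj (exp (φ * I)) * conj (exp w)) / 2 =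
      (Real.exp w.re * Real.cos (w.im + φ) : ℝ) := by
  rw [← map_mul, ← Complex.exp_add, add_conj, exp_re]
  simp [add_comm]

lemma cos_sub_eq_zero {φ y : ℝ} (hφ : φ = 0 ∨ φ = -(π / 2)) (h : Real.cos (y + φ) = 0) :
    Real.cos (y - φ) = 0 := by
  rcases hφ with rfl | rfl
  · simpa using h
  · rw [← sub_eq_add_neg, Real.cos_sub_pi_div_two] at h
    rw [sub_neg_eq_add, Real.cos_add_pi_div_two, h, neg_zero]

lemma exists_half_le_cos_sq (y : ℝ) :
    ∃ φ : ℝ, (φ = 0 ∨ φ = -(π / 2)) ∧ 1 / 2 ≤ Real.cos (y + φ) ^ 2 := by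
  rcases le_total (1 / 2) (Real.cos y ^ 2) with h | h
  · exact ⟨0, Or.inl rfl, by simpa using h⟩
  · refine ⟨-(π / 2), Or.inr rfl, ?_⟩
    rw [← sub_eq_add_neg, Real.cos_sub_pi_div_two, Real.sin_sq]
    linarith

/-- One instance of Jensen's formula in Backlund's argument, applied to a combination of the
`M`-th powers of `g z` and `g (1 - z)`. -/
lemma backlund_pow {g : ℂ → ℂ} {B : ℂ → ℝ} {l : ℝ → ℂ}
    (hg : AnalyticOnNhd ℂ g (Metric.closedBall (23 / 20) (13 / 10)))
    (hg' : AnalyticOnNhd ℂ (fun z => g (1 - z)) (Metric.closedBall (23 / 20) (13 / 10)))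
    (hsym : ∀ x : ℝ, g (1 - x) = (starRingEnd ℂ) (g x))
    (hl : ContinuousOn l (Icc (1 / 2) (23 / 20)))
    (hgl : ∀ x ∈ Icc (1 / 2 : ℝ) (23 / 20), g x = exp (l x))
    (hB : CircleIntegrable B (23 / 20) (13 / 10))
    (hB0 : ∀ z ∈ Metric.sphere (23 / 20 : ℂ) (13 / 10), 0 ≤ B z)
    (hgB : ∀ z ∈ Metric.sphere (23 / 20 : ℂ) (13 / 10), ‖g z‖ ≤ Real.exp (B z))
    (hgB' : ∀ z ∈ Metric.sphere (23 / 20 : ℂ) (13 / 10), ‖g (1 - z)‖ ≤ Real.exp (B z)) (M : ℕ) :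
    (M * (|(l (23 / 20)).im - (l (1 / 2)).im| / π) - 1) * (2 * Real.log 2) + M * (l (23 / 20)).re ≤
      M * Real.circleAverage B (23 / 20) (13 / 10) + Real.log 2 / 2 := by
  obtain ⟨φ, hφ, hcos⟩ := exists_half_le_cos_sq (M * (l (23 / 20)).im)
  set F : ℂ → ℂ := fun z => (exp (φ * I) * g z ^ M +
    (starRingEnd ℂ) (exp (φ * I)) * g (1 - z) ^ M) / 2 with hF
  have hω : ‖exp (φ * I)‖ = 1 := norm_exp_ofReal_mul_I φ
  have hFx : ∀ x ∈ Icc (1 / 2 : ℝ) (23 / 20),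
      F x = (Real.exp (M * (l x).re) * Real.cos (M * (l x).im + φ) : ℝ) := by
    intro x hx
    have := half_add_conj_mul_exp φ (M * l x)
    simp only [hF, hsym, hgl x hx]
    rw [← map_pow, ← Complex.exp_nat_mul, this]
    simp
  have hFx' : ∀ x ∈ Icc (1 / 2 : ℝ) (23 / 20),
      F (1 - x) = (Real.exp (M * (l x).re) * Real.cos (M * (l x).im - φ) : ℝ) := by
    intro x hx
    have := half_add_conj_mul_exp (-φ) (M * l x)
    have e : (starRingEnd ℂ) (exp (φ * I)) = exp ((-φ : ℝ) * I) := by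
      rw [← exp_conj]
      simp
    have e' : exp (φ * I) = (starRingEnd ℂ) (exp ((-φ : ℝ) * I)) := by rw [← e, conj_conj]
    simp only [hF, hsym, hgl x hx, sub_sub_cancel]
    rw [← map_pow, ← Complex.exp_nat_mul, e, e', add_comm, this]
    simp [sub_eq_add_neg]
  have hc : (23 / 20 : ℝ) ∈ Icc (1 / 2 : ℝ) (23 / 20) := by norm_num
  have hFc := hFx _ hc
  rw [show ((23 / 20 : ℝ) : ℂ) = 23 / 20 by norm_num] at hFc
  have hcos0 : Real.cos (M * (l (23 / 20)).im + φ) ≠ 0 := fun h => by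
    rw [h] at hcos
    norm_num at hcos
  have hFc0 : F (23 / 20) ≠ 0 := by
    rw [hFc]
    exact_mod_cast mul_ne_zero (Real.exp_ne_zero _) hcos0
  have hFclog : M * (l (23 / 20)).re - Real.log 2 / 2 ≤ Real.log ‖F (23 / 20)‖ := by
    rw [hFc, norm_real, norm_mul, Real.norm_of_nonneg (Real.exp_pos _).le,
      Real.log_mul (Real.exp_ne_zero _) (norm_ne_zero_iff.2 hcos0), Real.log_exp, Real.norm_eq_abs,
      Real.log_abs]
    have := Real.log_le_log (by norm_num) hcos
    rw [Real.log_pow, Real.log_div one_ne_zero two_ne_zero, Real.log_one] at this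
    push_cast at this
    linarith
  obtain ⟨S, hScard, hS⟩ := exists_finset_sin_eq_zero (u := 1 / 2) (v := 23 / 20)
    (A := fun x => M * (l x).im + φ + π / 2) (by norm_num)
    (((continuousOn_const.mul (continuous_im.comp_continuousOn hl)).add_const φ).add_const _)
  have hcosS : ∀ x ∈ S, Real.cos (M * (l x).im + φ) = 0 := fun x hx => by
    have := (hS x hx).2
    rwa [Real.sin_add_pi_div_two] at this
  have hScard' : M * (|(l (23 / 20)).im - (l (1 / 2)).im| / π) - 1 ≤ S.card := by
    refine le_trans (le_of_eq ?_) hScard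
    rw [show M * (l (23 / 20)).im + φ + π / 2 - (M * (l (1 / 2)).im + φ + π / 2) =
      M * ((l (23 / 20)).im - (l (1 / 2)).im) by ring, abs_mul, Nat.abs_cast]
    ring
  classical
  have hinj : Function.Injective fun x : ℝ => (x : ℂ) := ofReal_injective
  have hinj' : Function.Injective fun x : ℝ => ((1 - x : ℝ) : ℂ) := fun x y h => by
    have : 1 - x = 1 - y := ofReal_injective h
    linarith
  have hdisj : Disjoint (S.image fun x : ℝ => (x : ℂ))
      (S.image fun x : ℝ => ((1 - x : ℝ) : ℂ)) := by
    rw [Finset.disjoint_left]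
    intro z hz hz'
    obtain ⟨x, hx, rfl⟩ := Finset.mem_image.1 hz
    obtain ⟨y, hy, hxy⟩ := Finset.mem_image.1 hz'
    have h1 := (hS x hx).1.1
    have h2 := (hS y hy).1.1
    have : 1 - y = x := ofReal_injective hxy
    linarith
  have hdist : ∀ x : ℝ, ‖(23 / 20 : ℂ) - x‖ = |23 / 20 - x| := fun x => by
    rw [show (23 / 20 : ℂ) - x = ((23 / 20 - x : ℝ) : ℂ) by push_cast; ring, norm_real,
      Real.norm_eq_abs]
  have hball : ∀ x : ℝ, |23 / 20 - x| ≤ 13 / 10 →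
      (x : ℂ) ∈ Metric.closedBall (23 / 20 : ℂ) (13 / 10) := fun x hx => by
    rwa [Metric.mem_closedBall, dist_comm, dist_eq_norm, hdist]
  have hFan : AnalyticOnNhd ℂ F (Metric.closedBall (23 / 20) (13 / 10)) := fun z hz =>
    ((analyticAt_const.mul ((hg z hz).pow M)).add
      (analyticAt_const.mul ((hg' z hz).pow M))).div_const
  have key := sum_log_le_circleAverage (B := fun z => (M : ℝ) * B z) (by norm_num) hFan hFc0
    (hB.const_fun_smul (a := (M : ℝ))) (fun z hz => by have := hB0 z hz; positivity) (fun z hz => ?_)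
    (S.image (fun x : ℝ => (x : ℂ)) ∪ S.image fun x : ℝ => ((1 - x : ℝ) : ℂ)) (fun u hu => ?_)
  · rw [Finset.sum_union hdisj, Finset.sum_image hinj.injOn, Finset.sum_image hinj'.injOn,
      ← Finset.sum_add_distrib] at key
    have hpair : ∑ x ∈ S, 2 * Real.log 2 ≤ ∑ x ∈ S, (Real.log (13 / 10 / ‖(23 / 20 : ℂ) - x‖) +
        Real.log (13 / 10 / ‖(23 / 20 : ℂ) - (1 - x : ℝ)‖)) := by
      refine Finset.sum_le_sum fun x hx => ?_
      obtain ⟨h1, h2⟩ := (hS x hx).1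
      rw [hdist, hdist, abs_of_pos (by linarith), abs_of_pos (by linarith),
        ← Real.log_mul (by apply ne_of_gt; apply div_pos <;> linarith)
          (by apply ne_of_gt; apply div_pos <;> linarith), div_mul_div_comm,
        show 2 * Real.log 2 = Real.log (2 ^ 2) by rw [Real.log_pow]; norm_num]
      refine Real.log_le_log (by norm_num) ?_
      rw [le_div_iff₀ (mul_pos (by linarith) (by linarith))]
      nlinarith [sq_nonneg (x - 1 / 2)]
    have havg : Real.circleAverage (fun z => (M : ℝ) * B z) (23 / 20) (13 / 10) =
        M * Real.circleAverage B (23 / 20) (13 / 10) :=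
      Real.circleAverage_fun_smul (a := (M : ℝ)) (f := B)
    rw [Finset.sum_const, nsmul_eq_mul] at hpair
    rw [havg] at key
    have := mul_le_mul_of_nonneg_right hScard' (by positivity : 0 ≤ 2 * Real.log 2)
    linarith
  · simp only [hF]
    rw [norm_div, RCLike.norm_ofNat, div_le_iff₀ (by norm_num), Real.exp_nat_mul]
    refine (norm_add_le _ _).trans ?_
    rw [norm_mul, norm_mul, norm_conj, hω, one_mul, one_mul, norm_pow, norm_pow]
    have h1 := pow_le_pow_left₀ (norm_nonneg _) (hgB z hz) M
    have h2 := pow_le_pow_left₀ (norm_nonneg _) (hgB' z hz) M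
    linarith
  · rcases Finset.mem_union.1 hu with hu | hu
    · obtain ⟨x, hx, rfl⟩ := Finset.mem_image.1 hu
      obtain ⟨h1, h2⟩ := (hS x hx).1
      refine ⟨hball x (abs_le.2 ⟨by linarith, by linarith⟩), ?_⟩
      rw [hFx x ⟨h1.le, h2.le⟩, hcosS x hx]
      simp
    · obtain ⟨x, hx, rfl⟩ := Finset.mem_image.1 hu
      obtain ⟨h1, h2⟩ := (hS x hx).1
      refine ⟨hball (1 - x) (abs_le.2 ⟨by linarith, by linarith⟩), ?_⟩
      rw [ofReal_sub, ofReal_one, hFx' x ⟨h1.le, h2.le⟩, cos_sub_eq_zero hφ (hcosS x hx)]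
      simp

lemma le_of_forall_nat_mul_le {a b C : ℝ} (h : ∀ M : ℕ, M * a ≤ M * b + C) : a ≤ b := by
  by_contra! hab
  obtain ⟨M, hM⟩ := exists_nat_gt (C / (a - b))
  rw [div_lt_iff₀ (by linarith)] at hM
  have := h M
  linarith

lemma backlund {g : ℂ → ℂ} {B : ℂ → ℝ} {l : ℝ → ℂ}
    (hg : AnalyticOnNhd ℂ g (Metric.closedBall (23 / 20) (13 / 10)))
    (hg' : AnalyticOnNhd ℂ (fun z => g (1 - z)) (Metric.closedBall (23 / 20) (13 / 10)))
    (hsym : ∀ x : ℝ, g (1 - x) = (starRingEnd ℂ) (g x))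
    (hl : ContinuousOn l (Icc (1 / 2) (23 / 20)))
    (hgl : ∀ x ∈ Icc (1 / 2 : ℝ) (23 / 20), g x = exp (l x))
    (hB : CircleIntegrable B (23 / 20) (13 / 10))
    (hB0 : ∀ z ∈ Metric.sphere (23 / 20 : ℂ) (13 / 10), 0 ≤ B z)
    (hgB : ∀ z ∈ Metric.sphere (23 / 20 : ℂ) (13 / 10), ‖g z‖ ≤ Real.exp (B z))
    (hgB' : ∀ z ∈ Metric.sphere (23 / 20 : ℂ) (13 / 10), ‖g (1 - z)‖ ≤ Real.exp (B z)) :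
    |(l (23 / 20)).im - (l (1 / 2)).im| / π * (2 * Real.log 2) + (l (23 / 20)).re ≤
      Real.circleAverage B (23 / 20) (13 / 10) := by
  refine le_of_forall_nat_mul_le (C := Real.log 2 / 2 + 2 * Real.log 2) fun M => ?_
  have := backlund_pow hg hg' hsym hl hgl hB hB0 hgB hgB' M
  linarith

end ZetaZeroCount

namespace ZetaZeroCount

open Complex Set Topology

/-! ### The argument principle for a rectangle -/

/-- The boundary of the rectangle `[a, b] × [p, q]`. -/
def rectBoundary (a b p q : ℝ) : Set ℂ :=
  {s | s.re ∈ Icc a b ∧ s.im ∈ Icc p q ∧ (s.re = a ∨ s.re = b ∨ s.im = p ∨ s.im = q)}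

/-- The integral along the boundary of the rectangle `[a, b] × [p, q]`, counterclockwise. -/
noncomputable def rectIntegral (f : ℂ → ℂ) (a b p q : ℝ) : ℂ :=
  (∫ x : ℝ in a..b, f (x + p * I)) - (∫ x : ℝ in a..b, f (x + q * I)) +
    I * (∫ y : ℝ in p..q, f (b + y * I)) - I * (∫ y : ℝ in p..q, f (a + y * I))

variable {a b p q : ℝ}

lemma intervalIntegrable_of_continuousOn_rectBoundary {f : ℂ → ℂ} (hab : a ≤ b) (hpq : p ≤ q)
    (hf : ContinuousOn f (rectBoundary a b p q)) :
    (IntervalIntegrable (fun x : ℝ => f (x + p * I)) volume a b ∧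
      IntervalIntegrable (fun x : ℝ => f (x + q * I)) volume a b) ∧
    IntervalIntegrable (fun y : ℝ => f (b + y * I)) volume p q ∧
      IntervalIntegrable (fun y : ℝ => f (a + y * I)) volume p q := by
  refine ⟨⟨?_, ?_⟩, ?_, ?_⟩ <;>
  · refine ContinuousOn.intervalIntegrable (hf.comp (by fun_prop) fun x hx => ?_)
    first
    | rw [uIcc_of_le hab] at hx
      simpa [rectBoundary, hab, hpq] using hx
    | rw [uIcc_of_le hpq] at hx
      simpa [rectBoundary, hab, hpq] using hx

lemma rectIntegral_add {f g : ℂ → ℂ} (hab : a ≤ b) (hpq : p ≤ q)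
    (hf : ContinuousOn f (rectBoundary a b p q)) (hg : ContinuousOn g (rectBoundary a b p q)) :
    rectIntegral (fun s => f s + g s) a b p q = rectIntegral f a b p q + rectIntegral g a b p q := by
  obtain ⟨⟨f1, f2⟩, f3, f4⟩ := intervalIntegrable_of_continuousOn_rectBoundary hab hpq hf
  obtain ⟨⟨g1, g2⟩, g3, g4⟩ := intervalIntegrable_of_continuousOn_rectBoundary hab hpq hg
  simp only [rectIntegral, intervalIntegral.integral_add f1 g1, intervalIntegral.integral_add f2 g2,
    intervalIntegral.integral_add f3 g3, intervalIntegral.integral_add f4 g4]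
  ring

lemma rectIntegral_const_mul (c : ℂ) (f : ℂ → ℂ) :
    rectIntegral (fun s => c * f s) a b p q = c * rectIntegral f a b p q := by
  simp only [rectIntegral, intervalIntegral.integral_const_mul]
  ring

lemma rectIntegral_congr {f g : ℂ → ℂ} (hab : a ≤ b) (hpq : p ≤ q)
    (h : EqOn f g (rectBoundary a b p q)) : rectIntegral f a b p q = rectIntegral g a b p q := by
  unfold rectIntegral
  congr 1
  · congr 1
    · congr 1 <;>
      · refine intervalIntegral.integral_congr fun x hx => h ?_
        rw [uIcc_of_le hab] at hx
        simpa [rectBoundary, hab, hpq] using hx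
    · congr 1
      refine intervalIntegral.integral_congr fun x hx => h ?_
      rw [uIcc_of_le hpq] at hx
      simpa [rectBoundary, hab, hpq] using hx
  · congr 1
    refine intervalIntegral.integral_congr fun x hx => h ?_
    rw [uIcc_of_le hpq] at hx
    simpa [rectBoundary, hab, hpq] using hx

lemma rectIntegral_eq_zero {f : ℂ → ℂ} (hab : a ≤ b) (hpq : p ≤ q)
    (hf : ∀ s : ℂ, s.re ∈ Icc a b → s.im ∈ Icc p q → DifferentiableAt ℂ f s) :
    rectIntegral f a b p q = 0 := by
  have := Complex.integral_boundary_rect_eq_zero_of_differentiableOn f ⟨a, p⟩ ⟨b, q⟩ ?_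
  · simpa [rectIntegral] using this
  · rintro s ⟨h1, h2⟩
    simp only [mem_preimage, uIcc_of_le hab, uIcc_of_le hpq] at h1 h2
    exact (hf s h1 h2).differentiableWithinAt

lemma integral_inv_horizontal (w : ℂ) (hq : q - w.im ≠ 0) :
    ∫ x : ℝ in a..b, (x + q * I - w)⁻¹ = log (b + q * I - w) - log (a + q * I - w) := by
  have hne : ∀ x : ℝ, (x + q * I - w : ℂ) ∈ slitPlane := fun x => Or.inr (by simpa using hq)
  refine intervalIntegral.integral_eq_sub_of_hasDerivAt
    (f := fun x : ℝ => log (x + q * I - w)) (fun x _ => ?_)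
    (Continuous.intervalIntegrable (Continuous.inv₀ (by fun_prop)
      fun x => slitPlane_ne_zero (hne x)) _ _)
  have h1 : HasDerivAt (fun x : ℝ => (x + q * I - w : ℂ)) 1 x :=
    ((hasDerivAt_id x).ofReal_comp.add_const _).sub_const _
  simpa using h1.clog_real (hne x)

lemma integral_inv_vertical_right (w : ℂ) (hb : 0 < b - w.re) :
    I * ∫ y : ℝ in p..q, (b + y * I - w)⁻¹ = log (b + q * I - w) - log (b + p * I - w) := by
  have hne : ∀ y : ℝ, (b + y * I - w : ℂ) ∈ slitPlane := fun x => Or.inl (by simpa using hb)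
  rw [← intervalIntegral.integral_const_mul]
  refine intervalIntegral.integral_eq_sub_of_hasDerivAt
    (f := fun y : ℝ => log (b + y * I - w)) (fun y _ => ?_)
    (Continuous.intervalIntegrable (continuous_const.mul (Continuous.inv₀ (by fun_prop)
      fun x => slitPlane_ne_zero (hne x))) _ _)
  have h1 : HasDerivAt (fun y : ℝ => (b + y * I - w : ℂ)) I y := by
    simpa using (((hasDerivAt_id y).ofReal_comp.mul_const I).const_add (b : ℂ)).sub_const w
  simpa [div_eq_mul_inv] using h1.clog_real (hne y)

lemma rectIntegral_inv_sub {w : ℂ} (ha : a < w.re) (hb : w.re < b) (hp : p < w.im)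
    (hq : w.im < q) : rectIntegral (fun s => (s - w)⁻¹) a b p q = 2 * π * I := by
  have hleft : I * ∫ y : ℝ in p..q, (a + y * I - w)⁻¹ =
      log (-(a + q * I - w)) - log (-(a + p * I - w)) := by
    have hne : ∀ y : ℝ, -(a + y * I - w : ℂ) ∈ slitPlane := fun x => Or.inl (by simpa using ha)
    have h0 : ∀ y : ℝ, (a + y * I - w : ℂ) ≠ 0 :=
      fun y => neg_ne_zero.1 (slitPlane_ne_zero (hne y))
    rw [← intervalIntegral.integral_const_mul]
    refine intervalIntegral.integral_eq_sub_of_hasDerivAt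
      (f := fun y : ℝ => log (-(a + y * I - w))) (fun y _ => ?_)
      (Continuous.intervalIntegrable (continuous_const.mul (Continuous.inv₀ (by fun_prop) h0)) _ _)
    have h1 : HasDerivAt (fun y : ℝ => -(a + y * I - w : ℂ)) (-I) y := by
      simpa using
        ((((hasDerivAt_id y).ofReal_comp.mul_const I).const_add (a : ℂ)).sub_const w).fun_neg
    have h2 := h1.clog_real (hne y)
    rwa [neg_div_neg_eq, div_eq_mul_inv] at h2
  have l1 : log (-(a + q * I - w)) = log (a + q * I - w) - π * I := by
    rw [log, log, norm_neg, arg_neg_eq_arg_sub_pi_of_im_pos (by simpa using hq)]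
    push_cast
    ring
  have l2 : log (-(a + p * I - w)) = log (a + p * I - w) + π * I := by
    rw [log, log, norm_neg, arg_neg_eq_arg_add_pi_of_im_neg (by simpa using hp)]
    push_cast
    ring
  rw [rectIntegral, integral_inv_horizontal w (by linarith), integral_inv_horizontal w (by linarith),
    integral_inv_vertical_right w (by linarith), hleft, l1, l2]
  ring

lemma exists_factorization {F : ℂ → ℂ} (hF : Differentiable ℂ F) (m : ℂ → ℕ) (Z : Finset ℂ)
    (hZ : ∀ ρ ∈ Z, ∃ g : ℂ → ℂ, AnalyticAt ℂ g ρ ∧ g ρ ≠ 0 ∧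
      ∀ᶠ z in 𝓝 ρ, F z = (z - ρ) ^ m ρ * g z) :
    ∃ h : ℂ → ℂ, Differentiable ℂ h ∧ (∀ s, F s = (∏ ρ ∈ Z, (s - ρ) ^ m ρ) * h s) ∧
      ∀ ρ ∈ Z, h ρ ≠ 0 := by
  classical
  induction Z using Finset.induction_on with
  | empty => exact ⟨F, hF, by simp, by simp⟩
  | insert w Z hw ih =>
    obtain ⟨h, hd, hFh, hh⟩ := ih fun ρ hρ => hZ ρ (Finset.mem_insert_of_mem hρ)
    obtain ⟨g, hg, hg0, hFg⟩ := hZ w (Finset.mem_insert_self w Z)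
    set P : ℂ → ℂ := fun s => ∏ ρ ∈ Z, (s - ρ) ^ m ρ with hP
    have hPd : Differentiable ℂ P := by fun_prop
    have hPw : P w ≠ 0 := Finset.prod_ne_zero_iff.2 fun ρ hρ =>
      pow_ne_zero _ (sub_ne_zero.2 fun e => hw (e ▸ hρ))
    set k := Function.update (fun s => h s / (s - w) ^ m w) w (g w / P w) with hk
    have hkw : ∀ s, s ≠ w → k s = h s / (s - w) ^ m w := fun s hs => Function.update_of_ne hs _ _
    have hkg : k =ᶠ[𝓝 w] fun s => g s / P s := by
      filter_upwards [hFg, hPd.continuous.continuousAt.eventually_ne hPw] with s hs hPs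
      rcases eq_or_ne s w with rfl | hsw
      · simp [hk]
      · have h1 : (s - w) ^ m w ≠ 0 := pow_ne_zero _ (sub_ne_zero.2 hsw)
        rw [hkw s hsw, div_eq_div_iff h1 hPs, mul_comm (h s), ← hFh s, hs, mul_comm]
    refine ⟨k, fun s => ?_, fun s => ?_, fun ρ hρ => ?_⟩
    · rcases eq_or_ne s w with rfl | hsw
      · exact (hg.differentiableAt.div (hPd s) hPw).congr_of_eventuallyEq hkg
      · have h1 : (s - w) ^ m w ≠ 0 := pow_ne_zero _ (sub_ne_zero.2 hsw)
        have h2 : k =ᶠ[𝓝 s] fun s => h s / (s - w) ^ m w := by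
          filter_upwards [eventually_ne_nhds hsw] with z hz using hkw z hz
        exact ((hd s).fun_div (by fun_prop) h1).congr_of_eventuallyEq h2
    · rw [Finset.prod_insert hw]
      rcases eq_or_ne s w with rfl | hsw
      · rw [hFg.self_of_nhds]
        simp only [hk, Function.update_self]
        have : P s ≠ 0 := hPw
        change _ = (s - s) ^ m s * P s * (g s / P s)
        field_simp
      · have h1 : (s - w) ^ m w ≠ 0 := pow_ne_zero _ (sub_ne_zero.2 hsw)
        rw [hFh s, hkw s hsw]
        field_simp
    · rcases Finset.mem_insert.1 hρ with rfl | hρ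
      · simp only [hk, Function.update_self]
        exact div_ne_zero hg0 hPw
      · have hρw : ρ ≠ w := fun e => hw (e ▸ hρ)
        rw [hkw ρ hρw]
        exact div_ne_zero (hh ρ hρ) (pow_ne_zero _ (sub_ne_zero.2 hρw))

lemma rectIntegral_sum_inv_sub_add {H : ℂ → ℂ} (hab : a ≤ b) (hpq : p ≤ q)
    (hH : ContinuousOn H (rectBoundary a b p q)) (m : ℂ → ℕ) (Z : Finset ℂ)
    (hZ : ∀ ρ ∈ Z, (a < ρ.re ∧ ρ.re < b) ∧ p < ρ.im ∧ ρ.im < q) :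
    rectIntegral (fun s => ∑ ρ ∈ Z, (m ρ : ℂ) * (s - ρ)⁻¹ + H s) a b p q =
      2 * π * I * ∑ ρ ∈ Z, (m ρ : ℂ) + rectIntegral H a b p q := by
  classical
  have hcont : ∀ ρ ∈ Z, ContinuousOn (fun s => (m ρ : ℂ) * (s - ρ)⁻¹) (rectBoundary a b p q) := by
    intro ρ hρ
    refine continuousOn_const.mul (ContinuousOn.inv₀ (by fun_prop) fun s hs h => ?_)
    obtain ⟨⟨h1, h2⟩, h3, h4⟩ := hZ ρ hρ
    obtain rfl := sub_eq_zero.1 h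
    rcases hs.2.2 with h | h | h | h <;> linarith
  induction Z using Finset.induction_on with
  | empty => simp
  | insert w Z hw ih =>
    have hsub : ∀ ρ ∈ Z, ρ ∈ insert w Z := fun ρ hρ => Finset.mem_insert_of_mem hρ
    obtain ⟨⟨h1, h2⟩, h3, h4⟩ := hZ w (Finset.mem_insert_self w Z)
    simp only [Finset.sum_insert hw, add_assoc]
    rw [rectIntegral_add hab hpq (hcont w (Finset.mem_insert_self w Z))
      ((continuousOn_finsetSum _ fun ρ hρ => hcont ρ (hsub ρ hρ)).fun_add hH),
      ih (fun ρ hρ => hZ ρ (hsub ρ hρ)) (fun ρ hρ => hcont ρ (hsub ρ hρ)),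
      rectIntegral_const_mul, rectIntegral_inv_sub h1 h2 h3 h4]
    ring

lemma rectIntegral_logDeriv {F : ℂ → ℂ} (hF : Differentiable ℂ F) (hab : a ≤ b) (hpq : p ≤ q)
    (m : ℂ → ℕ) (Z : Finset ℂ)
    (hZ : ∀ ρ ∈ Z, ∃ g : ℂ → ℂ, AnalyticAt ℂ g ρ ∧ g ρ ≠ 0 ∧
      ∀ᶠ z in 𝓝 ρ, F z = (z - ρ) ^ m ρ * g z)
    (hZ' : ∀ ρ ∈ Z, (a < ρ.re ∧ ρ.re < b) ∧ p < ρ.im ∧ ρ.im < q)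
    (hzero : ∀ s : ℂ, s.re ∈ Icc a b → s.im ∈ Icc p q → F s = 0 → s ∈ Z) :
    rectIntegral (logDeriv F) a b p q = 2 * π * I * ∑ ρ ∈ Z, (m ρ : ℂ) := by
  obtain ⟨h, hd, hFh, hh⟩ := exists_factorization hF m Z hZ
  have hh0 : ∀ s : ℂ, s.re ∈ Icc a b → s.im ∈ Icc p q → h s ≠ 0 := by
    intro s h1 h2 h0
    exact hh s (hzero s h1 h2 (by rw [hFh, h0, mul_zero])) h0
  have hlog : ∀ s : ℂ, s.re ∈ Icc a b → s.im ∈ Icc p q → DifferentiableAt ℂ (logDeriv h) s := by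
    intro s h1 h2
    exact ((hd.analyticAt s).deriv.differentiableAt).div (hd s) (hh0 s h1 h2)
  have hEq : EqOn (logDeriv F) (fun s => ∑ ρ ∈ Z, (m ρ : ℂ) * (s - ρ)⁻¹ + logDeriv h s)
      (rectBoundary a b p q) := by
    intro s hs
    have hne : ∀ ρ ∈ Z, s - ρ ≠ 0 := by
      intro ρ hρ e
      obtain ⟨⟨h1, h2⟩, h3, h4⟩ := hZ' ρ hρ
      obtain rfl := sub_eq_zero.1 e
      rcases hs.2.2 with h | h | h | h <;> linarith
    have hF' : F = fun s => (∏ ρ ∈ Z, (s - ρ) ^ m ρ) * h s := funext hFh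
    rw [hF', logDeriv_mul s (Finset.prod_ne_zero_iff.2 fun ρ hρ => pow_ne_zero _ (hne ρ hρ))
      (hh0 s hs.1 hs.2.1) (by fun_prop) (hd s),
      logDeriv_prod (f := fun ρ s => (s - ρ) ^ m ρ)
      (fun ρ hρ => pow_ne_zero _ (hne ρ hρ)) (fun ρ _ => by fun_prop)]
    simp only
    congr 1
    refine Finset.sum_congr rfl fun ρ hρ => ?_
    rw [logDeriv_fun_pow (by fun_prop)]
    congr 1
    rw [logDeriv_apply]
    simp
  rw [rectIntegral_congr hab hpq hEq, rectIntegral_sum_inv_sub_add hab hpq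
    (fun s hs => (hlog s hs.1 hs.2.1).continuousAt.continuousWithinAt) m Z hZ',
    rectIntegral_eq_zero hab hpq hlog, add_zero]

end ZetaZeroCount

namespace ZetaZeroCount

open Complex Set Topology

/-! ### The number of zeros in terms of a continuous argument -/

lemma logDeriv_xi_one_sub (s : ℂ) : logDeriv xi (1 - s) = -logDeriv xi s := by
  have h : deriv (fun z => xi (1 - z)) s = deriv xi s := by simp_rw [xi_one_sub]
  rw [deriv_comp_const_sub] at h
  rw [logDeriv_apply, logDeriv_apply, xi_one_sub, ← h, neg_div, neg_neg]

open ComplexConjugate in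
lemma logDeriv_xi_one_sub_conj (s : ℂ) : logDeriv xi (1 - conj s) = -conj (logDeriv xi s) := by
  have h2 : deriv xi (conj s) = conj (deriv xi s) := by
    have h := congrFun (deriv_conj_conj (f := xi)) (conj s)
    have e : conj ∘ xi ∘ conj = xi := funext fun z => by simp [xi_conj]
    rw [e] at h
    simpa using h
  rw [logDeriv_xi_one_sub, logDeriv_apply, logDeriv_apply, h2, xi_conj, map_div₀]

lemma pi_mul_eq_of_rectIntegral_logDeriv_xi {c T : ℝ} {n : ℂ}
    (hT : ∀ x : ℝ, xi (x + T * I) ≠ 0)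
    (h : rectIntegral (logDeriv xi) (1 - c) c 0 T = 2 * π * I * n) :
    π * n = ((∫ y : ℝ in 0..T, logDeriv xi (c + y * I)).re -
      (∫ x : ℝ in (1 / 2)..c, logDeriv xi (x + T * I)).im : ℝ) := by
  have hsym : ∀ x y : ℝ, logDeriv xi ((1 - x : ℝ) + y * I) =
      -(starRingEnd ℂ) (logDeriv xi (x + y * I)) := by
    intro x y
    rw [← logDeriv_xi_one_sub_conj]
    congr 1
    simp
    ring
  have hbot : ∫ x : ℝ in (1 - c)..c, logDeriv xi (x + (0 : ℝ) * I) = 0 := by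
    have h1 := intervalIntegral.integral_comp_sub_left
      (a := 1 - c) (b := c) (fun x : ℝ => logDeriv xi (x + (0 : ℝ) * I)) 1
    have h2 : ∀ x : ℝ, logDeriv xi ((1 - x : ℝ) + (0 : ℝ) * I) =
        -logDeriv xi (x + (0 : ℝ) * I) := by
      intro x
      simpa using logDeriv_xi_one_sub x
    simp_rw [h2, sub_sub_cancel] at h1
    rw [intervalIntegral.integral_neg] at h1
    exact self_eq_neg.1 h1.symm
  have hcont : Continuous fun x : ℝ => logDeriv xi (x + T * I) :=
    Continuous.div ((differentiable_xi.contDiff.continuous_deriv (n := 1) le_rfl).comp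
      (by fun_prop)) (differentiable_xi.continuous.comp (by fun_prop)) hT
  set W := ∫ x : ℝ in (1 / 2)..c, logDeriv xi (x + T * I)
  set V := ∫ y : ℝ in 0..T, logDeriv xi (c + y * I)
  have htop : ∫ x : ℝ in (1 - c)..c, logDeriv xi (x + T * I) = W - (starRingEnd ℂ) W := by
    rw [← intervalIntegral.integral_add_adjacent_intervals (b := 1 / 2)
      (hcont.intervalIntegrable _ _) (hcont.intervalIntegrable _ _)]
    have h1 := intervalIntegral.integral_comp_sub_left
      (a := 1 / 2) (b := c) (fun x : ℝ => logDeriv xi (x + T * I)) 1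
    rw [show (1 - 1 / 2 : ℝ) = 1 / 2 by norm_num] at h1
    simp_rw [hsym] at h1
    rw [← h1, intervalIntegral.integral_neg, intervalIntegral.intervalIntegral_conj]
    ring
  have hleft : ∫ y : ℝ in 0..T, logDeriv xi ((1 - c : ℝ) + y * I) = -(starRingEnd ℂ) V := by
    simp_rw [hsym]
    rw [intervalIntegral.integral_neg, intervalIntegral.intervalIntegral_conj]
  rw [rectIntegral, hbot, htop, hleft, sub_conj, mul_neg, sub_neg_eq_add, add_assoc, ← mul_add,
    add_conj] at h
  have h' : (2 * I) * (π * n) = (2 * I) * ((V.re - W.im : ℝ) : ℂ) := by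
    push_cast at h ⊢
    linear_combination -h
  exact mul_left_cancel₀ (by simp) h'

/-- The branch of the logarithm of `xi` on the half plane `1 < re s`. -/
noncomputable def logXi (s : ℂ) : ℂ :=
  logRotatedZeta s + (log s + log (s - 1) + π / 4 * (s - 1 / 2) * I)

lemma exp_logXi {s : ℂ} (hs : 1 < s.re) : exp (logXi s) = xi s := by
  have hs0 : s ≠ 0 := fun h => by simp [h] at hs; linarith
  have hs1 : s - 1 ≠ 0 := fun h => by simp [sub_eq_zero.1 h] at hs
  rw [logXi, Complex.exp_add, Complex.exp_add, Complex.exp_add, exp_log hs0, exp_log hs1,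
    exp_logRotatedZeta hs, rotatedZeta, Complex.exp_neg]
  field_simp

lemma hasDerivAt_logXi {s : ℂ} (hs : 1 < s.re) : HasDerivAt logXi (logDeriv xi s) s := by
  have hd : DifferentiableAt ℂ logXi s := by
    have h1 := differentiableAt_logRotatedZeta hs
    have h2 : s ∈ slitPlane := Or.inl (by linarith)
    have h3 : s - 1 ∈ slitPlane := Or.inl (by simpa using hs)
    unfold logXi
    fun_prop (disch := assumption)
  have h1 := hd.hasDerivAt.cexp
  have h2 : xi =ᶠ[𝓝 s] fun z => exp (logXi z) := by
    filter_upwards [(isOpen_lt continuous_const continuous_re).mem_nhds hs] with z hz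
      using (exp_logXi hz).symm
  have h3 := h1.congr_of_eventuallyEq h2
  have e : logDeriv xi s = deriv logXi s := by
    rw [logDeriv_apply, h3.deriv, exp_logXi hs,
      mul_div_cancel_left₀ _ (xi_ne_zero_of_one_le_re hs.le)]
  rw [e]
  exact hd.hasDerivAt

lemma im_logXi (s : ℂ) : (logXi s).im =
    (logRotatedZeta s).im + arg s + arg (s - 1) + π / 4 * (s.re - 1 / 2) := by
  simp [logXi, log_im]
  ring

lemma im_logXi_ofReal : (logXi ((23 / 20 : ℝ) : ℂ)).im = 0 := by
  have hre : 1 < ((23 / 20 : ℝ) : ℂ).re := by rw [ofReal_re]; norm_num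
  have h1 := exp_logXi hre
  have h2 : (xi ((23 / 20 : ℝ) : ℂ)).im = 0 := by
    rw [← conj_eq_iff_im, ← xi_conj, conj_ofReal]
  rw [← h1, exp_im, mul_eq_zero, or_iff_right (Real.exp_ne_zero _)] at h2
  have h3 : |(logXi ((23 / 20 : ℝ) : ℂ)).im| < π := by
    have e : (logXi ((23 / 20 : ℝ) : ℂ)).im =
        (stirlingRemainder (((23 / 20 : ℝ) : ℂ) / 2)).im + (logZeta ((23 / 20 : ℝ) : ℂ)).im := by
      rw [im_logXi, im_logRotatedZeta hre, arg_ofReal_of_nonneg (by norm_num),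
        show ((23 / 20 : ℝ) : ℂ) - 1 = ((3 / 20 : ℝ) : ℂ) by push_cast; ring,
        arg_ofReal_of_nonneg (by norm_num)]
      simp
      ring
    have a1 := (abs_im_le_norm _).trans (norm_logZeta_le hre)
    have a2 := (abs_im_le_norm _).trans
      (norm_stirlingRemainder_le (z := ((23 / 20 : ℝ) : ℂ) / 2) (by simp))
    rw [div_ofNat_re, ofReal_re] at a2
    rw [ofReal_re] at a1
    rw [e]
    refine (abs_add_le _ _).trans_lt ?_
    linarith [logZetaReal_le_two, Real.pi_gt_three]
  rw [abs_lt] at h3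
  exact (Real.sin_eq_zero_iff_of_lt_of_lt h3.1 h3.2).1 h2

lemma arg_add_arg_critical {T : ℝ} (hT : 0 < T) :
    arg ((1 / 2 : ℝ) + T * I) + arg ((1 / 2 : ℝ) + T * I - 1) = π := by
  set z : ℂ := (1 / 2 : ℝ) + T * I with hz
  have e : z - 1 = -(starRingEnd ℂ) z := by
    rw [hz]
    simp [map_ofNat]
    ring
  have him : z.im = T := by simp [hz]
  have harg : arg z ≠ π := fun h => by
    have := (arg_eq_pi_iff.1 h).2
    linarith
  rw [e, arg_neg_eq_arg_add_pi_of_im_neg (by simp [him, hT]), arg_conj, if_neg harg]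
  ring

/-- If `xi` has no zero of imaginary part `T`, then along this line `rotatedZeta` has a continuous
logarithm extending `logRotatedZeta`, whose imaginary part on the critical line counts zeros. -/
lemma exists_log_rotatedZeta {T : ℝ} (hT0 : 0 < T) (hT : ∀ x : ℝ, xi (x + T * I) ≠ 0)
    {n : ℝ} (h : rectIntegral (logDeriv xi) (1 - 23 / 20) (23 / 20) 0 T = 2 * π * I * n) :
    ∃ l : ℝ → ℂ, Continuous l ∧ (∀ x : ℝ, rotatedZeta (x + T * I) = exp (l x)) ∧
      l (23 / 20) = logRotatedZeta ((23 / 20 : ℝ) + T * I) ∧ (l (1 / 2)).im = π * (n - 1) := by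
  have hcont : Continuous fun x : ℝ => logDeriv xi (x + T * I) :=
    Continuous.div ((differentiable_xi.contDiff.continuous_deriv (n := 1) le_rfl).comp
      (by fun_prop)) (differentiable_xi.continuous.comp (by fun_prop)) hT
  set c : ℝ := 23 / 20 with hc
  set w : ℝ → ℂ := fun x => logXi (c + T * I) + ∫ u in c..x, logDeriv xi (u + T * I) with hw
  have hwd : ∀ x : ℝ, HasDerivAt w (logDeriv xi (x + T * I)) x := fun x =>
    (intervalIntegral.integral_hasDerivAt_right (hcont.intervalIntegrable _ _)
      (hcont.stronglyMeasurableAtFilter _ _) hcont.continuousAt).const_add _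
  have hcre : 1 < ((c : ℂ) + T * I).re := by simp [hc]; norm_num
  have hwc : w c = logXi (c + T * I) := by simp [hw]
  have hwexp : ∀ x : ℝ, xi (x + T * I) = exp (w x) := by
    have hline : ∀ x : ℝ, HasDerivAt (fun x : ℝ => (x : ℂ) + T * I) 1 x := fun x =>
      (hasDerivAt_id x).ofReal_comp.add_const _
    have hd : ∀ x : ℝ, HasDerivAt (fun x : ℝ => xi (x + T * I) * exp (-w x)) 0 x := by
      intro x
      have h1 : HasDerivAt (fun x : ℝ => xi (x + T * I)) (deriv xi (x + T * I) * 1) x :=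
        HasDerivAt.comp (h := fun x : ℝ => (x : ℂ) + T * I) x
          (differentiable_xi _).hasDerivAt (hline x)
      convert! h1.mul (hwd x).neg.cexp using 1
      rw [logDeriv_apply]
      field_simp [hT x]
      ring
    have hconst := is_const_of_deriv_eq_zero (fun x => (hd x).differentiableAt)
      (fun x => (hd x).deriv)
    intro x
    have h1 := hconst x c
    simp only [hwc] at h1
    rw [← exp_logXi hcre, ← Complex.exp_add, add_neg_cancel, Complex.exp_zero,
      Complex.exp_neg] at h1
    exact (mul_inv_eq_one₀ (exp_ne_zero _)).1 h1
  have him : (w (1 / 2)).im = π * n := by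
    have hV : ∫ y : ℝ in 0..T, logDeriv xi (c + y * I) * I =
        logXi (c + T * I) - logXi (c + (0 : ℝ) * I) := by
      have hcd : Continuous fun y : ℝ => logDeriv xi (c + y * I) * I :=
        Continuous.mul (Continuous.div
          ((differentiable_xi.contDiff.continuous_deriv (n := 1) le_rfl).comp (by fun_prop))
          (differentiable_xi.continuous.comp (by fun_prop))
          fun y => xi_ne_zero_of_one_le_re (by simp [hc]; norm_num)) continuous_const
      refine intervalIntegral.integral_eq_sub_of_hasDerivAt
        (f := fun y : ℝ => logXi (c + y * I)) (fun y _ => ?_)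
        (hcd.intervalIntegrable _ _)
      have hline : HasDerivAt (fun y : ℝ => (c : ℂ) + y * I) (1 * I) y :=
        ((hasDerivAt_id y).ofReal_comp.mul_const I).const_add _
      rw [one_mul] at hline
      exact HasDerivAt.comp (h := fun y : ℝ => (c : ℂ) + y * I) y
        (hasDerivAt_logXi (by simp [hc]; norm_num)) hline
    have h1 := pi_mul_eq_of_rectIntegral_logDeriv_xi hT h
    rw [intervalIntegral.integral_mul_const] at hV
    have h2 := congrArg im hV
    rw [mul_I_im, sub_im, ofReal_zero, zero_mul, add_zero, hc, im_logXi_ofReal, sub_zero,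
      ← hc] at h2
    rw [h2] at h1
    have h3 : π * n = (logXi (c + T * I)).im -
      (∫ x : ℝ in (1 / 2)..c, logDeriv xi (x + T * I)).im := by exact_mod_cast h1
    rw [h3, hw, intervalIntegral.integral_symm, add_im, neg_im, sub_neg_eq_add]
  have hslit : ∀ x : ℝ, (x : ℂ) + T * I ∈ slitPlane := fun x => Or.inr (by simp [hT0.ne'])
  have hslit' : ∀ x : ℝ, (x : ℂ) + T * I - 1 ∈ slitPlane := fun x => Or.inr (by simp [hT0.ne'])
  refine ⟨fun x => w x - (log (x + T * I) + log (x + T * I - 1) +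
    π / 4 * (x + T * I - 1 / 2) * I), ?_, fun x => ?_, ?_, ?_⟩
  · have hwcont : Continuous w := continuous_iff_continuousAt.2 fun x => (hwd x).continuousAt
    exact hwcont.sub (((Continuous.clog (by fun_prop) hslit).add
      (Continuous.clog (by fun_prop) hslit')).add (by fun_prop))
  · rw [Complex.exp_sub, ← hwexp, Complex.exp_add, Complex.exp_add,
      exp_log (slitPlane_ne_zero (hslit x)), exp_log (slitPlane_ne_zero (hslit' x)), rotatedZeta,
      Complex.exp_neg, ← div_eq_mul_inv, div_div]
  · simp only [hwc, logXi, add_sub_cancel_right]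
  · have h1 := arg_add_arg_critical hT0
    simp only [sub_im, him, add_im, log_im, h1]
    simp
    ring

end ZetaZeroCount

namespace ZetaZeroCount

open Complex Set Topology

/-! ### Bounding the argument variation -/

lemma norm_rotatedZeta_add_mul_I_le_exp {z : ℂ} {T : ℝ} (hT : 12 ≤ T)
    (hz : ‖z - 23 / 20‖ ≤ 13 / 10) :
    ‖rotatedZeta (z + T * I)‖ ≤ Real.exp (9 / 4 + Real.log 2 / 2 +
      3 / 40 * Real.log ((T + 34 / 25) / (2 * π)) + max 0 ((z.re - 23 / 20) / (13 / 10)) *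
        (13 / 20 * Real.log ((T + 34 / 25) / (2 * π)) - 3 / 2)) := by
  have hre := abs_le.1 ((abs_re_le_norm _).trans hz)
  have him := abs_le.1 ((abs_im_le_norm _).trans hz)
  have e1 : (z - 23 / 20).re = z.re - 23 / 20 := by simp
  have e2 : (z - 23 / 20).im = z.im := by simp
  rw [e1] at hre
  rw [e2] at him
  have e3 : (z + T * I).re = z.re := by simp
  have e4 : (z + T * I).im = z.im + T := by simp
  have hnorm : ‖z + T * I‖ ≤ T + 34 / 25 := by
    have h1 : ‖((23 / 20 : ℝ) : ℂ) + T * I‖ ≤ T + 3 / 50 := by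
      rw [norm_add_mul_I]
      exact Real.sqrt_le_iff.2 ⟨by linarith, by nlinarith⟩
    calc ‖z + T * I‖ = ‖(z - 23 / 20) + (((23 / 20 : ℝ) : ℂ) + T * I)‖ := by
          congr 1; push_cast; ring
      _ ≤ 13 / 10 + (T + 3 / 50) := (norm_add_le _ _).trans (add_le_add hz h1)
      _ = T + 34 / 25 := by ring
  have h := norm_rotatedZeta_le_exp (s := z + T * I) (by rw [e3]; linarith [hre.1])
    (by rw [e3]; linarith [hre.2]) (by rw [e4]; linarith [him.1]) hnorm
  rwa [e3] at h

lemma abs_im_logRotatedZeta_sub_count_le {T n : ℝ} (hT : 12 ≤ T)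
    (hne : ∀ x : ℝ, xi (x + T * I) ≠ 0)
    (h : rectIntegral (logDeriv xi) (1 - 23 / 20) (23 / 20) 0 T = 2 * π * I * n) :
    |(logRotatedZeta ((23 / 20 : ℝ) + T * I)).im - π * (n - 1)| / π * (2 * Real.log 2) +
      (logRotatedZeta ((23 / 20 : ℝ) + T * I)).re ≤
    9 / 4 + Real.log 2 / 2 + 3 / 40 * Real.log ((T + 34 / 25) / (2 * π)) +
      (13 / 20 * Real.log ((T + 34 / 25) / (2 * π)) - 3 / 2) / π := by
  obtain ⟨l, hlc, hl, hl1, hl2⟩ := exists_log_rotatedZeta (by linarith) hne h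
  set L := Real.log ((T + 34 / 25) / (2 * π)) with hL
  have hL0 : 0 ≤ L := Real.log_nonneg <| by
    rw [le_div_iff₀ (by positivity)]
    linarith [Real.pi_lt_four]
  have hlog2 : 0 < Real.log 2 := Real.log_pos one_lt_two
  have hconj : ∀ z : ℂ, rotatedZeta (1 - z + T * I) =
      (starRingEnd ℂ) (rotatedZeta ((starRingEnd ℂ) z + T * I)) := by
    intro z
    rw [← rotatedZeta_one_sub_conj]
    congr 1
    simp
    ring
  have hdiff : ∀ z : ℂ, z.im ≠ 0 → DifferentiableAt ℂ rotatedZeta z := fun z hz =>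
    differentiableAt_rotatedZeta (fun h => hz (by simp [h])) (fun h => hz (by simp [h]))
  have hball : ∀ z ∈ Metric.closedBall (23 / 20 : ℂ) (13 / 10), |z.im| < T := by
    intro z hz
    have h1 := (abs_im_le_norm _).trans (mem_closedBall_iff_norm.1 hz)
    have e2 : (z - 23 / 20).im = z.im := by simp
    rw [e2] at h1
    linarith
  have hopen : IsOpen {z : ℂ | |z.im| < T} := isOpen_lt (by fun_prop) continuous_const
  have hana : AnalyticOnNhd ℂ (fun z => rotatedZeta (z + T * I)) {z : ℂ | |z.im| < T} := by
    refine DifferentiableOn.analyticOnNhd (fun z hz => ?_) hopen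
    refine (DifferentiableAt.fun_comp' (g := rotatedZeta) z (hdiff _ ?_)
      (by fun_prop)).differentiableWithinAt
    have := (abs_lt.1 (mem_ofPred_eq ▸ hz)).1
    simp
    linarith
  have hana' : AnalyticOnNhd ℂ (fun z => rotatedZeta (1 - z + T * I)) {z : ℂ | |z.im| < T} := by
    refine DifferentiableOn.analyticOnNhd (fun z hz => ?_) hopen
    refine (DifferentiableAt.fun_comp' (g := rotatedZeta) z (hdiff _ ?_)
      (by fun_prop)).differentiableWithinAt
    have := (abs_lt.1 (mem_ofPred_eq ▸ hz)).2
    simp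
    linarith
  have key := backlund (g := fun z => rotatedZeta (z + T * I)) (l := l)
    (B := fun z => 9 / 4 + Real.log 2 / 2 + 3 / 40 * L +
      max 0 ((z.re - 23 / 20) / (13 / 10)) * (13 / 20 * L - 3 / 2))
    (hana.mono hball) (hana'.mono hball) (fun x => by simpa using hconj x) hlc.continuousOn
    (fun x _ => hl x) (ContinuousOn.circleIntegrable (by norm_num) (by fun_prop)) ?_
    (fun z hz => norm_rotatedZeta_add_mul_I_le_exp hT (mem_sphere_iff_norm.1 hz).le) ?_
  · have havg := circleAverage_add_mul_max_re (9 / 4 + Real.log 2 / 2 + 3 / 40 * L)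
      (13 / 20 * L - 3 / 2) (23 / 20) (R := 13 / 10) (by norm_num)
    rw [show ((23 / 20 : ℝ) : ℂ) = 23 / 20 by push_cast; rfl] at havg
    rw [havg, hl1, hl2] at key
    exact key
  · intro z hz
    have h1 := abs_le.1 ((abs_re_le_norm _).trans (mem_sphere_iff_norm.1 hz).le)
    have e1 : (z - 23 / 20).re = z.re - 23 / 20 := by simp
    rw [e1] at h1
    have h2 : max 0 ((z.re - 23 / 20) / (13 / 10)) ≤ 1 :=
      max_le zero_le_one (by rw [div_le_one (by norm_num)]; exact h1.2)
    have h3 : 0 ≤ max 0 ((z.re - 23 / 20) / (13 / 10)) := le_max_left _ _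
    nlinarith [mul_nonneg h3 hL0]
  · intro z hz
    simp only [hconj, norm_conj]
    have hz' : ‖(starRingEnd ℂ) z - 23 / 20‖ ≤ 13 / 10 := by
      rw [← norm_conj, map_sub, conj_conj]
      simpa [map_ofNat] using (mem_sphere_iff_norm.1 hz).le
    have := norm_rotatedZeta_add_mul_I_le_exp hT hz'
    rwa [conj_re] at this

end ZetaZeroCount

namespace ZetaZeroCount

open Complex Set Topology

/-! ### The explicit estimate for the number of zeros -/

lemma mul_add_mul_le_of_sq_add_sq_le {p q : ℝ} (h : p ^ 2 + q ^ 2 ≤ 4) :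
    7214 / 10000 * p + 3184 / 10000 * q ≤ 8 / 5 := by
  refine (abs_le.1 (abs_le_of_sq_le_sq ?_ (by norm_num))).2
  nlinarith [sq_nonneg (7214 / 10000 * q - 3184 / 10000 * p)]

lemma log_shift_le {T : ℝ} (hT : 0 < T) :
    Real.log ((T + 34 / 25) / (2 * π)) ≤ Real.log (T / (2 * π)) + 34 / 25 / T := by
  have h1 : (T + 34 / 25) / (2 * π) = T / (2 * π) * (1 + 34 / 25 / T) := by field_simp
  rw [h1, Real.log_mul (by positivity) (by positivity)]
  have := Real.log_le_sub_one_of_pos (x := 1 + 34 / 25 / T) (by positivity)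
  linarith

lemma abs_count_sub_le {T n : ℝ} (hT : 12 ≤ T) (hne : ∀ x : ℝ, xi (x + T * I) ≠ 0)
    (h : rectIntegral (logDeriv xi) (1 - 23 / 20) (23 / 20) 0 T = 2 * π * I * n) :
    |n - T / (2 * π) * (Real.log (T / (2 * π)) - 1) - 7 / 8| ≤ 0.15 * Real.log T + 2.8 := by
  have h1 := abs_im_logRotatedZeta_sub_count_le hT hne h
  set s : ℂ := (23 / 20 : ℝ) + T * I with hs
  have hre : s.re = 23 / 20 := by simp [hs]
  have him : s.im = T := by simp [hs]
  have hre1 : 1 < s.re := by rw [hre]; norm_num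
  have hT0 : 0 < T := by linarith
  have h2 := neg_re_logRotatedZeta_le hre1 (by rw [him]; exact hT0)
  have h3 := abs_im_logRotatedZeta_sub_le hre1 (by rw [him]; exact hT0)
  have h4 : ‖logZeta s‖ ≤ 2 := by
    have := norm_logZeta_le hre1
    rw [hre] at this
    exact this.trans logZetaReal_le_two
  have hL := log_shift_le hT0
  rw [hre, him] at h2 h3
  generalize (logRotatedZeta s).im = Y at *
  generalize (logRotatedZeta s).re = X at *
  have h5 : |(logZeta s).re| ^ 2 + |(logZeta s).im| ^ 2 ≤ 4 := by
    rw [sq_abs, sq_abs]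
    have := sq_norm_sub_sq_re (logZeta s)
    nlinarith [norm_nonneg (logZeta s)]
  have h6 := mul_add_mul_le_of_sq_add_sq_le h5
  generalize (logZeta s).re = p at *
  generalize (logZeta s).im = q at *
  have hL0 : Real.log (T / (2 * π)) ≤ Real.log T - 2 * Real.log 2 := by
    rw [Real.log_div hT0.ne' (by positivity), Real.log_mul two_ne_zero Real.pi_ne_zero]
    have := Real.log_le_log zero_lt_two (by linarith [Real.pi_gt_three] : 2 ≤ π)
    linarith
  have hL1 : 0 ≤ Real.log (T / (2 * π)) := Real.log_nonneg <| by
    rw [le_div_iff₀ (by positivity)]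
    linarith [Real.pi_lt_four]
  have hlog2 := Real.log_two_gt_d9
  have hTi : T⁻¹ ≤ 1 / 12 := by
    rw [inv_le_comm₀ hT0 (by norm_num)]
    linarith
  have hTi0 : 0 < T⁻¹ := by positivity
  have hpi1 : 0.3183 ≤ π⁻¹ := by
    rw [le_inv_comm₀ (by norm_num) Real.pi_pos]
    exact Real.pi_lt_d4.le.trans (by norm_num)
  have hpi2 : π⁻¹ ≤ 0.3184 := by
    rw [inv_le_comm₀ Real.pi_pos (by norm_num)]
    refine le_trans (by norm_num) Real.pi_gt_d4.le
  have hpi3 := Real.pi_lt_d4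
  generalize Real.log ((T + 34 / 25) / (2 * π)) = L' at *
  generalize hLdef : Real.log (T / (2 * π)) = L at *
  set D := |Y - π * (n - 1)| / π with hD
  have hD0 : 0 ≤ D := by positivity
  have hDX : D ≤ 0.7214 * (D * (2 * Real.log 2)) := by nlinarith
  have hL2 : π⁻¹ * L' ≤ 0.3184 * L + 0.3184 * (34 / 25 / 12) := by
    have : 34 / 25 / T ≤ 34 / 25 / 12 := by gcongr
    calc π⁻¹ * L' ≤ π⁻¹ * (L + 34 / 25 / 12) := by gcongr; linarith
      _ ≤ 0.3184 * (L + 34 / 25 / 12) := by gcongr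
      _ = _ := by ring
  have hL3 : L' ≤ L + 34 / 25 / 12 := by
    have : 34 / 25 / T ≤ 34 / 25 / 12 := by gcongr
    linarith
  have herr1 : (23 / 20) ^ 3 / (2 * T ^ 2) ≤ (23 / 20) ^ 3 / (2 * 12 ^ 2) := by gcongr
  have herr2 : π / (8 * T) ≤ 3.1416 / (8 * 12) := by gcongr
  have herr3 : ((23 / 20) ^ 2 / 4 + 23 / 20 * (23 / 20 - 1) / 2 + π / 8) / T ≤
      ((23 / 20) ^ 2 / 4 + 23 / 20 * (23 / 20 - 1) / 2 + 3.1416 / 8) / 12 := by gcongr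
  have hD1 : D ≤ 0.7214 * (9 / 4 - 3 / 2 * 0.3183 + 13 / 20 * (0.3184 * L +
      0.3184 * (34 / 25 / 12)) + 3 / 40 * (34 / 25 / 12) + (23 / 20) ^ 3 / (2 * 12 ^ 2) +
      3.1416 / (8 * 12) + |p|) := by
    refine hDX.trans (mul_le_mul_of_nonneg_left ?_ (by norm_num))
    have e : (13 / 20 * L' - 3 / 2) / π = 13 / 20 * (π⁻¹ * L') - 3 / 2 * π⁻¹ := by
      rw [div_eq_mul_inv]; ring
    linarith [neg_abs_le p]
  have htri : |n - T / (2 * π) * (L - 1) - 7 / 8| ≤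
      π⁻¹ * |Y - T / 2 * (L - 1) + π / 8 - q| + π⁻¹ * |q| + D := by
    have e : n - T / (2 * π) * (L - 1) - 7 / 8 =
        π⁻¹ * (Y - T / 2 * (L - 1) + π / 8 - q) + π⁻¹ * q - π⁻¹ * (Y - π * (n - 1)) := by
      field_simp
      ring
    have hpi : |π⁻¹| = π⁻¹ := abs_of_pos (by positivity)
    rw [e]
    refine (abs_sub _ _).trans (add_le_add ((abs_add_le _ _).trans_eq ?_) (le_of_eq ?_))
    · rw [abs_mul, abs_mul, hpi]
    · rw [abs_mul, hpi, hD, div_eq_inv_mul]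
  have hq : π⁻¹ * |q| ≤ 0.3184 * |q| := by gcongr
  have hE : π⁻¹ * |Y - T / 2 * (L - 1) + π / 8 - q| ≤
      0.3184 * (((23 / 20) ^ 2 / 4 + 23 / 20 * (23 / 20 - 1) / 2 + 3.1416 / 8) / 12) :=
    mul_le_mul hpi2 (h3.trans herr3) (abs_nonneg _) (by norm_num)
  linarith

end ZetaZeroCount

namespace ZetaZeroCount

open Complex Set Topology

/-! ### Counting zeros up to a given height -/

/-- The zeros of the zeta function in the critical strip with imaginary part in `(0, T]`. -/
def zerosUpTo (T : ℝ) : Set ℂ :=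
  {ρ | riemannZeta ρ = 0 ∧ 0 < ρ.re ∧ ρ.re < 1 ∧ 0 < ρ.im ∧ ρ.im ≤ T}

lemma finite_zerosUpTo (T : ℝ) : (zerosUpTo T).Finite := by
  refine (IsCompact.inter_riemannZetaZeros_finite
    ((isCompact_Icc (a := (0 : ℝ)) (b := 1)).reProdIm (isCompact_Icc (a := 0) (b := T)))).subset ?_
  rintro ρ ⟨h, h0, h1, h2, h3⟩
  exact ⟨mem_reProdIm.2 ⟨⟨h0.le, h1.le⟩, h2.le, h3⟩, h⟩

lemma zerosUpTo_mono {T U : ℝ} (h : T ≤ U) : zerosUpTo T ⊆ zerosUpTo U :=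
  fun _ ⟨h0, h1, h2, h3, h4⟩ => ⟨h0, h1, h2, h3, h4.trans h⟩

lemma eventually_zerosUpTo_eq {x : ℝ} (hx : 0 ≤ x) : ∀ᶠ T in 𝓝[>] x,
    zerosUpTo T = zerosUpTo x ∧ ∀ u : ℝ, xi (u + T * I) ≠ 0 := by
  have h1 : ∀ᶠ T in 𝓝[>] x, ∀ ρ ∈ zerosUpTo (x + 1), x < ρ.im → T < ρ.im := by
    refine (eventually_all_finite (finite_zerosUpTo _)).2 fun ρ _ => ?_
    by_cases h : x < ρ.im
    · filter_upwards [nhdsWithin_le_nhds (Iio_mem_nhds h)] with T hT _ using hT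
    · exact Eventually.of_forall fun T h' => absurd h' h
  filter_upwards [h1, nhdsWithin_le_nhds (Iio_mem_nhds (lt_add_one x)), self_mem_nhdsWithin]
    with T hT hT1 hTx
  refine ⟨(zerosUpTo_mono (le_of_lt hTx)).antisymm' fun ρ hρ => ?_, fun u hu => ?_⟩
  · obtain ⟨h0, h1, h2, h3, h4⟩ := hρ
    refine ⟨h0, h1, h2, h3, le_of_not_gt fun h => ?_⟩
    exact (hT ρ ⟨h0, h1, h2, h3, h4.trans (le_of_lt hT1)⟩ h).not_ge h4
  · obtain ⟨h0, h1, h2⟩ := xi_eq_zero_iff.1 hu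
    have him : ((u : ℂ) + T * I).im = T := by simp
    have hTx' : x < T := hTx
    have := hT _ ⟨h0, h1, h2, by rw [him]; linarith, by rw [him]; exact le_of_lt hT1⟩
      (by rw [him]; exact hTx)
    rw [him] at this
    exact lt_irrefl _ this

lemma exists_factorization_xi {ρ : ℂ} {k : ℕ} (h0 : 0 < ρ.re) (h1 : ρ.re < 1)
    (h : ∃ g : ℂ → ℂ, AnalyticAt ℂ g ρ ∧ g ρ ≠ 0 ∧
      ∀ᶠ z in 𝓝 ρ, riemannZeta z = (z - ρ) ^ k * g z) :
    ∃ g : ℂ → ℂ, AnalyticAt ℂ g ρ ∧ g ρ ≠ 0 ∧ ∀ᶠ z in 𝓝 ρ, xi z = (z - ρ) ^ k * g z := by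
  obtain ⟨g, hg, hg0, hgz⟩ := h
  have hne1 : ∀ z : ℂ, z.re < 1 → z ≠ 1 := fun z hz h => by simp [h] at hz
  have hΓ : AnalyticAt ℂ Gammaℝ ρ := by
    refine DifferentiableOn.analyticAt (s := {z : ℂ | 0 < z.re}) (fun z hz => ?_)
      ((isOpen_lt continuous_const continuous_re).mem_nhds h0)
    have h2 : DifferentiableAt ℂ Gamma (z / 2) := differentiableAt_Gamma _ fun n hn => by
      have h3 := congrArg re hn
      have hz' : 0 < z.re := hz
      simp at h3
      have : (0 : ℝ) ≤ n := n.cast_nonneg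
      linarith
    have hπ : (π : ℂ) ≠ 0 := ofReal_ne_zero.2 Real.pi_ne_zero
    have h4 : DifferentiableAt ℂ (fun s : ℂ => Gamma (s / 2)) z :=
      DifferentiableAt.fun_comp' (g := Gamma) z h2 (by fun_prop)
    have h5 : DifferentiableAt ℂ (fun s : ℂ => (π : ℂ) ^ (-s / 2)) z :=
      DifferentiableAt.const_cpow (by fun_prop) (Or.inl hπ)
    exact (h5.mul h4).differentiableWithinAt
  refine ⟨fun z => z * (z - 1) * Gammaℝ z * g z, by fun_prop, ?_, ?_⟩
  · have hρ : ρ ≠ 0 := fun h => by simp [h] at h0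
    exact mul_ne_zero (mul_ne_zero (mul_ne_zero hρ (sub_ne_zero.2 (hne1 ρ h1)))
      (Gammaℝ_ne_zero_of_re_pos h0)) hg0
  · filter_upwards [hgz, (isOpen_lt continuous_const continuous_re).mem_nhds h0,
      (isOpen_lt continuous_re continuous_const).mem_nhds h1] with z hz hz0 hz1
    rw [xi_eq_mul_riemannZeta hz0 (hne1 z hz1), hz]
    ring

lemma rectIntegral_logDeriv_xi {m : ℂ → ℕ}
    (hm : ∀ ρ : ℂ, 0 < ρ.re → ρ.re < 1 → riemannZeta ρ = 0 →
      ∃ g : ℂ → ℂ, AnalyticAt ℂ g ρ ∧ g ρ ≠ 0 ∧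
        ∀ᶠ z in 𝓝 ρ, riemannZeta z = (z - ρ) ^ m ρ * g z)
    {T : ℝ} (hT0 : 0 ≤ T) (hT : ∀ u : ℝ, xi (u + T * I) ≠ 0) :
    rectIntegral (logDeriv xi) (1 - 23 / 20) (23 / 20) 0 T =
      2 * π * I * ((∑ ρ ∈ (finite_zerosUpTo T).toFinset, (m ρ : ℝ) : ℝ) : ℂ) := by
  have hne : ∀ s : ℂ, xi s = 0 → s.im ≠ T := fun s hs h => hT s.re <| by
    rw [← h, re_add_im]
    exact hs
  have hne0 : ∀ s : ℂ, xi s = 0 → s.im ≠ 0 := fun s hs h => xi_ofReal_ne_zero s.re <| by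
    rwa [← ((ext rfl (by simp [h]) : s = s.re))]
  rw [rectIntegral_logDeriv differentiable_xi (by norm_num) hT0 m (finite_zerosUpTo T).toFinset]
  · push_cast
    rfl
  · intro ρ hρ
    obtain ⟨h0, h1, h2, -, -⟩ := (finite_zerosUpTo T).mem_toFinset.1 hρ
    exact exists_factorization_xi h1 h2 (hm ρ h1 h2 h0)
  · intro ρ hρ
    obtain ⟨h0, h1, h2, h3, h4⟩ := (finite_zerosUpTo T).mem_toFinset.1 hρ
    exact ⟨⟨by linarith, by linarith⟩, h3, h4.lt_of_ne (hne ρ (xi_eq_zero_iff.2 ⟨h0, h1, h2⟩))⟩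
  · intro s _ hs hz
    obtain ⟨h0, h1, h2⟩ := xi_eq_zero_iff.1 hz
    exact (finite_zerosUpTo T).mem_toFinset.2
      ⟨h0, h1, h2, hs.1.lt_of_ne' (hne0 s hz), hs.2⟩

lemma tsum_zerosUpTo (m : ℂ → ℕ) (T : ℝ) :
    ∑' ρ : zerosUpTo T, (m ρ : ℝ) = ∑ ρ ∈ (finite_zerosUpTo T).toFinset, (m ρ : ℝ) := by
  have : ∀ {s : Set ℂ} (hs : s.Finite), ∑' ρ : s, (m ρ : ℝ) = ∑ ρ ∈ hs.toFinset, (m ρ : ℝ) := by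
    intro s hs
    lift s to Finset ℂ using hs
    simpa using Finset.tsum_subtype s fun ρ => (m ρ : ℝ)
  exact this _

lemma mul_log_sub_one_ge {t : ℝ} (ht : 0 < t) : -1 ≤ t * (Real.log t - 1) := by
  have h := Real.one_sub_inv_le_log_of_pos ht
  have : t * (1 - t⁻¹ - 1) = -1 := by field_simp; ring
  nlinarith

end ZetaZeroCount

open ZetaZeroCount

/-- The explicit zero-counting estimate |N(x) − (x/2π)log(x/2πe) − 7/8| ≤ 0.15 log x + 3,
where N(x) counts the zeros ρ = β + iγ of ζ with 0 < β < 1 and 0 < γ ≤ x, with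
multiplicity. -/
theorem zero_counting_estimate
    (m : ℂ → ℕ)
    (hm : ∀ ρ : ℂ, 0 < ρ.re → ρ.re < 1 → riemannZeta ρ = 0 →
      ∃ g : ℂ → ℂ, AnalyticAt ℂ g ρ ∧ g ρ ≠ 0 ∧
        ∀ᶠ z in nhds ρ, riemannZeta z = (z - ρ) ^ m ρ * g z)
    (N : ℝ → ℝ)
    (hN : ∀ x : ℝ, N x =
      ∑' ρ : {ρ : ℂ // riemannZeta ρ = 0 ∧ 0 < ρ.re ∧ ρ.re < 1 ∧ 0 < ρ.im ∧ ρ.im ≤ x},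
        (m ρ : ℝ)) :
    ∀ x : ℝ, Real.exp 1 ≤ x →
      |N x - x / (2 * π) * Real.log (x / (2 * π * Real.exp 1)) - 7 / 8|
        ≤ 0.15 * Real.log x + 3 := by
  have hNsum : ∀ x, N x = ∑ ρ ∈ (finite_zerosUpTo x).toFinset, (m ρ : ℝ) := fun x =>
    (hN x).trans (tsum_zerosUpTo m x)
  have hNcongr : ∀ x T, zerosUpTo T = zerosUpTo x → N T = N x := fun x T h => by
    rw [hNsum, hNsum]
    congr 1
    ext ρ
    simp [h]
  have hNmono : Monotone N := fun x y hxy => by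
    rw [hNsum, hNsum]
    exact Finset.sum_le_sum_of_subset_of_nonneg
      (Set.Finite.toFinset_subset_toFinset.2 (zerosUpTo_mono hxy)) fun _ _ _ => Nat.cast_nonneg _
  have hN0 : ∀ x, 0 ≤ N x := fun x => by
    rw [hNsum]
    positivity
  have hmain : ∀ x, 12 ≤ x →
      |N x - x / (2 * π) * (Real.log (x / (2 * π)) - 1) - 7 / 8| ≤ 0.15 * Real.log x + 2.8 := by
    intro x hx
    have hx0 : 0 < x := by linarith
    have hlim : ∀ᶠ T in nhdsWithin x (Set.Ioi x),
        |N x - T / (2 * π) * (Real.log (T / (2 * π)) - 1) - 7 / 8| ≤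
          0.15 * Real.log T + 2.8 := by
      filter_upwards [eventually_zerosUpTo_eq hx0.le, self_mem_nhdsWithin] with T hT hTx
      have hTx' : x < T := hTx
      rw [← hNcongr x T hT.1, hNsum T]
      exact abs_count_sub_le (by linarith) hT.2
        (rectIntegral_logDeriv_xi hm (by linarith) hT.2)
    have hc : ContinuousAt (fun T => |N x - T / (2 * π) * (Real.log (T / (2 * π)) - 1) - 7 / 8|)
        x := by
      have : x / (2 * π) ≠ 0 := by positivity
      fun_prop (disch := assumption)
    have hc' : ContinuousAt (fun T => 0.15 * Real.log T + 2.8) x := by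
      have := hx0.ne'
      fun_prop (disch := assumption)
    exact le_of_tendsto_of_tendsto (hc.tendsto.mono_left nhdsWithin_le_nhds)
      (hc'.tendsto.mono_left nhdsWithin_le_nhds) hlim
  intro x hx
  have hexp := Real.add_one_le_exp 1
  have hx0 : 0 < x := by linarith
  have hlog : Real.log (x / (2 * π * Real.exp 1)) = Real.log (x / (2 * π)) - 1 := by
    rw [← div_div, Real.log_div (by positivity) (by positivity), Real.log_exp]
  have hlogx : 1 ≤ Real.log x := (Real.le_log_iff_exp_le hx0).2 hx
  rw [hlog]
  rcases le_total 12 x with h12 | h12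
  · exact (hmain x h12).trans (by linarith)
  have hlow := mul_log_sub_one_ge (show 0 < x / (2 * π) by positivity)
  have hle : ∀ y, 0 < y → y ≤ 12 → Real.log (y / (2 * π)) ≤ Real.log 2 := fun y h0 h =>
    Real.log_le_log (by positivity) (by
      rw [div_le_iff₀ (by positivity)]
      linarith [Real.pi_gt_three])
  have hlog2 := Real.log_two_lt_d9
  have hN12 : N 12 ≤ 3 := by
    have h1 := (abs_le.1 (hmain 12 le_rfl)).2
    have h2 : Real.log 12 ≤ 4 * Real.log 2 := by
      rw [← Real.log_rpow two_pos]
      exact Real.log_le_log (by norm_num) (by norm_num)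
    have h3 : 12 / (2 * π) * (Real.log (12 / (2 * π)) - 1) ≤ -0.5 := by
      have h4 := hle 12 (by norm_num) le_rfl
      have h5 : (1.9 : ℝ) ≤ 12 / (2 * π) := by
        rw [le_div_iff₀ (by positivity)]
        linarith [Real.pi_lt_d2]
      nlinarith
    have h4 : N 12 < (4 : ℕ) := by
      push_cast
      linarith
    have h5 : N 12 = ((∑ ρ ∈ (finite_zerosUpTo 12).toFinset, m ρ : ℕ) : ℝ) := by
      rw [hNsum]
      push_cast
      rfl
    rw [h5] at h4 ⊢
    exact_mod_cast Nat.le_of_lt_succ (Nat.cast_lt.1 h4)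
  have hneg : x / (2 * π) * (Real.log (x / (2 * π)) - 1) ≤ 0 :=
    mul_nonpos_of_nonneg_of_nonpos (by positivity) (by linarith [hle x hx0 h12])
  have := hNmono h12
  have := hN0 x
  rw [abs_le]
  constructor <;> linarith
end

section
/- Let H : ℝ → ℝ be the continuous function H(x) = cos(2πx)/(1 − 16x²) (extended continuously to x = ±1/4), and let F(x) = H(x/0.9). Then (F(0) − 4·∫_{|t|≥1} |F̂(t)| dt)/‖F‖₁ > 25/22. -/
open MeasureTheory Filter
open scoped FourierTransform Real

/-- A function vanishing at `0` with nonnegative derivative on `[0, ∞)` is nonnegative there. -/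
lemma nonneg_of_hasDerivAt_nonneg {f f' : ℝ → ℝ} (hf : ∀ x, HasDerivAt f (f' x) x)
    (h0 : f 0 = 0) (hf' : ∀ x, 0 ≤ x → 0 ≤ f' x) (x : ℝ) (hx : 0 ≤ x) : 0 ≤ f x := by
  have hmono : MonotoneOn f (Set.Ici 0) :=
    monotoneOn_of_deriv_nonneg (convex_Ici 0) (fun y _ => (hf y).continuousAt.continuousWithinAt)
      (fun y _ => (hf y).differentiableAt.differentiableWithinAt) fun y hy => by
        rw [interior_Ici] at hy
        rw [(hf y).deriv]
        exact hf' y (le_of_lt hy)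
  exact h0 ▸ hmono Set.self_mem_Ici hx hx

/-- The degree nine Taylor polynomial of `sin` at `0` is an upper bound on `[0, ∞)`. -/
lemma sin_le_taylor_nine (x : ℝ) (hx : 0 ≤ x) :
    Real.sin x ≤ x - x ^ 3 / 6 + x ^ 5 / 120 - x ^ 7 / 5040 + x ^ 9 / 362880 := by
  have hc2 (y : ℝ) (_ : 0 ≤ y) : 0 ≤ Real.cos y - (1 - y ^ 2 / 2) := by
    linarith [Real.one_sub_sq_div_two_le_cos (x := y)]
  have hs3 := nonneg_of_hasDerivAt_nonneg (f := fun y => Real.sin y - (y - y ^ 3 / 6))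
    (fun y => by
      refine ((Real.hasDerivAt_sin y).sub ((hasDerivAt_id y).sub
        ((hasDerivAt_pow 3 y).div_const 6))).congr_deriv ?_
      push_cast; ring) (by simp) hc2
  have hc4 := nonneg_of_hasDerivAt_nonneg
    (f := fun y => (1 - y ^ 2 / 2 + y ^ 4 / 24) - Real.cos y)
    (fun y => by
      refine ((((hasDerivAt_const y (1 : ℝ)).sub ((hasDerivAt_pow 2 y).div_const 2)).add
        ((hasDerivAt_pow 4 y).div_const 24)).sub (Real.hasDerivAt_cos y)).congr_deriv ?_
      push_cast; ring) (by simp) hs3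
  have hs5 := nonneg_of_hasDerivAt_nonneg
    (f := fun y => (y - y ^ 3 / 6 + y ^ 5 / 120) - Real.sin y)
    (fun y => by
      refine ((((hasDerivAt_id y).sub ((hasDerivAt_pow 3 y).div_const 6)).add
        ((hasDerivAt_pow 5 y).div_const 120)).sub (Real.hasDerivAt_sin y)).congr_deriv ?_
      push_cast; ring) (by simp) hc4
  have hc6 := nonneg_of_hasDerivAt_nonneg
    (f := fun y => Real.cos y - (1 - y ^ 2 / 2 + y ^ 4 / 24 - y ^ 6 / 720))
    (fun y => by
      refine ((Real.hasDerivAt_cos y).sub ((((hasDerivAt_const y (1 : ℝ)).sub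
        ((hasDerivAt_pow 2 y).div_const 2)).add ((hasDerivAt_pow 4 y).div_const 24)).sub
        ((hasDerivAt_pow 6 y).div_const 720))).congr_deriv ?_
      push_cast; ring) (by simp) hs5
  have hs7 := nonneg_of_hasDerivAt_nonneg
    (f := fun y => Real.sin y - (y - y ^ 3 / 6 + y ^ 5 / 120 - y ^ 7 / 5040))
    (fun y => by
      refine ((Real.hasDerivAt_sin y).sub ((((hasDerivAt_id y).sub
        ((hasDerivAt_pow 3 y).div_const 6)).add ((hasDerivAt_pow 5 y).div_const 120)).sub
        ((hasDerivAt_pow 7 y).div_const 5040))).congr_deriv ?_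
      push_cast; ring) (by simp) hc6
  have hc8 := nonneg_of_hasDerivAt_nonneg
    (f := fun y => (1 - y ^ 2 / 2 + y ^ 4 / 24 - y ^ 6 / 720 + y ^ 8 / 40320) - Real.cos y)
    (fun y => by
      refine ((((((hasDerivAt_const y (1 : ℝ)).sub ((hasDerivAt_pow 2 y).div_const 2)).add
        ((hasDerivAt_pow 4 y).div_const 24)).sub ((hasDerivAt_pow 6 y).div_const 720)).add
        ((hasDerivAt_pow 8 y).div_const 40320)).sub (Real.hasDerivAt_cos y)).congr_deriv ?_
      push_cast; ring) (by simp) hs7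
  have hs9 := nonneg_of_hasDerivAt_nonneg
    (f := fun y => (y - y ^ 3 / 6 + y ^ 5 / 120 - y ^ 7 / 5040 + y ^ 9 / 362880) - Real.sin y)
    (fun y => by
      refine ((((((hasDerivAt_id y).sub ((hasDerivAt_pow 3 y).div_const 6)).add
        ((hasDerivAt_pow 5 y).div_const 120)).sub ((hasDerivAt_pow 7 y).div_const 5040)).add
        ((hasDerivAt_pow 9 y).div_const 362880)).sub (Real.hasDerivAt_sin y)).congr_deriv ?_
      push_cast; ring) (by simp) hc8
  exact sub_nonneg.1 (hs9 x hx)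

lemma sinc_le_taylor_eight (x : ℝ) (hx : 0 ≤ x) :
    Real.sinc x ≤ 1 - x ^ 2 / 6 + x ^ 4 / 120 - x ^ 6 / 5040 + x ^ 8 / 362880 := by
  rcases hx.eq_or_lt with rfl | hpos
  · simp
  · rw [Real.sinc_of_ne_zero hpos.ne', div_le_iff₀ hpos]
    linarith [sin_le_taylor_nine x hx]

lemma integral_sinc_zero_pi_le : ∫ y in (0 : ℝ)..π, Real.sinc y ≤ 1.8535 := by
  have hle : ∫ y in (0 : ℝ)..π, Real.sinc y ≤
      ∫ y in (0 : ℝ)..π, (1 - y ^ 2 / 6 + y ^ 4 / 120 - y ^ 6 / 5040 + y ^ 8 / 362880) :=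
    intervalIntegral.integral_mono_on Real.pi_pos.le (Real.continuous_sinc.intervalIntegrable _ _)
      (Continuous.intervalIntegrable (by fun_prop) _ _)
      fun y hy => sinc_le_taylor_eight y hy.1
  have heq : ∫ y in (0 : ℝ)..π,
      (1 - y ^ 2 / 6 + y ^ 4 / 120 - y ^ 6 / 5040 + y ^ 8 / 362880) =
      π - π ^ 3 / 18 + π ^ 5 / 600 - π ^ 7 / 35280 + π ^ 9 / 3265920 := by
    rw [intervalIntegral.integral_eq_sub_of_hasDerivAt
      (f := fun y => y - y ^ 3 / 18 + y ^ 5 / 600 - y ^ 7 / 35280 + y ^ 9 / 3265920)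
      (fun y _ => ?_) (Continuous.intervalIntegrable (by fun_prop) _ _)]
    · simp
    · refine (((((hasDerivAt_id y).sub ((hasDerivAt_pow 3 y).div_const 18)).add
        ((hasDerivAt_pow 5 y).div_const 600)).sub ((hasDerivAt_pow 7 y).div_const 35280)).add
        ((hasDerivAt_pow 9 y).div_const 3265920)).congr_deriv ?_
      push_cast; ring
  have hlo := Real.pi_gt_d6.le
  have hhi := Real.pi_lt_d6.le
  have h3 : (3.141592 : ℝ) ^ 3 ≤ π ^ 3 := by gcongr
  have h5 : π ^ 5 ≤ (3.141593 : ℝ) ^ 5 := by gcongr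
  have h7 : (3.141592 : ℝ) ^ 7 ≤ π ^ 7 := by gcongr
  have h9 : π ^ 9 ≤ (3.141593 : ℝ) ^ 9 := by gcongr
  norm_num at h3 h5 h7 h9 hlo hhi ⊢
  linarith

/-- The profile `y ↦ sinc (y + π/2) + sinc (y - π/2)`; it equals `π cos y / (π²/4 - y²)` away from
its removable singularities. -/
noncomputable def sincPair (y : ℝ) : ℝ := Real.sinc (y + π / 2) + Real.sinc (y - π / 2)

@[fun_prop]
lemma continuous_sincPair : Continuous sincPair := by
  unfold sincPair
  fun_prop

lemma sincPair_neg (y : ℝ) : sincPair (-y) = sincPair y := by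
  unfold sincPair
  rw [← Real.sinc_neg (-y + π / 2), ← Real.sinc_neg (-y - π / 2), add_comm]
  ring_nf

lemma sinc_nonneg_of_mem_Icc {y : ℝ} (hy : y ∈ Set.Icc 0 π) : 0 ≤ Real.sinc y := by
  rcases hy.1.eq_or_lt with rfl | hpos
  · simp
  · rw [Real.sinc_of_ne_zero hpos.ne']
    exact div_nonneg (Real.sin_nonneg_of_mem_Icc hy) hpos.le

lemma abs_sincPair_of_le {y : ℝ} (h0 : 0 ≤ y) (h1 : y ≤ π / 2) : |sincPair y| = sincPair y := by
  refine abs_of_nonneg (add_nonneg (sinc_nonneg_of_mem_Icc ⟨by positivity, by linarith⟩) ?_)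
  rw [← Real.sinc_neg]
  exact sinc_nonneg_of_mem_Icc ⟨by linarith, by linarith⟩

lemma abs_sincPair_of_ge {y : ℝ} (hy : π / 2 ≤ y) :
    |sincPair y| = |Real.sinc (y - π / 2)| - |Real.sinc (y + π / 2)| := by
  have hpi := Real.pi_pos
  rcases hy.eq_or_lt with rfl | hlt
  · simp [sincPair, Real.sinc_of_ne_zero hpi.ne']
  · have hm : 0 < y - π / 2 := by linarith
    have hp : 0 < y + π / 2 := by linarith
    have hinv : 0 ≤ 1 / (y - π / 2) - 1 / (y + π / 2) :=
      sub_nonneg.2 (one_div_le_one_div_of_le hm (by linarith))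
    rw [sincPair, Real.sinc_of_ne_zero hm.ne', Real.sinc_of_ne_zero hp.ne', Real.sin_sub_pi_div_two,
      Real.sin_add_pi_div_two, abs_div, abs_div, abs_neg, abs_of_pos hm, abs_of_pos hp]
    calc |Real.cos y / (y + π / 2) + -Real.cos y / (y - π / 2)|
        = |Real.cos y * -(1 / (y - π / 2) - 1 / (y + π / 2))| := by congr 1; ring
      _ = |Real.cos y| * (1 / (y - π / 2) - 1 / (y + π / 2)) := by
        rw [abs_mul, abs_neg, abs_of_nonneg hinv]
      _ = _ := by ring

lemma integral_sincPair_zero_pi_div_two :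
    ∫ y in (0 : ℝ)..(π / 2), |sincPair y| = ∫ y in (0 : ℝ)..π, Real.sinc y := by
  have hint (a b : ℝ) : IntervalIntegrable Real.sinc volume a b :=
    Real.continuous_sinc.intervalIntegrable _ _
  have hleft : ∫ y in (-(π / 2))..0, Real.sinc y = ∫ y in (0 : ℝ)..(π / 2), Real.sinc y := by
    simpa using (intervalIntegral.integral_comp_neg (a := 0) (b := π / 2) Real.sinc).symm
  calc ∫ y in (0 : ℝ)..(π / 2), |sincPair y|
      = ∫ y in (0 : ℝ)..(π / 2), (Real.sinc (y + π / 2) + Real.sinc (y - π / 2)) := by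
        refine intervalIntegral.integral_congr fun y hy => ?_
        rw [Set.uIcc_of_le (by positivity)] at hy
        exact abs_sincPair_of_le hy.1 hy.2
    _ = (∫ y in (π / 2)..π, Real.sinc y) + ∫ y in (-(π / 2))..0, Real.sinc y := by
        rw [intervalIntegral.integral_add (Continuous.intervalIntegrable (by fun_prop) _ _)
          (Continuous.intervalIntegrable (by fun_prop) _ _),
          intervalIntegral.integral_comp_add_right, intervalIntegral.integral_comp_sub_right]
        simp
    _ = ∫ y in (0 : ℝ)..π, Real.sinc y := by
        rw [hleft, add_comm, intervalIntegral.integral_add_adjacent_intervals (hint _ _) (hint _ _)]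

/-- The tail integral telescopes. -/
lemma integral_sincPair_pi_div_two_le (R : ℝ) (hR : π / 2 ≤ R) :
    ∫ y in (π / 2)..R, |sincPair y| ≤ ∫ y in (0 : ℝ)..π, Real.sinc y := by
  have hint (a b : ℝ) : IntervalIntegrable (fun y => |Real.sinc y|) volume a b :=
    Real.continuous_sinc.abs.intervalIntegrable _ _
  have habs : ∫ y in (0 : ℝ)..π, |Real.sinc y| = ∫ y in (0 : ℝ)..π, Real.sinc y := by
    refine intervalIntegral.integral_congr fun y hy => ?_
    rw [Set.uIcc_of_le Real.pi_pos.le] at hy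
    exact abs_of_nonneg (sinc_nonneg_of_mem_Icc hy)
  have hnonneg : 0 ≤ ∫ y in (R - π / 2)..(R + π / 2), |Real.sinc y| :=
    intervalIntegral.integral_nonneg (by linarith [Real.pi_pos]) fun _ _ => abs_nonneg _
  have heq : ∫ y in (π / 2)..R, |sincPair y| =
      (∫ y in (0 : ℝ)..(R - π / 2), |Real.sinc y|) - ∫ y in π..(R + π / 2), |Real.sinc y| := by
    calc ∫ y in (π / 2)..R, |sincPair y|
        = ∫ y in (π / 2)..R, (|Real.sinc (y - π / 2)| - |Real.sinc (y + π / 2)|) := by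
          refine intervalIntegral.integral_congr fun y hy => ?_
          rw [Set.uIcc_of_le hR] at hy
          exact abs_sincPair_of_ge hy.1
      _ = _ := by
          rw [intervalIntegral.integral_sub (Continuous.intervalIntegrable (by fun_prop) _ _)
            (Continuous.intervalIntegrable (by fun_prop) _ _),
            intervalIntegral.integral_comp_sub_right (fun y => |Real.sinc y|),
            intervalIntegral.integral_comp_add_right (fun y => |Real.sinc y|)]
          simp
  have h1 := intervalIntegral.integral_add_adjacent_intervals (hint 0 π) (hint π (R + π / 2))
  have h2 := intervalIntegral.integral_add_adjacent_intervals (hint 0 (R - π / 2))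
    (hint (R - π / 2) (R + π / 2))
  linarith

lemma integral_abs_sincPair_symm_le (R : ℝ) (hR : π / 2 ≤ R) :
    ∫ y in (-R)..R, ‖sincPair y‖ ≤ 4 * ∫ y in (0 : ℝ)..π, Real.sinc y := by
  simp only [Real.norm_eq_abs]
  have hint (a b : ℝ) : IntervalIntegrable (fun y => |sincPair y|) volume a b :=
    continuous_sincPair.abs.intervalIntegrable _ _
  have hleft : ∫ y in (-R)..0, |sincPair y| = ∫ y in (0 : ℝ)..R, |sincPair y| := by
    simpa [sincPair_neg] using
      (intervalIntegral.integral_comp_neg (a := 0) (b := R) (fun y => |sincPair y|)).symm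
  have h1 := intervalIntegral.integral_add_adjacent_intervals (hint (-R) 0) (hint 0 R)
  have h2 := intervalIntegral.integral_add_adjacent_intervals (hint 0 (π / 2)) (hint (π / 2) R)
  linarith [integral_sincPair_zero_pi_div_two, integral_sincPair_pi_div_two_le R hR]

lemma integrable_sincPair : Integrable sincPair := by
  refine integrable_of_intervalIntegral_norm_bounded (l := atTop) (a := fun R : ℝ => -R)
    (b := fun R : ℝ => R) (4 * ∫ y in (0 : ℝ)..π, Real.sinc y)
    (fun R => (continuous_sincPair.integrableOn_Icc).mono_set Set.Ioc_subset_Icc_self)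
    tendsto_neg_atTop_atBot tendsto_id ?_
  filter_upwards [eventually_ge_atTop (π / 2)] with R hR
  exact integral_abs_sincPair_symm_le R hR

lemma integral_abs_sincPair_le : ∫ y, |sincPair y| ≤ 7.414 := by
  have hlim := intervalIntegral_tendsto_integral (l := atTop) (a := fun R : ℝ => -R)
    (b := fun R : ℝ => R) integrable_sincPair.norm tendsto_neg_atTop_atBot tendsto_id
  have hle : ∫ y, ‖sincPair y‖ ≤ 4 * ∫ y in (0 : ℝ)..π, Real.sinc y := by
    refine le_of_tendsto hlim ?_
    filter_upwards [eventually_ge_atTop (π / 2)] with R hR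
    exact integral_abs_sincPair_symm_le R hR
  simp only [Real.norm_eq_abs] at hle
  linarith [integral_sinc_zero_pi_le]

/-- The Fourier transform of `cos (2πx) / (1 - 16x²)`: the function `(π/4) cos (πt/2)` on `[-1, 1]`,
extended by zero. -/
noncomputable def cosArch (t : ℝ) : ℝ := π / 4 * Real.cos (π / 2 * min |t| 1)

@[fun_prop]
lemma continuous_cosArch : Continuous cosArch := by
  unfold cosArch
  fun_prop

lemma cosArch_of_abs_le {t : ℝ} (ht : |t| ≤ 1) : cosArch t = π / 4 * Real.cos (π / 2 * t) := by
  rw [cosArch, min_eq_left ht, ← Real.cos_abs (π / 2 * t), abs_mul,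
    abs_of_pos (by positivity : 0 < π / 2)]

lemma cosArch_of_one_le_abs {t : ℝ} (ht : 1 ≤ |t|) : cosArch t = 0 := by
  simp [cosArch, min_eq_right ht]

lemma cosArch_abs (t : ℝ) : cosArch |t| = cosArch t := by simp [cosArch]

lemma cosArch_nonneg (t : ℝ) : 0 ≤ cosArch t := by
  have hmin : 0 ≤ min |t| 1 := by positivity
  have hpi := Real.pi_pos
  refine mul_nonneg (by positivity) (Real.cos_nonneg_of_mem_Icc ⟨?_, ?_⟩)
  · nlinarith
  · nlinarith [min_le_right |t| 1]

lemma integrable_cosArch : Integrable fun t => (cosArch t : ℂ) := by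
  refine Continuous.integrable_of_hasCompactSupport (by fun_prop) ?_
  refine HasCompactSupport.intro (isCompact_Icc (a := (-1 : ℝ)) (b := 1)) fun t ht => ?_
  rw [cosArch_of_one_le_abs, Complex.ofReal_zero]
  rw [Set.mem_Icc, ← abs_le] at ht
  exact (not_le.1 ht).le

lemma integral_exp_mul_I_neg_one_one (c : ℝ) :
    ∫ t in (-1 : ℝ)..1, Complex.exp (((c * t : ℝ) : ℂ) * Complex.I) = 2 * Real.sinc c := by
  rcases eq_or_ne c 0 with rfl | hc
  · norm_num
  · have hc' : (c : ℂ) ≠ 0 := Complex.ofReal_ne_zero.2 hc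
    rw [intervalIntegral.integral_comp_mul_left
      (fun s : ℝ => Complex.exp ((s : ℂ) * Complex.I)) hc, mul_neg, mul_one,
      integral_exp_mul_I_eq_sinc, Complex.real_smul, Complex.ofReal_inv]
    field_simp

lemma fourierInv_cosArch (x : ℝ) :
    𝓕⁻ (fun t => (cosArch t : ℂ)) x = ((π / 4 * sincPair (2 * π * x) : ℝ) : ℂ) := by
  have hexp (c : ℝ) : IntervalIntegrable
      (fun t : ℝ => Complex.exp (((c * t : ℝ) : ℂ) * Complex.I)) volume (-1) 1 :=
    Continuous.intervalIntegrable (by fun_prop) _ _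
  rw [Real.fourierInv_eq', ← setIntegral_eq_integral_of_forall_compl_eq_zero (s := Set.Ioc (-1) 1),
    ← intervalIntegral.integral_of_le (by norm_num)]
  · calc _ = ∫ t in (-1 : ℝ)..1, (π / 8 : ℂ) *
            (Complex.exp (((2 * π * x + π / 2) * t : ℝ) * Complex.I) +
              Complex.exp (((2 * π * x - π / 2) * t : ℝ) * Complex.I)) := by
          refine intervalIntegral.integral_congr fun t ht => ?_
          rw [Set.uIcc_of_le (by norm_num), Set.mem_Icc, ← abs_le] at ht
          simp only [cosArch_of_abs_le ht, smul_eq_mul, RCLike.inner_apply, conj_trivial]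
          push_cast
          rw [Complex.cos, add_mul, sub_mul, add_mul, sub_mul, Complex.exp_add, Complex.exp_sub,
            neg_mul, Complex.exp_neg]
          ring_nf
      _ = _ := by
          rw [intervalIntegral.integral_const_mul, intervalIntegral.integral_add (hexp _) (hexp _),
            integral_exp_mul_I_neg_one_one, integral_exp_mul_I_neg_one_one, sincPair]
          push_cast
          ring
  · intro t ht
    rw [cosArch_of_one_le_abs, Complex.ofReal_zero, smul_zero]
    by_contra! hlt
    exact ht ⟨(abs_lt.1 hlt).1, (abs_lt.1 hlt).2.le⟩

lemma fourier_sincPair (t : ℝ) :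
    𝓕 (fun x => ((π / 4 * sincPair (2 * π * x) : ℝ) : ℂ)) t = cosArch t := by
  have hinv : 𝓕⁻ (fun t => (cosArch t : ℂ)) =
      fun x => ((π / 4 * sincPair (2 * π * x) : ℝ) : ℂ) := funext fourierInv_cosArch
  have hint : Integrable (fun x => ((π / 4 * sincPair (2 * π * x) : ℝ) : ℂ)) :=
    ((integrable_sincPair.comp_mul_left' (by positivity)).const_mul _).ofReal
  have hfour : 𝓕 (fun t => (cosArch t : ℂ)) =
      fun x => ((π / 4 * sincPair (2 * π * x) : ℝ) : ℂ) := by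
    funext x
    rw [← neg_neg x, ← Real.fourierInv_eq_fourier_neg, fourierInv_cosArch, mul_neg, sincPair_neg,
      neg_neg]
  rw [← hinv, Continuous.fourier_fourierInv_eq (by fun_prop) integrable_cosArch (hfour ▸ hint)]

/-- Dilation rule for the Fourier transform on the line. -/
lemma fourier_comp_div (f : ℝ → ℂ) {a : ℝ} (ha : 0 < a) (t : ℝ) :
    𝓕 (fun x => f (x / a)) t = a * 𝓕 f (a * t) := by
  rw [Real.fourier_real_eq, Real.fourier_real_eq]
  have h := Measure.integral_comp_div (fun y => Real.fourierChar (-(y * (a * t))) • f y) a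
  rw [abs_of_pos ha, Complex.real_smul] at h
  rw [← h]
  congr 1
  funext x
  congr 3
  field_simp

lemma integral_cosArch_tail :
    ∫ t in {t : ℝ | 1 ≤ |t|}, 0.9 * cosArch (0.9 * t) = 1 - Real.cos (π / 20) := by
  have hmeas : MeasurableSet {t : ℝ | 1 ≤ |t|} := measurableSet_le (by fun_prop) (by fun_prop)
  have hanti : ∫ t in (1 : ℝ)..(10 / 9), 0.9 * cosArch (0.9 * t) =
      (1 - Real.cos (π / 20)) / 2 := by
    rw [intervalIntegral.integral_const_mul,
      intervalIntegral.integral_comp_mul_left cosArch (by norm_num : (0.9 : ℝ) ≠ 0)]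
    have hcongr : ∫ t in (0.9 * 1 : ℝ)..(0.9 * (10 / 9)), cosArch t =
        ∫ t in (0.9 * 1 : ℝ)..(0.9 * (10 / 9)), π / 4 * Real.cos (π / 2 * t) := by
      refine intervalIntegral.integral_congr fun t ht => cosArch_of_abs_le ?_
      rw [Set.uIcc_of_le (by norm_num)] at ht
      exact abs_le.2 ⟨by linarith [ht.1], by linarith [ht.2]⟩
    rw [hcongr, intervalIntegral.integral_const_mul,
      intervalIntegral.integral_comp_mul_left Real.cos (by positivity : π / 2 ≠ 0),
      integral_cos, show π / 2 * (0.9 * (10 / 9)) = π / 2 by ring,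
      show π / 2 * (0.9 * 1) = π / 2 - π / 20 by ring, Real.sin_pi_div_two,
      Real.sin_pi_div_two_sub]
    simp only [smul_eq_mul]
    field_simp
    norm_num
  calc ∫ t in {t : ℝ | 1 ≤ |t|}, 0.9 * cosArch (0.9 * t)
      = ∫ t, (Set.Ici (1 : ℝ)).indicator (fun s => 0.9 * cosArch (0.9 * s)) |t| := by
        rw [← integral_indicator hmeas]
        congr 1
        funext t
        simp only [Set.indicator, Set.mem_ofPred_eq, Set.mem_Ici]
        rw [← cosArch_abs (0.9 * t), abs_mul, abs_of_pos (by norm_num : (0 : ℝ) < 0.9)]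
    _ = 2 * ∫ t in Set.Ioc (1 : ℝ) (10 / 9), 0.9 * cosArch (0.9 * t) := by
        rw [integral_comp_abs, setIntegral_indicator measurableSet_Ici,
          Set.inter_eq_right.2 (Set.Ici_subset_Ioi.2 one_pos), integral_Ici_eq_integral_Ioi,
          setIntegral_eq_of_subset_of_forall_sdiff_eq_zero measurableSet_Ioi
            Set.Ioc_subset_Ioi_self]
        rintro t ⟨ht, hn⟩
        have hgt : 10 / 9 < t := by
          by_contra! hle
          exact hn ⟨ht, hle⟩
        rw [cosArch_of_one_le_abs, mul_zero]
        exact le_trans (by linarith) (le_abs_self _)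
    _ = 1 - Real.cos (π / 20) := by
        rw [← intervalIntegral.integral_of_le (by norm_num), hanti]
        ring

/-- The continuous extension of `cos (2πx) / (1 - 16x²)` is `(π/4) sincPair (2πx)`. -/
lemma eq_sincPair_of_continuous {H : ℝ → ℝ} (hHc : Continuous H)
    (hHval : ∀ x : ℝ, 1 - 16 * x ^ 2 ≠ 0 → H x = Real.cos (2 * π * x) / (1 - 16 * x ^ 2)) :
    H = fun x => π / 4 * sincPair (2 * π * x) := by
  have hdense : Dense ({1 / 4, -1 / 4}ᶜ : Set ℝ) := (Set.toFinite _).countable.dense_compl ℝ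
  refine Continuous.ext_on hdense hHc (by fun_prop) fun x hx => ?_
  simp only [Set.mem_compl_iff, Set.mem_insert_iff, Set.mem_singleton_iff, not_or] at hx
  have hp : 4 * x + 1 ≠ 0 := fun h => hx.2 (by linarith)
  have hm : 4 * x - 1 ≠ 0 := fun h => hx.1 (by linarith)
  have hne : 1 - 16 * x ^ 2 ≠ 0 := by
    rw [show 1 - 16 * x ^ 2 = -((4 * x + 1) * (4 * x - 1)) by ring]
    exact neg_ne_zero.2 (mul_ne_zero hp hm)
  have hp' : 2 * π * x + π / 2 = π / 2 * (4 * x + 1) := by ring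
  have hm' : 2 * π * x - π / 2 = π / 2 * (4 * x - 1) := by ring
  have hpi : π / 2 ≠ 0 := by positivity
  have hpi' := Real.pi_ne_zero
  rw [hHval x hne, show 1 - 16 * x ^ 2 = -((4 * x + 1) * (4 * x - 1)) by ring, sincPair,
    Real.sinc_of_ne_zero (hp' ▸ mul_ne_zero hpi hp),
    Real.sinc_of_ne_zero (hm' ▸ mul_ne_zero hpi hm), Real.sin_add_pi_div_two,
    Real.sin_sub_pi_div_two, hp', hm']
  obtain ⟨p, hpx⟩ : ∃ p, p = 4 * x + 1 := ⟨_, rfl⟩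
  rw [show 4 * x - 1 = p - 2 by linarith, ← hpx]
  rw [show 4 * x - 1 = p - 2 by linarith] at hm
  rw [← hpx] at hp
  field_simp
  ring

/-- The dilation F(x) = H(x/0.9) of H(x) = cos(2πx)/(1 − 16x²) satisfies
(F(0) − 4∫_{|t|≥1}|F̂|)/‖F‖₁ > 25/22. -/
theorem dilated_H_bound
    (H : ℝ → ℝ) (hHc : Continuous H)
    (hHval : ∀ x : ℝ, 1 - 16 * x ^ 2 ≠ 0 → H x = Real.cos (2 * π * x) / (1 - 16 * x ^ 2))
    (F : ℝ → ℝ) (hF : F = fun x => H (x / 0.9)) :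
    25 / 22 <
      (F 0 - 4 * ∫ t in {t : ℝ | 1 ≤ |t|}, ‖𝓕 (fun x => (F x : ℂ)) t‖) /
        (∫ x : ℝ, |F x|) := by
  have hH := eq_sincPair_of_continuous hHc hHval
  have hH0 : H 0 = 1 := by simpa using hHval 0 (by norm_num)
  have hF0 : F 0 = 1 := by simp [hF, hH0]
  have hHint : Integrable H := by
    rw [hH]
    exact (integrable_sincPair.comp_mul_left' (by positivity)).const_mul _
  have hFint : Integrable F := by
    rw [hF]
    exact hHint.comp_div (by norm_num)
  have hFc : Continuous F := by
    rw [hF]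
    fun_prop
  have hpos : 0 < ∫ x, |F x| :=
    integral_pos_of_integrable_nonneg_nonzero (x := 0) hFc.abs hFint.abs (fun _ => abs_nonneg _)
      (by simp [hF0])
  have hHnorm : ∫ x, |H x| = (∫ y, |sincPair y|) / 8 := by
    simp only [hH, abs_mul]
    rw [integral_const_mul, Measure.integral_comp_mul_left (fun y => |sincPair y|),
      abs_of_pos (by positivity : 0 < π / 4), abs_of_pos (by positivity : 0 < (2 * π)⁻¹),
      smul_eq_mul]
    field_simp
    ring
  have hFnorm : ∫ x, |F x| = 0.9 * ∫ x, |H x| := by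
    rw [hF, Measure.integral_comp_div (fun x => |H x|), smul_eq_mul, abs_of_pos (by norm_num)]
  have hfour (t : ℝ) : ‖𝓕 (fun x => (F x : ℂ)) t‖ = 0.9 * cosArch (0.9 * t) := by
    rw [hF, fourier_comp_div (fun x => (H x : ℂ)) (by norm_num), hH, fourier_sincPair, norm_mul,
      Complex.norm_of_nonneg (by norm_num), Complex.norm_of_nonneg (cosArch_nonneg _)]
  simp only [hfour]
  rw [integral_cosArch_tail, hF0, lt_div_iff₀ hpos, hFnorm, hHnorm]
  have hcos := Real.one_sub_sq_div_two_le_cos (x := π / 20)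
  have hpi : π ^ 2 ≤ 3.15 ^ 2 := by
    have := Real.pi_lt_d2.le
    gcongr
  norm_num at hpi ⊢
  linarith [integral_abs_sincPair_le]
end
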